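/- Let R be a countable unital subring of ℝ. Then there exists a separable unital simple C*-algebra A with a unique tracial state τ such that the fundamental group F(A) equals the group of positive invertible elements of R, i.e. F(A) = {t ∈ ℝ : t > 0, t ∈ R, t⁻¹ ∈ R}. -/

import Mathlib

open scoped Matrix ComplexOrder

section CommonDefs

variable (A : Type*) [CStarAlgebra A]

/-- `τ` is a tracial state on the unital C*-algebra `A`. -/
structure IsTracialState (τ : A →ₗ[ℂ] ℂ) : Prop where
  map_one : τ 1 = 1
  nonneg : ∀ a : A, 0 ≤ τ (star a * a)
  tracial : ∀ a b : A, τ (a * b) = τ (b * a)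

/-- `A` is simple: every closed two-sided ideal is trivial. -/
def IsSimpleCStarAlgebra : Prop :=
  ∀ I : TwoSidedIdeal A, IsClosed (I : Set A) → I = ⊥ ∨ I = ⊤

/-- `φ` is a *-isomorphism from `A` onto the corner `p Mₙ(A) p`. -/
def IsCornerIso {n : ℕ} (p : Matrix (Fin n) (Fin n) A)
    (φ : A → Matrix (Fin n) (Fin n) A) : Prop :=
  Function.Injective φ ∧
  (∀ a b : A, φ (a + b) = φ a + φ b) ∧
  (∀ a b : A, φ (a * b) = φ a * φ b) ∧
  (∀ (c : ℂ) (a : A), φ (c • a) = c • φ a) ∧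
  (∀ a : A, φ (star a) = star (φ a)) ∧
  Set.range φ = {x : Matrix (Fin n) (Fin n) A | p * x * p = x}

/-- The fundamental group of a unital simple C*-algebra with unique tracial state `τ`:
the set of values `(τ ⊗ Tr)(p)` over projections `p ∈ Mₙ(A)` whose corner `p Mₙ(A) p`
is *-isomorphic to `A`. -/
def fundamentalGroup (τ : A →ₗ[ℂ] ℂ) : Set ℝ :=
  {t : ℝ | ∃ (n : ℕ) (p : Matrix (Fin n) (Fin n) A), 0 < n ∧
    p * p = p ∧ star p = p ∧ (∃ φ, IsCornerIso A p φ) ∧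
    (∑ i, τ (p i i)) = (t : ℂ)}

end CommonDefs


namespace FG
set_option linter.unusedSectionVars false
open scoped Classical

section Fam
variable {B : Type} [CStarAlgebra B] [Nontrivial B]

noncomputable def bind (E : Finset (B × ℝ)) (ρ : ℝ → Finset (B × ℝ)) : Finset (B × ℝ) :=
  E.biUnion fun x => (ρ x.2).image fun y => (x.1 * y.1, y.2)

structure IsFam (E : Finset (B × ℝ)) : Prop where
  orth : ∀ x ∈ E, ∀ y ∈ E, star x.1 * y.1 = if x = y then 1 else 0
  sum : ∑ x ∈ E, x.1 * star x.1 = 1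

noncomputable def tot (E : Finset (B × ℝ)) : ℝ := ∑ x ∈ E, x.2

noncomputable def cnt (E : Finset (B × ℝ)) (s : ℝ) : ℕ := (E.filter fun x => x.2 = s).card

def Refines (E G : Finset (B × ℝ)) : Prop :=
  ∃ ρ : ℝ → Finset (B × ℝ), (∀ x ∈ E, IsFam (ρ x.2) ∧ tot (ρ x.2) = x.2) ∧ G = bind E ρ


theorem mem_bind {E : Finset (B × ℝ)} {ρ : ℝ → Finset (B × ℝ)} {z : B × ℝ} :
    z ∈ bind E ρ ↔ ∃ x ∈ E, ∃ y ∈ ρ x.2, (x.1 * y.1, y.2) = z := by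
  simp only [bind, Finset.mem_biUnion, Finset.mem_image]

theorem bind_assoc (E : Finset (B × ℝ)) (ρ ρ' : ℝ → Finset (B × ℝ)) :
    bind (bind E ρ) ρ' = bind E (fun s => bind (ρ s) ρ') := by
  ext z
  simp only [mem_bind]
  constructor
  · rintro ⟨_, ⟨x, hx, y, hy, rfl⟩, w, hw, rfl⟩
    exact ⟨x, hx, _, ⟨y, hy, w, hw, rfl⟩, by simp [mul_assoc]⟩
  · rintro ⟨x, hx, _, ⟨y, hy, w, hw, rfl⟩, rfl⟩
    exact ⟨_, ⟨x, hx, y, hy, rfl⟩, w, hw, by simp [mul_assoc]⟩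

theorem IsFam.self {E : Finset (B × ℝ)} (h : IsFam E) {x} (hx : x ∈ E) : star x.1 * x.1 = 1 := by
  rw [h.orth x hx x hx, if_pos rfl]

theorem IsFam.ne {E : Finset (B × ℝ)} (h : IsFam E) {x y} (hx : x ∈ E) (hy : y ∈ E) (hxy : x ≠ y) :
    star x.1 * y.1 = 0 := by
  rw [h.orth x hx y hy, if_neg hxy]

theorem IsFam.inj {E : Finset (B × ℝ)} (h : IsFam E) {x y} (hx : x ∈ E) (hy : y ∈ E)
    (hxy : x.1 = y.1) : x = y := by
  by_contra hne
  have h1 := h.ne hx hy hne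
  rw [← hxy, h.self hx] at h1
  exact one_ne_zero h1

theorem bind_star {E : Finset (B × ℝ)} {ρ : ℝ → Finset (B × ℝ)} (hE : IsFam E)
    (hρ : ∀ x ∈ E, IsFam (ρ x.2)) {x x' y y'} (hx : x ∈ E) (hx' : x' ∈ E) (hy : y ∈ ρ x.2)
    (hy' : y' ∈ ρ x'.2) :
    star (x.1 * y.1) * (x'.1 * y'.1) = if x = x' ∧ y = y' then 1 else 0 := by
  have : star (x.1 * y.1) * (x'.1 * y'.1) = star y.1 * (star x.1 * x'.1) * y'.1 := by
    simp [mul_assoc]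
  rw [this]
  by_cases h : x = x'
  · subst h
    rw [hE.self hx, mul_one, (hρ x hx).orth y hy y' hy']
    simp
  · rw [hE.ne hx hx' h]; simp [h]

theorem sum_bind {E : Finset (B × ℝ)} {ρ : ℝ → Finset (B × ℝ)} (hE : IsFam E)
    (hρ : ∀ x ∈ E, IsFam (ρ x.2)) {M : Type*} [AddCommMonoid M] (f : B × ℝ → M) :
    ∑ z ∈ bind E ρ, f z = ∑ x ∈ E, ∑ y ∈ ρ x.2, f (x.1 * y.1, y.2) := by
  have key : ∀ x ∈ E, ∀ x' ∈ E, ∀ y ∈ ρ x.2, ∀ y' ∈ ρ x'.2, x.1 * y.1 = x'.1 * y'.1 →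
      x = x' ∧ y = y' := by
    intro x hx x' hx' y hy y' hy' h
    by_contra hne
    have h1 := bind_star hE hρ hx hx' hy hy'
    rw [if_neg hne, ← h, bind_star hE hρ hx hx hy hy, if_pos ⟨rfl, rfl⟩] at h1
    exact one_ne_zero h1
  rw [bind, Finset.sum_biUnion]
  · refine Finset.sum_congr rfl fun x hx => ?_
    rw [Finset.sum_image]
    intro y hy y' hy' h
    exact (key x hx x hx y hy y' hy' (Prod.ext_iff.1 h).1).2
  · intro x hx x' hx' hne
    rw [Function.onFun, Finset.disjoint_left]
    intro z hz hz'
    obtain ⟨y, hy, rfl⟩ := Finset.mem_image.1 hz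
    obtain ⟨y', hy', h⟩ := Finset.mem_image.1 hz'
    exact hne (key x hx x' hx' y hy y' hy' (Prod.ext_iff.1 h).1.symm).1

theorem isFam_bind {E : Finset (B × ℝ)} {ρ : ℝ → Finset (B × ℝ)} (hE : IsFam E)
    (hρ : ∀ x ∈ E, IsFam (ρ x.2)) : IsFam (bind E ρ) := by
  constructor
  · intro z hz z' hz'
    obtain ⟨x, hx, y, hy, rfl⟩ := mem_bind.1 hz
    obtain ⟨x', hx', y', hy', rfl⟩ := mem_bind.1 hz'
    rw [bind_star hE hρ hx hx' hy hy']
    by_cases h : x = x' ∧ y = y'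
    · rw [if_pos h, if_pos]; rw [h.1, h.2]
    · rw [if_neg h, if_neg]
      intro h2
      have h1 := bind_star hE hρ hx hx' hy hy'
      have h3 : x.1 * y.1 = x'.1 * y'.1 := (Prod.ext_iff.1 h2).1
      rw [if_neg h, ← h3, bind_star hE hρ hx hx hy hy, if_pos ⟨rfl, rfl⟩] at h1
      exact one_ne_zero h1
  · rw [sum_bind hE hρ, ← hE.sum]
    refine Finset.sum_congr rfl fun x hx => ?_
    have : ∀ y ∈ ρ x.2, x.1 * y.1 * star (x.1 * y.1) = x.1 * (y.1 * star y.1) * star x.1 := by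
      intro y _; simp [mul_assoc]
    rw [Finset.sum_congr rfl this, ← Finset.sum_mul, ← Finset.mul_sum, (hρ x hx).sum, mul_one]

theorem tot_bind {E : Finset (B × ℝ)} {ρ : ℝ → Finset (B × ℝ)} (hE : IsFam E)
    (hρ : ∀ x ∈ E, IsFam (ρ x.2) ∧ tot (ρ x.2) = x.2) : tot (bind E ρ) = tot E := by
  rw [tot, sum_bind hE fun x hx => (hρ x hx).1]
  exact Finset.sum_congr rfl fun x hx => (hρ x hx).2

theorem Refines.isFam {E G : Finset (B × ℝ)} (h : Refines E G) (hE : IsFam E) : IsFam G := by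
  obtain ⟨ρ, hρ, rfl⟩ := h
  exact isFam_bind hE fun x hx => (hρ x hx).1

theorem Refines.tot {E G : Finset (B × ℝ)} (h : Refines E G) (hE : IsFam E) : tot G = tot E := by
  obtain ⟨ρ, hρ, rfl⟩ := h
  exact tot_bind hE hρ

theorem isFam_pure (s : ℝ) : IsFam ({((1 : B), s)} : Finset (B × ℝ)) := by
  constructor <;> simp

theorem Refines.refl (E : Finset (B × ℝ)) : Refines E E := by
  refine ⟨fun s => {(1, s)}, fun x _ => ⟨isFam_pure _, by simp [FG.tot]⟩, ?_⟩
  ext z; simp [mem_bind]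

theorem Refines.trans {E G H : Finset (B × ℝ)} (h : Refines E G) (h' : Refines G H) :
    Refines E H := by
  obtain ⟨ρ, hρ, rfl⟩ := h
  obtain ⟨ρ', hρ', rfl⟩ := h'
  have key : ∀ x ∈ E, ∀ y ∈ ρ x.2, IsFam (ρ' y.2) ∧ FG.tot (ρ' y.2) = y.2 := by
    intro x hx y hy
    exact hρ' (x.1 * y.1, y.2) (mem_bind.2 ⟨x, hx, y, hy, rfl⟩)
  refine ⟨fun s => bind (ρ s) ρ', fun x hx => ⟨?_, ?_⟩, bind_assoc _ _ _⟩
  · exact isFam_bind (hρ x hx).1 fun y hy => (key x hx y hy).1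
  · rw [tot_bind (hρ x hx).1 (key x hx), (hρ x hx).2]

/-- families with prescribed widths -/
theorem exists_fam {s₁ s₂ : B} (h11 : star s₁ * s₁ = 1) (h22 : star s₂ * s₂ = 1)
    (h12 : star s₁ * s₂ = 0) (hs : s₁ * star s₁ + s₂ * star s₂ = 1) (r : ℝ) (l : Multiset ℝ) :
    ∃ E : Finset (B × ℝ), IsFam E ∧ E.val.map Prod.snd = r ::ₘ l := by
  have h21 : star s₂ * s₁ = 0 := by
    have := congrArg star h12; simpa using this
  induction l using Multiset.induction generalizing r with
  | empty => exact ⟨{(1, r)}, isFam_pure r, by simp⟩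
  | cons a l ih =>
    obtain ⟨E, hE, hm⟩ := ih a
    have hinj : Function.Injective (fun x : B × ℝ => (s₂ * x.1, x.2)) := by
      intro x y hxy
      obtain ⟨h1, h2⟩ := Prod.ext_iff.1 hxy
      have h3 := congrArg (star s₂ * ·) h1
      simp only [← mul_assoc, h22, one_mul] at h3
      exact Prod.ext h3 h2
    have hnot : (s₁, r) ∉ E.image (fun x : B × ℝ => (s₂ * x.1, x.2)) := by
      intro h
      obtain ⟨x, hx, h⟩ := Finset.mem_image.1 h
      have h3 := congrArg (star s₁ * ·) (Prod.ext_iff.1 h).1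
      simp only [← mul_assoc, h12, h11, zero_mul] at h3
      exact zero_ne_one h3
    refine ⟨insert (s₁, r) (E.image fun x => (s₂ * x.1, x.2)), ⟨?_, ?_⟩, ?_⟩
    · intro x hx y hy
      rw [Finset.mem_insert] at hx hy
      rcases hx with rfl | hx <;> rcases hy with rfl | hy
      · simp [h11]
      · rw [if_neg (by intro h; rw [← h] at hy; exact hnot hy)]
        obtain ⟨y, hy, rfl⟩ := Finset.mem_image.1 hy
        simp [← mul_assoc, h12]
      · rw [if_neg (by intro h; rw [h] at hx; exact hnot hx)]
        obtain ⟨x, hx, rfl⟩ := Finset.mem_image.1 hx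
        simp [mul_assoc, h21]
      · obtain ⟨y, hy', rfl⟩ := Finset.mem_image.1 hy
        obtain ⟨x, hx', rfl⟩ := Finset.mem_image.1 hx
        have : star (s₂ * x.1) * (s₂ * y.1) = star x.1 * (star s₂ * s₂) * y.1 := by
          simp [mul_assoc]
        simp only [this, h22, mul_one, hE.orth x hx' y hy']
        by_cases h : x = y
        · simp [h]
        · rw [if_neg h, if_neg (fun h' => h (hinj h'))]
    · rw [Finset.sum_insert hnot, Finset.sum_image (fun x _ y _ h => hinj h), ← hs]
      congr 1
      have : ∀ x ∈ E, s₂ * x.1 * star (s₂ * x.1) = s₂ * (x.1 * star x.1) * star s₂ := by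
        intro y _; simp [mul_assoc]
      rw [Finset.sum_congr rfl this, ← Finset.sum_mul, ← Finset.mul_sum, hE.sum, mul_one]
    · rw [Finset.insert_val_of_notMem hnot, Multiset.map_cons,
        Finset.image_val_of_injOn (hinj.injOn), Multiset.map_map]
      simp only [Function.comp_def]
      rw [hm]

/-- unitary between families with the same counts -/
theorem exists_unitary {E E' : Finset (B × ℝ)} (hE : IsFam E) (hE' : IsFam E')
    (h : ∀ s, cnt E s = cnt E' s) :
    ∃ U : B, star U * U = 1 ∧ U * star U = 1 ∧
      E.image (fun x => (U * x.1, x.2)) = E' := by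
  have hf : ∀ s : ℝ, Nonempty ({x : E // x.1.2 = s} ≃ {x : E' // x.1.2 = s}) := by
    intro s
    have h1 : ∀ G : Finset (B × ℝ), Fintype.card {x : G // x.1.2 = s} = cnt G s := by
      intro G
      rw [cnt, Fintype.card_subtype]
      rw [← Finset.card_map (Function.Embedding.subtype (· ∈ G))]
      congr 1
      ext z; simp; exact and_comm
    exact Fintype.card_eq.1 (by rw [h1, h1, h s])
  let e : E ≃ E' := Equiv.ofFiberEquiv (f := fun x : E => x.1.2) (g := fun x : E' => x.1.2)
    (fun s => (hf s).some)
  have he : ∀ x : E, (e x).1.2 = x.1.2 := fun x =>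
    Equiv.ofFiberEquiv_map (f := fun x : E => x.1.2) (g := fun x : E' => x.1.2) _ x
  have o : ∀ x y : E, star x.1.1 * y.1.1 = if x = y then 1 else 0 := by
    intro x y; rw [hE.orth x.1 x.2 y.1 y.2]; simp only [SetLike.coe_eq_coe]
  have o' : ∀ x y : E', star x.1.1 * y.1.1 = if x = y then 1 else 0 := by
    intro x y; rw [hE'.orth x.1 x.2 y.1 y.2]; simp only [SetLike.coe_eq_coe]
  have s1 : ∑ x : E, x.1.1 * star x.1.1 = 1 := by
    rw [← hE.sum, ← Finset.sum_coe_sort E]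
  have s2 : ∑ x : E', x.1.1 * star x.1.1 = 1 := by
    rw [← hE'.sum, ← Finset.sum_coe_sort E']
  set U : B := ∑ x : E, (e x).1.1 * star x.1.1 with hU
  have hUx : ∀ x : E, U * x.1.1 = (e x).1.1 := by
    intro x
    rw [hU, Finset.sum_mul]
    simp only [mul_assoc, o]
    simp
  have hUx' : ∀ x : E', star U * x.1.1 = (e.symm x).1.1 := by
    intro x
    rw [hU, star_sum, Finset.sum_mul]
    simp only [star_mul, star_star, mul_assoc, o']
    simp only [mul_ite, mul_one, mul_zero]
    rw [Finset.sum_eq_single (e.symm x)]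
    · simp
    · intro b _ hb; rw [if_neg]; intro h; exact hb (by rw [← h]; simp)
    · simp
  refine ⟨U, ?_, ?_, ?_⟩
  · calc star U * U = star U * U * ∑ x : E, x.1.1 * star x.1.1 := by rw [s1, mul_one]
      _ = ∑ x : E, x.1.1 * star x.1.1 := by
        rw [Finset.mul_sum]
        refine Finset.sum_congr rfl fun x _ => ?_
        rw [← mul_assoc, mul_assoc (star U), hUx, hUx']; simp
      _ = 1 := s1
  · calc U * star U = U * star U * ∑ x : E', x.1.1 * star x.1.1 := by rw [s2, mul_one]
      _ = ∑ x : E', x.1.1 * star x.1.1 := by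
        rw [Finset.mul_sum]
        refine Finset.sum_congr rfl fun x _ => ?_
        rw [← mul_assoc, mul_assoc U, hUx', hUx]; simp
      _ = 1 := s2
  · ext z
    rw [Finset.mem_image]
    constructor
    · rintro ⟨x, hx, rfl⟩
      have := hUx ⟨x, hx⟩
      have h2 := he ⟨x, hx⟩
      simp only at this h2
      rw [this, ← h2]; exact (e ⟨x, hx⟩).2
    · intro hz
      refine ⟨(e.symm ⟨z, hz⟩).1, (e.symm ⟨z, hz⟩).2, ?_⟩
      rw [hUx, ← he]; simp

end Fam
end FG


namespace FG
open scoped Classical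

section Euclid

def Concl {ι : Type} [Fintype ι] (x : ι → ℝ) : Prop :=
  ∃ Y : Finset ℝ, Y.card < Fintype.card ι ∧ (∀ y ∈ Y, 0 < y) ∧
    (∀ y ∈ Y, y ∈ AddSubgroup.closure (Set.range x)) ∧
    (∀ i, x i ∈ AddSubmonoid.closure (Y : Set ℝ))

theorem concl_update {ι : Type} [Fintype ι] (x : ι → ℝ) (i j : ι) (hij : i ≠ j)
    (h : Concl (Function.update x j (x j - x i))) : Concl x := by
  obtain ⟨Y, h1, h2, h3, h4⟩ := h
  refine ⟨Y, h1, h2, fun y hy => ?_, fun l => ?_⟩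
  · refine (AddSubgroup.closure_le _).2 ?_ (h3 y hy)
    rintro _ ⟨l, rfl⟩
    have hx : ∀ m, x m ∈ AddSubgroup.closure (Set.range x) :=
      fun m => AddSubgroup.subset_closure ⟨m, rfl⟩
    by_cases hl : l = j
    · subst hl
      simpa using sub_mem (hx l) (hx i)
    · simpa [hl] using hx l
  · by_cases hl : l = j
    · subst hl
      have a := h4 l
      have b := h4 i
      simp only [Function.update_self, Function.update_of_ne hij] at a b
      simpa using add_mem a b
    · simpa [hl] using h4 l

theorem sum_update {ι : Type} [Fintype ι] (x : ι → ℝ) (c : ι → ℤ) (i j : ι) (hij : i ≠ j)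
    (h : ∑ l, (c l : ℝ) * x l = 0) :
    ∑ l, (Function.update c i (c i + c j) l : ℝ) * Function.update x j (x j - x i) l = 0 := by
  rw [← h]
  have key : ∀ f : ι → ℝ, ∑ l, f l = f i + (f j + ∑ l ∈ (Finset.univ.erase i).erase j, f l) := by
    intro f
    rw [Finset.add_sum_erase _ _ (by simp [hij.symm]), Finset.add_sum_erase _ _ (by simp)]
  rw [key, key (fun l => (c l : ℝ) * x l)]
  have : ∑ l ∈ (Finset.univ.erase i).erase j, (Function.update c i (c i + c j) l : ℝ)
      * Function.update x j (x j - x i) l = ∑ l ∈ (Finset.univ.erase i).erase j, (c l : ℝ) * x l := by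
    refine Finset.sum_congr rfl fun l hl => ?_
    simp only [Finset.mem_erase] at hl
    rw [Function.update_of_ne hl.1, Function.update_of_ne hl.2.1]
  rw [this]
  simp only [Function.update_self, Function.update_of_ne hij, Function.update_of_ne hij.symm]
  push_cast
  ring

theorem concl_of_eq {ι : Type} [Fintype ι] (x : ι → ℝ) (hx : ∀ i, 0 < x i) (i j : ι) (hij : i ≠ j)
    (h : x i = x j) : Concl x := by
  have hmem : ∀ l, x l ∈ (Finset.univ.erase j).image x := by
    intro l
    by_cases hl : l = j
    · subst hl; exact Finset.mem_image.2 ⟨i, by simp [hij], h⟩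
    · exact Finset.mem_image.2 ⟨l, by simp [hl], rfl⟩
  refine ⟨(Finset.univ.erase j).image x, ?_, ?_, ?_, ?_⟩
  · refine lt_of_le_of_lt Finset.card_image_le ?_
    exact Finset.card_lt_card (Finset.erase_ssubset (Finset.mem_univ j))
  · intro y hy; obtain ⟨l, _, rfl⟩ := Finset.mem_image.1 hy; exact hx l
  · intro y hy; obtain ⟨l, _, rfl⟩ := Finset.mem_image.1 hy
    exact AddSubgroup.subset_closure ⟨l, rfl⟩
  · intro l; exact AddSubmonoid.subset_closure (hmem l)

theorem euclid_aux {ι : Type} [Fintype ι] (M : ℕ) : ∀ (x : ι → ℝ) (c : ι → ℤ), (∀ i, 0 < x i) →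
    c ≠ 0 → ∑ l, (c l : ℝ) * x l = 0 → (∀ i, |c i| ≤ M) → Concl x := by
  induction M with
  | zero =>
    intro x c _ hc _ h
    exact absurd (funext fun i => by have := h i; simpa using this) hc
  | succ M ihM =>
    suffices H : ∀ q : ℕ, ∀ (x : ι → ℝ) (c : ι → ℤ), (∀ i, 0 < x i) →
        c ≠ 0 → ∑ l, (c l : ℝ) * x l = 0 → (∀ i, |c i| ≤ (M + 1 : ℕ)) →
        (Finset.univ.filter fun i => |c i| = (M + 1 : ℕ)).card ≤ q → Concl x from
      fun x c h1 h2 h3 h4 => H _ x c h1 h2 h3 h4 le_rfl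
    intro q
    induction q with
    | zero =>
      intro x c h1 h2 h3 h4 h5
      refine ihM x c h1 h2 h3 fun i => ?_
      have h6 : i ∉ (Finset.univ.filter fun i => |c i| = (M + 1 : ℕ)) := by
        rw [Finset.card_eq_zero.1 (Nat.le_zero.1 h5)]; simp
      simp only [Finset.mem_filter, Finset.mem_univ, true_and] at h6
      have := h4 i
      push_cast at *
      omega
    | succ q ihq =>
      -- inner claim with a positive maximal coefficient
      have inner : ∀ r : ℕ, ∀ (x : ι → ℝ) (c : ι → ℤ) (i : ι), (∀ i, 0 < x i) →
          c i = (M + 1 : ℕ) → ∑ l, (c l : ℝ) * x l = 0 → (∀ i, |c i| ≤ (M + 1 : ℕ)) →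
          (Finset.univ.filter fun i => |c i| = (M + 1 : ℕ)).card ≤ q + 1 →
          (Finset.univ.filter fun i => c i < 0).card ≤ r → Concl x := by
        intro r
        induction r with
        | zero =>
          intro x c i h1 h2 h3 h4 h5 h6
          exfalso
          have h7 : ∀ l, 0 ≤ c l := by
            intro l
            have h8 : l ∉ (Finset.univ.filter fun i => c i < 0) := by
              rw [Finset.card_eq_zero.1 (Nat.le_zero.1 h6)]; simp
            simpa using h8
          have h9 := (Finset.sum_eq_zero_iff_of_nonneg (s := Finset.univ)
            (f := fun l => (c l : ℝ) * x l)
            (fun l _ => mul_nonneg (by exact_mod_cast h7 l) (h1 l).le)).1 h3 i (Finset.mem_univ _)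
          rw [h2] at h9
          have := h1 i
          simp only [mul_eq_zero] at h9
          rcases h9 with h9 | h9
          · push_cast at h9; have : (0:ℝ) ≤ M := by positivity
            linarith
          · linarith
        | succ r ihr =>
          intro x c i h1 h2 h3 h4 h5 h6
          by_cases hneg : ∃ j, c j < 0
          swap
          · refine ihr x c i h1 h2 h3 h4 h5 ?_
            rw [Finset.filter_false_of_mem (fun l _ => fun h => hneg ⟨l, h⟩)]; simp
          obtain ⟨j, hj⟩ := hneg
          have hij : i ≠ j := by rintro rfl; rw [h2] at hj; push_cast at hj; omega
          have hjM := h4 j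
          rw [abs_le] at hjM
          rcases lt_trichotomy (x i) (x j) with hlt | heq | hgt
          · refine concl_update x i j hij ?_
            by_cases hzero : Function.update c i (c i + c j) = 0
            · exfalso
              have := congrFun hzero j
              simp [hij.symm] at this; omega
            refine ihq _ (Function.update c i (c i + c j)) ?_ hzero (sum_update x c i j hij h3) ?_ ?_
            · intro l
              by_cases hl : l = j
              · subst hl; simpa using hlt
              · simpa [hl] using h1 l
            · intro l
              by_cases hl : l = i
              · subst hl; simp only [Function.update_self]; rw [abs_le]; omega
              · simpa [hl] using h4 l
            · rw [← Nat.lt_succ_iff]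
              refine lt_of_lt_of_le (Finset.card_lt_card ?_) h5
              rw [Finset.ssubset_iff_of_subset]
              · refine ⟨i, by simp [h2]; positivity, ?_⟩
                simp only [Finset.mem_filter, Finset.mem_univ, true_and, Function.update_self]
                rw [abs_of_nonneg (by omega)]; omega
              · intro l
                simp only [Finset.mem_filter, Finset.mem_univ, true_and]
                by_cases hl : l = i
                · subst hl; simp only [Function.update_self]
                  rw [abs_of_nonneg (by omega)]; omega
                · simp [hl]
          · exact concl_of_eq x h1 i j hij heq
          · refine concl_update x j i hij.symm ?_
            refine ihr _ (Function.update c j (c j + c i)) i ?_ ?_ (sum_update x c j i hij.symm h3)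
              ?_ ?_ ?_
            · intro l
              by_cases hl : l = i
              · subst hl; simpa using hgt
              · simpa [hl] using h1 l
            · simpa [hij] using h2
            · intro l
              by_cases hl : l = j
              · subst hl; simp only [Function.update_self]; rw [abs_le]; omega
              · simpa [hl] using h4 l
            · refine le_trans (Finset.card_le_card ?_) h5
              intro l
              simp only [Finset.mem_filter, Finset.mem_univ, true_and]
              by_cases hl : l = j
              · subst hl; simp only [Function.update_self]
                rw [abs_of_nonneg (by omega)]; omega
              · simp [hl]
            · rw [← Nat.lt_succ_iff]
              refine lt_of_lt_of_le (Finset.card_lt_card ?_) h6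
              rw [Finset.ssubset_iff_of_subset]
              · refine ⟨j, by simp [hj], ?_⟩
                simp only [Finset.mem_filter, Finset.mem_univ, true_and, Function.update_self]
                omega
              · intro l
                simp only [Finset.mem_filter, Finset.mem_univ, true_and]
                by_cases hl : l = j
                · subst hl; simp only [Function.update_self]
                  omega
                · simp [hl]
      intro x c h1 h2 h3 h4 h5
      by_cases hex : ∃ i, |c i| = (M + 1 : ℕ)
      swap
      · refine ihq x c h1 h2 h3 h4 ?_
        rw [Finset.filter_false_of_mem (fun l _ => fun h => hex ⟨l, h⟩)]; simp
      obtain ⟨i, hi⟩ := hex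
      rcases abs_eq (by positivity) |>.1 hi with hi | hi
      · exact inner _ x c i h1 hi h3 h4 h5 le_rfl
      · refine inner _ x (-c) i h1 (by simp [hi]) ?_ ?_ ?_ le_rfl
        · simpa using h3
        · simpa using h4
        · simpa using h5

def LI (S : Finset ℝ) : Prop :=
  ∀ c : ℝ → ℤ, ∑ s ∈ S, (c s : ℝ) * s = 0 → ∀ s ∈ S, c s = 0

theorem euclid (X : Finset ℝ) (hX : ∀ x ∈ X, 0 < x) :
    ∃ S : Finset ℝ, (∀ s ∈ S, 0 < s) ∧ LI S ∧ (∀ s ∈ S, s ∈ AddSubgroup.closure (X : Set ℝ)) ∧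
      ∀ x ∈ X, x ∈ AddSubmonoid.closure (S : Set ℝ) := by
  induction h : X.card using Nat.strong_induction_on generalizing X with
  | _ n ih =>
    by_cases hLI : LI X
    · exact ⟨X, hX, hLI, fun s hs => AddSubgroup.subset_closure hs,
        fun s hs => AddSubmonoid.subset_closure hs⟩
    · simp only [LI, not_forall] at hLI
      obtain ⟨c, hc, s, hs, hcs⟩ := hLI
      obtain ⟨Y, h1, h2, h3, h4⟩ := euclid_aux (ι := X) (∑ x ∈ X, (c x).natAbs) (fun x => x.1)
        (fun x => c x.1) (fun x => hX x.1 x.2) (fun h => hcs (congrFun h ⟨s, hs⟩))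
        (by rw [← hc, ← Finset.sum_coe_sort X]) (fun i => by
          rw [Int.abs_eq_natAbs]
          exact_mod_cast Finset.single_le_sum (f := fun x => (c x).natAbs)
            (fun _ _ => Nat.zero_le _) i.2)
      rw [Fintype.card_coe] at h1
      obtain ⟨S, s1, s2, s3, s4⟩ := ih Y.card (h ▸ h1) Y h2 rfl
      refine ⟨S, s1, s2, fun s hs => ?_, fun x hx => ?_⟩
      · refine (AddSubgroup.closure_le _).2 ?_ (s3 s hs)
        intro y hy
        have := h3 y hy
        simpa using this
      · refine (AddSubmonoid.closure_le).2 ?_ (h4 ⟨x, hx⟩)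
        intro y hy
        exact s4 y hy

end Euclid
end FG


namespace FG
open scoped Classical
set_option linter.unusedVariables false
set_option linter.unusedSectionVars false

section Chain

structure Chain (R : Subring ℝ) (S : ℕ → Finset ℝ) : Prop where
  pos : ∀ n, ∀ s ∈ S n, 0 < s
  memR : ∀ n, ∀ s ∈ S n, s ∈ R
  li : ∀ n, LI (S n)
  mono : ∀ n, ∀ s ∈ S n, s ∈ AddSubmonoid.closure (S (n+1) : Set ℝ)
  ev : ∀ r ∈ R, 0 < r → ∃ N, r ∈ AddSubmonoid.closure (S N : Set ℝ)

variable {R : Subring ℝ} {S S' : ℕ → Finset ℝ}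

theorem Chain.le (h : Chain R S) {n m : ℕ} (hnm : n ≤ m) :
    AddSubmonoid.closure (S n : Set ℝ) ≤ AddSubmonoid.closure (S m : Set ℝ) := by
  induction m, hnm using Nat.le_induction with
  | base => exact le_rfl
  | succ m _ ih => exact ih.trans ((AddSubmonoid.closure_le).2 fun s hs => h.mono m s hs)

theorem Chain.sub (h : Chain R S) {f : ℕ → ℕ} (hf : StrictMono f) : Chain R (S ∘ f) where
  pos n := h.pos _
  memR n := h.memR _
  li n := h.li _
  mono n s hs := h.le (hf (Nat.lt_succ_self n)).le (AddSubmonoid.subset_closure hs)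
  ev r hr hr' := by
    obtain ⟨N, hN⟩ := h.ev r hr hr'
    exact ⟨N, h.le (hf.id_le N) hN⟩

theorem Chain.ev_finset (h : Chain R S) (X : Finset ℝ) (hX : ∀ x ∈ X, x ∈ R ∧ 0 < x) (k : ℕ) :
    ∃ N, k ≤ N ∧ ∀ x ∈ X, x ∈ AddSubmonoid.closure (S N : Set ℝ) := by
  induction X using Finset.induction_on with
  | empty => exact ⟨k, le_rfl, by simp⟩
  | insert a X _ ih =>
    obtain ⟨N, hN, hN'⟩ := ih fun x hx => hX x (Finset.mem_insert_of_mem hx)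
    obtain ⟨M, hM⟩ := h.ev a (hX a (Finset.mem_insert_self _ _)).1
      (hX a (Finset.mem_insert_self _ _)).2
    refine ⟨max N M, hN.trans (le_max_left _ _), fun x hx => ?_⟩
    rcases Finset.mem_insert.1 hx with rfl | hx
    · exact h.le (le_max_right _ _) hM
    · exact h.le (le_max_left _ _) (hN' x hx)

theorem exists_chain (R : Subring ℝ) [Countable R] : ∃ S, Chain R S := by
  obtain ⟨r, hr⟩ := exists_surjective_nat R
  have step : ∀ X : Finset ℝ, (∀ x ∈ X, 0 < x ∧ x ∈ R) → ∃ S : Finset ℝ,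
      (∀ s ∈ S, 0 < s ∧ s ∈ R) ∧ LI S ∧ ∀ x ∈ X, x ∈ AddSubmonoid.closure (S : Set ℝ) := by
    intro X hX
    obtain ⟨S, h1, h2, h3, h4⟩ := euclid X fun x hx => (hX x hx).1
    refine ⟨S, fun s hs => ⟨h1 s hs, ?_⟩, h2, h4⟩
    have : AddSubgroup.closure (X : Set ℝ) ≤ R.toAddSubgroup :=
      (AddSubgroup.closure_le _).2 fun x hx => (hX x hx).2
    exact this (h3 s hs)
  let Ty := {S : Finset ℝ // (∀ s ∈ S, 0 < s ∧ s ∈ R) ∧ LI S}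
  have step2 : ∀ (S : Ty) (n : ℕ), ∃ S' : Ty, (∀ x ∈ S.1, x ∈ AddSubmonoid.closure (S'.1 : Set ℝ)) ∧
      (0 < (r n : ℝ) → (r n : ℝ) ∈ AddSubmonoid.closure (S'.1 : Set ℝ)) := by
    rintro ⟨S, hS, hl⟩ n
    by_cases hn : 0 < (r n : ℝ)
    · obtain ⟨S', h1, h2, h3⟩ := step (insert (r n : ℝ) S) (by
        intro x hx
        rcases Finset.mem_insert.1 hx with rfl | hx
        · exact ⟨hn, (r n).2⟩
        · exact hS x hx)
      exact ⟨⟨S', h1, h2⟩, fun x hx => h3 x (Finset.mem_insert_of_mem hx),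
        fun _ => h3 _ (Finset.mem_insert_self _ _)⟩
    · exact ⟨⟨S, hS, hl⟩, fun x hx => AddSubmonoid.subset_closure hx, fun h => absurd h hn⟩
  choose next hn1 hn2 using step2
  let s0 : Ty := ⟨∅, by simp, by intro c _ s hs; simp at hs⟩
  let T : ℕ → Ty := fun n => Nat.rec s0 (fun n S => next S n) n
  have hT : ∀ n, T (n+1) = next (T n) n := fun n => rfl
  refine ⟨fun n => (T n).1, fun n s hs => ((T n).2.1 s hs).1, fun n s hs => ((T n).2.1 s hs).2,
    fun n => (T n).2.2, fun n s hs => hn1 (T n) n s hs, fun x hx hx' => ?_⟩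
  obtain ⟨n, hn⟩ := hr ⟨x, hx⟩
  refine ⟨n+1, ?_⟩
  have := hn2 (T n) n
  rw [hn] at this
  exact this hx'

theorem Chain.scale (h : Chain R S) {t : ℝ} (ht : 0 < t) (h1 : t ∈ R) (h2 : t⁻¹ ∈ R) :
    Chain R (fun n => (S n).image (· * t)) := by
  have key : ∀ n, ∀ x ∈ AddSubmonoid.closure (S n : Set ℝ),
      x * t ∈ AddSubmonoid.closure (((S n).image (· * t) : Finset ℝ) : Set ℝ) := by
    intro n x hx
    induction hx using AddSubmonoid.closure_induction with
    | mem x hx => exact AddSubmonoid.subset_closure (Finset.mem_coe.2 (Finset.mem_image.2 ⟨x, hx, rfl⟩))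
    | zero => simp
    | add x y _ _ hx hy => rw [add_mul]; exact add_mem hx hy
  refine ⟨?_, ?_, ?_, ?_, ?_⟩
  · intro n s hs; obtain ⟨x, hx, rfl⟩ := Finset.mem_image.1 hs
    exact mul_pos (h.pos n x hx) ht
  · intro n s hs; obtain ⟨x, hx, rfl⟩ := Finset.mem_image.1 hs
    exact mul_mem (h.memR n x hx) h1
  · intro n c hc s hs; obtain ⟨x, hx, rfl⟩ := Finset.mem_image.1 hs
    refine h.li n (fun y => c (y * t)) ?_ x hx
    rw [Finset.sum_image (fun a _ b _ hab => mul_right_cancel₀ ht.ne' hab)] at hc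
    simp only [← mul_assoc] at hc
    rw [← Finset.sum_mul] at hc
    exact (mul_eq_zero.1 hc).resolve_right ht.ne'
  · intro n s hs; obtain ⟨x, hx, rfl⟩ := Finset.mem_image.1 hs
    exact key _ _ (h.mono n x hx)
  · intro r hr hr'
    obtain ⟨N, hN⟩ := h.ev (r * t⁻¹) (mul_mem hr h2) (by positivity)
    refine ⟨N, ?_⟩
    have := key N _ hN
    rwa [inv_mul_cancel_right₀ ht.ne'] at this

/-- interleaving of two chains -/
theorem Chain.merge (h : Chain R S) (h' : Chain R S') :
    ∃ (Z : ℕ → Finset ℝ) (f g : ℕ → ℕ), Chain R Z ∧ StrictMono f ∧ StrictMono g ∧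
      (∀ i, Z (2 * i) = S (f i)) ∧ ∀ i, Z (2 * i + 1) = S' (g i) := by
  have e1 : ∀ n, ∃ m, n ≤ m ∧ ∀ x ∈ S n, x ∈ AddSubmonoid.closure (S' m : Set ℝ) := fun n =>
    h'.ev_finset (S n) (fun x hx => ⟨h.memR n x hx, h.pos n x hx⟩) n
  have e2 : ∀ n, ∃ m, n + 1 ≤ m ∧ ∀ x ∈ S' n, x ∈ AddSubmonoid.closure (S m : Set ℝ) := fun n =>
    h.ev_finset (S' n) (fun x hx => ⟨h'.memR n x hx, h'.pos n x hx⟩) (n+1)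
  choose φ φ1 φ2 using e1
  choose ψ ψ1 ψ2 using e2
  let f : ℕ → ℕ := fun n => Nat.rec 0 (fun _ m => ψ (φ m)) n
  have hf : ∀ n, f (n+1) = ψ (φ (f n)) := fun n => rfl
  have hfm : StrictMono f := strictMono_nat_of_lt_succ fun n => by
    have a := φ1 (f n); have b := ψ1 (φ (f n)); rw [hf]; omega
  have hgm : StrictMono (fun i => φ (f i)) := strictMono_nat_of_lt_succ fun n => by
    have a := φ1 (f (n+1)); have b := ψ1 (φ (f n)); rw [hf] at *; omega
  let Z : ℕ → Finset ℝ := fun k => if k % 2 = 0 then S (f (k/2)) else S' (φ (f (k/2)))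
  have z0 : ∀ i, Z (2 * i) = S (f i) := fun i => by
    simp only [Z]; rw [if_pos (by omega)]; congr 2; omega
  have z1 : ∀ i, Z (2 * i + 1) = S' (φ (f i)) := fun i => by
    simp only [Z]; rw [if_neg (by omega)]; congr 3; omega
  have zz : ∀ P : ℕ → Finset ℝ → Prop, (∀ i, P (2*i) (S (f i))) → (∀ i, P (2*i+1) (S' (φ (f i)))) →
      ∀ n, P n (Z n) := by
    intro P p0 p1 n
    obtain ⟨i, rfl | rfl⟩ := Nat.even_or_odd' n
    · rw [z0]; exact p0 i
    · rw [z1]; exact p1 i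
  refine ⟨Z, f, fun i => φ (f i), ⟨?_, ?_, ?_, ?_, ?_⟩, hfm, hgm, z0, z1⟩
  · exact zz (fun _ X => ∀ s ∈ X, 0 < s) (fun i => h.pos _) (fun i => h'.pos _)
  · exact zz (fun _ X => ∀ s ∈ X, s ∈ R) (fun i => h.memR _) (fun i => h'.memR _)
  · exact zz (fun _ X => LI X) (fun i => h.li _) (fun i => h'.li _)
  · refine zz (fun n X => ∀ s ∈ X, s ∈ AddSubmonoid.closure (Z (n+1) : Set ℝ)) (fun i => ?_) (fun i => ?_)
    · rw [z1]; exact φ2 _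
    · rw [show 2 * i + 1 + 1 = 2 * (i+1) by ring, z0, hf]; exact ψ2 _
  · intro r hr hr'
    obtain ⟨N, hN⟩ := h.ev r hr hr'
    refine ⟨2 * N, ?_⟩
    rw [z0]
    exact h.le (hfm.id_le N) hN

end Chain

section Tower
variable {B : Type} [CStarAlgebra B] [Nontrivial B]

structure Tower (S : ℕ → Finset ℝ) (T : ℝ) (E : ℕ → Finset (B × ℝ)) : Prop where
  fam : ∀ n, IsFam (E n)
  wid : ∀ n, ∀ x ∈ E n, x.2 ∈ S n
  ref : ∀ n, Refines (E n) (E (n+1))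
  tot : ∀ n, tot (E n) = T

variable (B) in
def Cuntz : Prop := ∃ s₁ s₂ : B, star s₁ * s₁ = 1 ∧ star s₂ * s₂ = 1 ∧ star s₁ * s₂ = 0 ∧
  s₁ * star s₁ + s₂ * star s₂ = 1

theorem exists_fam' (hB : Cuntz B) {S : Finset ℝ} {t : ℝ} (ht : 0 < t)
    (h : t ∈ AddSubmonoid.closure (S : Set ℝ)) :
    ∃ E : Finset (B × ℝ), IsFam E ∧ (∀ x ∈ E, x.2 ∈ S) ∧ tot E = t := by
  obtain ⟨s₁, s₂, h1, h2, h3, h4⟩ := hB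
  obtain ⟨l, hl, hs⟩ := AddSubmonoid.exists_multiset_of_mem_closure h
  have hl0 : l ≠ 0 := by rintro rfl; simp at hs; linarith
  obtain ⟨r, hr⟩ := Multiset.exists_mem_of_ne_zero hl0
  obtain ⟨l', rfl⟩ := Multiset.exists_cons_of_mem hr
  obtain ⟨E, hE, hm⟩ := exists_fam h1 h2 h3 h4 r l'
  refine ⟨E, hE, fun x hx => ?_, ?_⟩
  · refine hl x.2 ?_
    rw [← hm]
    exact Multiset.mem_map.2 ⟨x, hx, rfl⟩
  · rw [tot, ← hs, ← hm]; rfl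

variable {R : Subring ℝ} {S S' : ℕ → Finset ℝ} {T : ℝ} {E : ℕ → Finset (B × ℝ)}

theorem Tower.refines (h : Tower S T E) {n m : ℕ} (hnm : n ≤ m) : Refines (E n) (E m) := by
  induction m, hnm using Nat.le_induction with
  | base => exact Refines.refl _
  | succ m _ ih => exact ih.trans (h.ref m)

theorem Tower.sub (h : Tower S T E) {f : ℕ → ℕ} (hf : StrictMono f) :
    Tower (S ∘ f) T (E ∘ f) where
  fam n := h.fam _
  wid n := h.wid _
  ref n := h.refines (hf (Nat.lt_succ_self n)).le
  tot n := h.tot _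

theorem exists_tower (hB : Cuntz B) (hS : Chain R S) (hT : T ∈ R) (hT0 : 0 < T) :
    ∃ N : ℕ, ∀ M, N ≤ M → ∃ E : ℕ → Finset (B × ℝ), Tower (S ∘ (fun n => n + M)) T E := by
  obtain ⟨N₀, hN₀⟩ := hS.ev T hT hT0
  refine ⟨N₀, fun N hNN => ?_⟩
  have hN := hS.le hNN hN₀
  have hmono : StrictMono (fun n => n + N) := fun a b h => by simpa using h
  have hS' := hS.sub hmono
  set Z := S ∘ (fun n => n + N) with hZ
  have hstart : T ∈ AddSubmonoid.closure (Z 0 : Set ℝ) := by simpa [hZ] using hN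
  obtain ⟨D, hD, hD1, hD2⟩ := exists_fam' hB hT0 hstart
  have hρ : ∀ (n : ℕ) (s : ℝ), ∃ G : Finset (B × ℝ), s ∈ Z n → IsFam G ∧ (∀ x ∈ G, x.2 ∈ Z (n+1)) ∧
      FG.tot G = s := by
    intro n s
    by_cases hs : s ∈ Z n
    · obtain ⟨G, hG⟩ := exists_fam' hB (hS'.pos n s hs) (hS'.mono n s hs)
      exact ⟨G, fun _ => hG⟩
    · exact ⟨∅, fun h => absurd h hs⟩
  choose ρ hρ using hρ
  let E : ℕ → Finset (B × ℝ) := fun n => Nat.rec D (fun n X => bind X (ρ n)) n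
  have hE : ∀ n, E (n+1) = bind (E n) (ρ n) := fun n => rfl
  have hw : ∀ n, ∀ x ∈ E n, x.2 ∈ Z n := by
    intro n
    induction n with
    | zero => exact hD1
    | succ n ih =>
      intro z hz
      rw [hE] at hz
      obtain ⟨x, hx, y, hy, rfl⟩ := mem_bind.1 hz
      exact (hρ n x.2 (ih x hx)).2.1 y hy
  have href : ∀ n, Refines (E n) (E (n+1)) := fun n =>
    ⟨ρ n, fun x hx => ⟨(hρ n x.2 (hw n x hx)).1, (hρ n x.2 (hw n x hx)).2.2⟩, hE n⟩
  have hfam : ∀ n, IsFam (E n) := by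
    intro n
    induction n with
    | zero => exact hD
    | succ n ih => exact (href n).isFam ih
  refine ⟨E, hfam, hw, href, ?_⟩
  intro n
  induction n with
  | zero => exact hD2
  | succ n ih => rw [(href n).tot (hfam n), ih]

theorem cnt_eq_of_tot {S : Finset ℝ} (hS : LI S) {E E' : Finset (B × ℝ)}
    (h : ∀ x ∈ E, x.2 ∈ S) (h' : ∀ x ∈ E', x.2 ∈ S) (ht : tot E = tot E') (s : ℝ) :
    cnt E s = cnt E' s := by
  have key : ∀ G : Finset (B × ℝ), (∀ x ∈ G, x.2 ∈ S) → tot G = ∑ s ∈ S, (cnt G s : ℝ) * s := by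
    intro G hG
    rw [tot, ← Finset.sum_fiberwise_of_maps_to hG]
    refine Finset.sum_congr rfl fun s _ => ?_
    rw [Finset.sum_congr rfl (fun x hx => (Finset.mem_filter.1 hx).2), Finset.sum_const, cnt]
    simp
  by_cases hs : s ∈ S
  · have := hS (fun s => (cnt E s : ℤ) - cnt E' s) (by
      push_cast
      simp only [sub_mul, Finset.sum_sub_distrib]
      rw [← key E h, ← key E' h', ht, sub_self]) s hs
    omega
  · have : ∀ G : Finset (B × ℝ), (∀ x ∈ G, x.2 ∈ S) → cnt G s = 0 := by
      intro G hG
      rw [cnt, Finset.card_eq_zero, Finset.filter_eq_empty_iff]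
      intro x hx hxs
      exact hs (hxs ▸ hG x hx)
    rw [this E h, this E' h']

theorem tot_eq_sum_cnt {S : Finset ℝ} {G : Finset (B × ℝ)} (hG : ∀ x ∈ G, x.2 ∈ S) :
    tot G = ∑ s ∈ S, (cnt G s : ℝ) * s := by
  rw [tot, ← Finset.sum_fiberwise_of_maps_to hG]
  refine Finset.sum_congr rfl fun s _ => ?_
  rw [Finset.sum_congr rfl (fun x hx => (Finset.mem_filter.1 hx).2), Finset.sum_const, cnt]
  simp

end Tower
end FG


namespace FG
open scoped Classical
set_option linter.unusedVariables false
set_option linter.unusedSectionVars false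

section Alg
variable {B : Type} [CStarAlgebra B] [Nontrivial B]

def gen (E : Finset (B × ℝ)) : Set B :=
  {b | ∃ x ∈ E, ∃ y ∈ E, x.2 = y.2 ∧ b = x.1 * star y.1}

noncomputable def FS (E : Finset (B × ℝ)) : Submodule ℂ B := Submodule.span ℂ (gen E)

theorem gen_mem {E : Finset (B × ℝ)} {x y} (hx : x ∈ E) (hy : y ∈ E) (h : x.2 = y.2) :
    x.1 * star y.1 ∈ FS E := Submodule.subset_span ⟨x, hx, y, hy, h, rfl⟩

theorem FS_one {E : Finset (B × ℝ)} (hE : IsFam E) : (1 : B) ∈ FS E := by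
  rw [← hE.sum]
  exact Submodule.sum_mem _ fun x hx => gen_mem hx hx rfl

theorem FS_star {E : Finset (B × ℝ)} {b : B} (hb : b ∈ FS E) : star b ∈ FS E := by
  induction hb using Submodule.span_induction with
  | mem b hb =>
    obtain ⟨x, hx, y, hy, h, rfl⟩ := hb
    simpa using gen_mem hy hx h.symm
  | zero => simp
  | add a b _ _ ha hb => rw [star_add]; exact add_mem ha hb
  | smul c a _ ha => rw [star_smul]; exact Submodule.smul_mem _ _ ha

theorem FS_mul {E : Finset (B × ℝ)} (hE : IsFam E) {a b : B} (ha : a ∈ FS E) (hb : b ∈ FS E) :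
    a * b ∈ FS E := by
  induction ha, hb using Submodule.span_induction₂ with
  | mem_mem a b ha hb =>
    obtain ⟨x, hx, y, hy, h, rfl⟩ := ha
    obtain ⟨x', hx', y', hy', h', rfl⟩ := hb
    have : x.1 * star y.1 * (x'.1 * star y'.1) = x.1 * (star y.1 * x'.1) * star y'.1 := by
      simp [mul_assoc]
    rw [this]
    by_cases hyx : y = x'
    · subst hyx
      rw [hE.self hy, mul_one]
      exact gen_mem hx hy' (h.trans h')
    · rw [hE.ne hy hx' hyx]; simp
  | zero_left => simp
  | zero_right => simp
  | add_left x y z _ _ _ h1 h2 => rw [add_mul]; exact add_mem h1 h2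
  | add_right x y z _ _ _ h1 h2 => rw [mul_add]; exact add_mem h1 h2
  | smul_left r x y _ _ h => rw [smul_mul_assoc]; exact Submodule.smul_mem _ _ h
  | smul_right r x y _ _ h => rw [mul_smul_comm]; exact Submodule.smul_mem _ _ h

theorem FS_mono {E G : Finset (B × ℝ)} (h : Refines E G) : FS E ≤ FS G := by
  obtain ⟨ρ, hρ, rfl⟩ := h
  refine Submodule.span_le.2 ?_
  rintro _ ⟨x, hx, y, hy, hxy, rfl⟩
  have : x.1 * star y.1 = ∑ z ∈ ρ x.2, (x.1 * z.1) * star (y.1 * z.1) := by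
    have : ∀ z ∈ ρ x.2, (x.1 * z.1) * star (y.1 * z.1) = x.1 * (z.1 * star z.1) * star y.1 := by
      intro z _; simp [mul_assoc]
    rw [Finset.sum_congr rfl this, ← Finset.sum_mul, ← Finset.mul_sum, (hρ x hx).1.sum, mul_one]
  rw [this]
  refine Submodule.sum_mem _ fun z hz => ?_
  exact gen_mem (E := bind E ρ) (x := (x.1 * z.1, z.2)) (y := (y.1 * z.1, z.2))
    (mem_bind.2 ⟨x, hx, z, hz, rfl⟩) (mem_bind.2 ⟨y, hy, z, hxy ▸ hz, rfl⟩) rfl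

noncomputable def Alg (E : ℕ → Finset (B × ℝ)) : StarSubalgebra ℂ B :=
  (StarAlgebra.adjoin ℂ (⋃ n, gen (E n))).topologicalClosure

instance (E : ℕ → Finset (B × ℝ)) : IsClosed (Alg E : Set B) :=
  StarSubalgebra.isClosed_topologicalClosure _

noncomputable instance instAlg (E : ℕ → Finset (B × ℝ)) : CStarAlgebra (Alg E) := inferInstance

variable {S : ℕ → Finset ℝ} {T : ℝ} {E : ℕ → Finset (B × ℝ)}

theorem Tower.FS_le (h : Tower S T E) {n m : ℕ} (hnm : n ≤ m) : FS (E n) ≤ FS (E m) :=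
  FS_mono (h.refines hnm)

theorem Tower.adjoin (h : Tower S T E) :
    ((StarAlgebra.adjoin ℂ (⋃ n, gen (E n)) : StarSubalgebra ℂ B) : Set B) = ⋃ n, (FS (E n) : Set B) := by
  let C : StarSubalgebra ℂ B :=
    { carrier := ⋃ n, (FS (E n) : Set B)
      mul_mem' := by
        intro a b ha hb
        obtain ⟨n, hn⟩ := Set.mem_iUnion.1 ha
        obtain ⟨m, hm⟩ := Set.mem_iUnion.1 hb
        exact Set.mem_iUnion.2 ⟨max n m, FS_mul (h.fam _) (h.FS_le (le_max_left _ _) hn)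
          (h.FS_le (le_max_right _ _) hm)⟩
      add_mem' := by
        intro a b ha hb
        obtain ⟨n, hn⟩ := Set.mem_iUnion.1 ha
        obtain ⟨m, hm⟩ := Set.mem_iUnion.1 hb
        exact Set.mem_iUnion.2 ⟨max n m, add_mem (h.FS_le (le_max_left _ _) hn)
          (h.FS_le (le_max_right _ _) hm)⟩
      algebraMap_mem' := by
        intro r
        refine Set.mem_iUnion.2 ⟨0, ?_⟩
        rw [Algebra.algebraMap_eq_smul_one]
        exact Submodule.smul_mem _ _ (FS_one (h.fam 0))
      star_mem' := by
        intro a ha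
        obtain ⟨n, hn⟩ := Set.mem_iUnion.1 ha
        exact Set.mem_iUnion.2 ⟨n, FS_star hn⟩ }
  apply Set.Subset.antisymm
  · have : StarAlgebra.adjoin ℂ (⋃ n, gen (E n)) ≤ C := by
      refine StarAlgebra.adjoin_le ?_
      exact Set.iUnion_mono fun n => Submodule.subset_span
    exact this
  · refine Set.iUnion_subset fun n => ?_
    have : FS (E n) ≤ Subalgebra.toSubmodule (StarAlgebra.adjoin ℂ (⋃ n, gen (E n))).toSubalgebra := by
      refine Submodule.span_le.2 fun x hx => ?_
      exact StarAlgebra.subset_adjoin ℂ _ (Set.mem_iUnion.2 ⟨n, hx⟩)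
    exact this

theorem Tower.coe_Alg (h : Tower S T E) : (Alg E : Set B) = closure (⋃ n, (FS (E n) : Set B)) := by
  rw [Alg, StarSubalgebra.topologicalClosure_coe, h.adjoin]

theorem Tower.mem_Alg (h : Tower S T E) {b : B} :
    b ∈ Alg E ↔ b ∈ closure (⋃ n, (FS (E n) : Set B)) := by
  rw [← h.coe_Alg]; rfl

theorem Tower.FS_sub (h : Tower S T E) {n : ℕ} {b : B} (hb : b ∈ FS (E n)) : b ∈ Alg E :=
  h.mem_Alg.2 (subset_closure (Set.mem_iUnion.2 ⟨n, hb⟩))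

theorem Tower.alg_sub (h : Tower S T E) {f : ℕ → ℕ} (hf : StrictMono f) : Alg (E ∘ f) = Alg E := by
  apply SetLike.coe_injective
  rw [h.coe_Alg, (h.sub hf).coe_Alg]
  congr 1
  apply Set.Subset.antisymm
  · exact Set.iUnion_subset fun n => Set.subset_iUnion (fun n => (FS (E n) : Set B)) (f n)
  · refine Set.iUnion_subset fun n => ?_
    refine Set.Subset.trans ?_ (Set.subset_iUnion _ n)
    exact h.FS_le (hf.id_le n)

theorem Tower.separable (h : Tower S T E) : TopologicalSpace.SeparableSpace (Alg E) := by
  have h1 : TopologicalSpace.IsSeparable (⋃ n, (FS (E n) : Set B)) := by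
    refine TopologicalSpace.IsSeparable.iUnion fun n => ?_
    have : (gen (E n)).Finite := by
      refine (((E n ×ˢ E n).image fun z => z.1.1 * star z.2.1).finite_toSet).subset ?_
      rintro _ ⟨x, hx, y, hy, _, rfl⟩
      exact Finset.mem_coe.2 (Finset.mem_image.2 ⟨(x, y), Finset.mem_product.2 ⟨hx, hy⟩, rfl⟩)
    exact this.isSeparable.span
  have h2 := h1.closure
  rw [← h.coe_Alg] at h2
  exact h2.separableSpace

/-- pointwise limits of equi-Lipschitz maps -/
theorem tendsto_of_ev {X Y : Type} [NormedAddCommGroup X] [NormedAddCommGroup Y] [CompleteSpace Y]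
    (f : ℕ → X → Y) (C : ℝ) (hf : ∀ j x y, ‖f j x - f j y‖ ≤ C * ‖x - y‖) (D : Set X)
    (hD : ∀ x ∈ D, ∃ n, ∀ j, n ≤ j → f j x = f n x) (x : X) (hx : x ∈ closure D) :
    ∃ y, Filter.Tendsto (fun j => f j x) Filter.atTop (nhds y) := by
  apply cauchySeq_tendsto_of_complete
  rw [Metric.cauchySeq_iff']
  intro ε hε
  have hC : 0 < |C| + 1 := by positivity
  obtain ⟨d, hd, hxd⟩ := Metric.mem_closure_iff.1 hx (ε / (4 * (|C| + 1))) (by positivity)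
  obtain ⟨n, hn⟩ := hD d hd
  refine ⟨n, fun j hj => ?_⟩
  have hb : ∀ i, ‖f i x - f i d‖ ≤ ε / 4 := by
    intro i
    refine (hf i x d).trans ?_
    rw [dist_eq_norm] at hxd
    calc C * ‖x - d‖ ≤ (|C| + 1) * (ε / (4 * (|C| + 1))) := by
          apply mul_le_mul (by linarith [le_abs_self C]) hxd.le (norm_nonneg _) hC.le
      _ = ε / 4 := by field_simp
  rw [dist_eq_norm]
  have : f j x - f n x = (f j x - f j d) - (f n x - f n d) := by rw [hn j hj]; abel
  rw [this]
  calc _ ≤ ‖f j x - f j d‖ + ‖f n x - f n d‖ := norm_sub_le _ _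
    _ ≤ ε / 4 + ε / 4 := add_le_add (hb j) (hb n)
    _ < ε := by linarith

theorem unitary_step {S : Finset ℝ} (hS : LI S) {E E' G G' : Finset (B × ℝ)} {U : B}
    (hU : star U * U = 1) (hU' : U * star U = 1) (hE : IsFam E) (hE' : IsFam E')
    (him : E.image (fun x => (U * x.1, x.2)) = E') (hG : Refines E G) (hG' : Refines E' G')
    (wG : ∀ x ∈ G, x.2 ∈ S) (wG' : ∀ x ∈ G', x.2 ∈ S) :
    ∃ U' : B, (star U' * U' = 1 ∧ U' * star U' = 1 ∧ G.image (fun x => (U' * x.1, x.2)) = G') ∧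
      ∀ y ∈ FS E, U' * y * star U' = U * y * star U := by
  obtain ⟨ρ, hρ, rfl⟩ := hG
  obtain ⟨ρ', hρ', rfl⟩ := hG'
  have hmem : ∀ x ∈ E, (U * x.1, x.2) ∈ E' := fun x hx => by
    rw [← him]; exact Finset.mem_image_of_mem _ hx
  have hz : ∀ s : ℝ, ∃ z : B, (∃ x ∈ E, x.2 = s) → star z * z = 1 ∧ z * star z = 1 ∧
      (ρ s).image (fun x => (z * x.1, x.2)) = ρ' s := by
    intro s
    by_cases h : ∃ x ∈ E, x.2 = s
    · obtain ⟨x, hx, rfl⟩ := h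
      have h1 := hρ x hx
      have h2 := hρ' _ (hmem x hx)
      simp only at h2
      obtain ⟨z, hz⟩ := exists_unitary h1.1 h2.1 (cnt_eq_of_tot hS
        (fun y hy => wG (x.1 * y.1, y.2) (mem_bind.2 ⟨x, hx, y, hy, rfl⟩))
        (fun y hy => wG' (U * x.1 * y.1, y.2) (mem_bind.2 ⟨_, hmem x hx, y, hy, rfl⟩))
        (h1.2.trans h2.2.symm))
      exact ⟨z, fun _ => hz⟩
    · exact ⟨1, fun h' => absurd h' h⟩
  choose z hz using hz
  set U' : B := ∑ x ∈ E, U * x.1 * z x.2 * star x.1 with hU'def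
  have act : ∀ x ∈ E, U' * x.1 = U * x.1 * z x.2 := by
    intro x hx
    rw [hU'def, Finset.sum_mul, Finset.sum_eq_single x]
    · rw [mul_assoc, hE.self hx, mul_one]
    · intro y hy hne
      rw [mul_assoc, hE.ne hy hx hne, mul_zero]
    · intro h; exact absurd hx h
  have hgen : ∀ y ∈ FS E, U' * y * star U' = U * y * star U := by
    intro y hy
    induction hy using Submodule.span_induction with
    | mem b hb =>
      obtain ⟨x, hx, y, hy, h, rfl⟩ := hb
      have e1 : U' * (x.1 * star y.1) * star U' = (U' * x.1) * star (U' * y.1) := by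
        simp [mul_assoc]
      have e2 : U * x.1 * z y.2 * star (U * y.1 * z y.2) =
          U * x.1 * (z y.2 * star (z y.2)) * star y.1 * star U := by
        simp [mul_assoc]
      rw [e1, act x hx, act y hy, h, e2, (hz y.2 ⟨y, hy, rfl⟩).2.1]
      simp [mul_assoc]
    | zero => simp
    | add a b _ _ ha hb => simp only [mul_add, add_mul, ha, hb]
    | smul c a _ ha => simp only [mul_smul_comm, smul_mul_assoc, ha]
  refine ⟨U', ⟨?_, ?_, ?_⟩, hgen⟩
  · have e1 : star U' * U' = ∑ x ∈ E, ∑ y ∈ E, x.1 * (star (U' * x.1) * (U' * y.1)) * star y.1 := by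
      calc star U' * U' = (∑ x ∈ E, x.1 * star x.1) * (star U' * U') * ∑ y ∈ E, y.1 * star y.1 := by
            rw [hE.sum, one_mul, mul_one]
        _ = _ := by
            simp only [Finset.sum_mul, Finset.mul_sum]
            rw [Finset.sum_comm]
            refine Finset.sum_congr rfl fun x _ => Finset.sum_congr rfl fun y _ => ?_
            simp [mul_assoc]
    rw [e1, ← hE.sum]
    refine Finset.sum_congr rfl fun x hx => ?_
    rw [Finset.sum_eq_single x]
    · rw [act x hx]
      have : star (U * x.1 * z x.2) * (U * x.1 * z x.2) =
        star (z x.2) * (star x.1 * (star U * U) * x.1) * z x.2 := by simp [mul_assoc]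
      rw [this, hU, mul_one, hE.self hx, mul_one, (hz x.2 ⟨x, hx, rfl⟩).1, mul_one]
    · intro y hy hne
      rw [act x hx, act y hy]
      have : star (U * x.1 * z x.2) * (U * y.1 * z y.2) =
        star (z x.2) * (star x.1 * (star U * U) * y.1) * z y.2 := by simp [mul_assoc]
      rw [this, hU, mul_one, hE.ne hx hy hne.symm]; simp
    · intro h; exact absurd hx h
  · have := hgen 1 (FS_one hE)
    simpa [hU'] using this
  · ext w
    simp only [Finset.mem_image, mem_bind]
    constructor
    · rintro ⟨_, ⟨x, hx, y, hy, rfl⟩, rfl⟩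
      refine ⟨_, hmem x hx, (z x.2 * y.1, y.2), ?_, ?_⟩
      · simp only
        rw [← (hz x.2 ⟨x, hx, rfl⟩).2.2]
        exact Finset.mem_image_of_mem _ hy
      · simp only [← mul_assoc, act x hx]
    · rintro ⟨x', hx', y', hy', rfl⟩
      rw [← him] at hx'
      obtain ⟨x, hx, rfl⟩ := Finset.mem_image.1 hx'
      simp only at hy'
      rw [← (hz x.2 ⟨x, hx, rfl⟩).2.2] at hy'
      obtain ⟨y, hy, rfl⟩ := Finset.mem_image.1 hy'
      refine ⟨_, ⟨x, hx, y, hy, rfl⟩, ?_⟩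
      simp only [← mul_assoc, act x hx]

end Alg
end FG


namespace FG
open scoped Classical
open Filter
set_option linter.unusedVariables false
set_option linter.unusedSectionVars false

section Uniq
variable {B : Type} [CStarAlgebra B] [Nontrivial B]
variable {R : Subring ℝ} {S S' : ℕ → Finset ℝ} {T : ℝ} {E E' : ℕ → Finset (B × ℝ)}

theorem norm_le_one_of_iso {U : B} (hU : star U * U = 1) : ‖U‖ ≤ 1 := by
  have h := CStarRing.norm_star_mul_self (x := U)
  rw [hU, CStarRing.norm_one] at h
  nlinarith [norm_nonneg U]

theorem norm_conj_le {U V x : B} (hU : star U * U = 1) (hV : star V * V = 1) :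
    ‖U * x * star V‖ ≤ ‖x‖ := by
  have h1 := norm_le_one_of_iso hU
  have h2 := norm_le_one_of_iso hV
  calc ‖U * x * star V‖ ≤ ‖U‖ * ‖x‖ * ‖star V‖ :=
        (norm_mul_le _ _).trans (mul_le_mul_of_nonneg_right (norm_mul_le _ _) (norm_nonneg _))
    _ ≤ 1 * ‖x‖ * 1 := by rw [norm_star]; gcongr
    _ = ‖x‖ := by ring

theorem exists_limit_conj (h : Tower S T E) (h' : Tower S' T E') (U : ℕ → B)
    (hU : ∀ n, star (U n) * U n = 1)
    (hev : ∀ n, ∀ y ∈ FS (E n), U (n+1) * y * star (U (n+1)) = U n * y * star (U n))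
    (hmap : ∀ n, ∀ y ∈ FS (E n), U n * y * star (U n) ∈ FS (E' n)) :
    ∃ Θ : B → B, ∀ x ∈ Alg E, Θ x ∈ Alg E' ∧
      Tendsto (fun j => U j * x * star (U j)) atTop (nhds (Θ x)) := by
  have hev' : ∀ n, ∀ y ∈ FS (E n), ∀ j, n ≤ j → U j * y * star (U j) = U n * y * star (U n) := by
    intro n y hy j hj
    induction j, hj using Nat.le_induction with
    | base => rfl
    | succ j hj ih => rw [hev j y (h.FS_le hj hy), ih]
  have H : ∀ x ∈ Alg E, ∃ y, y ∈ Alg E' ∧ Tendsto (fun j => U j * x * star (U j)) atTop (nhds y) := by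
    intro x hx
    obtain ⟨y, hy⟩ := tendsto_of_ev (fun j x => U j * x * star (U j)) 1 (fun j x y => by
        rw [← sub_mul, ← mul_sub, one_mul]; exact norm_conj_le (hU j) (hU j))
      (⋃ n, (FS (E n) : Set B)) (fun x hx => by
        obtain ⟨n, hn⟩ := Set.mem_iUnion.1 hx
        exact ⟨n, hev' n x hn⟩) x (h.mem_Alg.1 hx)
    refine ⟨y, ?_, hy⟩
    refine h'.mem_Alg.2 (Metric.mem_closure_iff.2 fun ε hε => ?_)
    obtain ⟨d, hd, hxd⟩ := Metric.mem_closure_iff.1 (h.mem_Alg.1 hx) (ε/2) (by positivity)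
    obtain ⟨n, hn⟩ := Set.mem_iUnion.1 hd
    refine ⟨U n * d * star (U n), Set.mem_iUnion.2 ⟨n, hmap n d hn⟩, ?_⟩
    have : dist y (U n * d * star (U n)) ≤ ε/2 := by
      refine le_of_tendsto (hy.dist tendsto_const_nhds) ?_
      filter_upwards [eventually_ge_atTop n] with j hj
      rw [← hev' n d hn j hj, dist_eq_norm, ← sub_mul, ← mul_sub]
      rw [dist_eq_norm] at hxd
      exact (norm_conj_le (hU j) (hU j)).trans hxd.le
    linarith
  choose! Θ hΘ using H
  exact ⟨Θ, hΘ⟩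

theorem FS_conj {E E' : Finset (B × ℝ)} {U : B} (him : E.image (fun x => (U * x.1, x.2)) = E')
    {y : B} (hy : y ∈ FS E) : U * y * star U ∈ FS E' := by
  induction hy using Submodule.span_induction with
  | mem b hb =>
    obtain ⟨x, hx, y, hy, h, rfl⟩ := hb
    have e1 : U * (x.1 * star y.1) * star U = (U * x.1) * star (U * y.1) := by
      simp [mul_assoc]
    rw [e1, ← him]
    exact gen_mem (Finset.mem_image_of_mem _ hx) (Finset.mem_image_of_mem _ hy) h
  | zero => simp
  | add a b _ _ ha hb => simp only [mul_add, add_mul]; exact add_mem ha hb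
  | smul c a _ ha => simp only [mul_smul_comm, smul_mul_assoc]; exact Submodule.smul_mem _ _ ha

theorem tower_iso (hS : ∀ n, LI (S n)) (h : Tower S T E) (h' : Tower S T E') :
    Nonempty (Alg E ≃⋆ₐ[ℂ] Alg E') := by
  let P : ℕ → B → Prop := fun n U => star U * U = 1 ∧ U * star U = 1 ∧
    (E n).image (fun x => (U * x.1, x.2)) = E' n
  obtain ⟨U0, hU0⟩ : ∃ U, P 0 U := exists_unitary (h.fam 0) (h'.fam 0)
    (cnt_eq_of_tot (hS 0) (h.wid 0) (h'.wid 0) ((h.tot 0).trans (h'.tot 0).symm))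
  have step : ∀ n (U : {U // P n U}), ∃ U' : {U // P (n+1) U},
      ∀ y ∈ FS (E n), U'.1 * y * star U'.1 = U.1 * y * star U.1 := by
    rintro n ⟨U, h1, h2, h3⟩
    obtain ⟨U', hU', hU''⟩ := unitary_step (hS (n+1)) h1 h2 (h.fam n) (h'.fam n) h3 (h.ref n) (h'.ref n)
      (h.wid _) (h'.wid _)
    exact ⟨⟨U', hU'⟩, hU''⟩
  choose nxt hnxt using step
  let V : (n : ℕ) → {U // P n U} := fun n => Nat.rec ⟨U0, hU0⟩ (fun n U => nxt n U) n
  have hV : ∀ n, V (n+1) = nxt n (V n) := fun n => rfl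
  clear_value V
  have u1 : ∀ n, star (V n).1 * (V n).1 = 1 := fun n => (V n).2.1
  have u2 : ∀ n, (V n).1 * star (V n).1 = 1 := fun n => (V n).2.2.1
  have u3 : ∀ n, (E n).image (fun x => ((V n).1 * x.1, x.2)) = E' n := fun n => (V n).2.2.2
  have u3' : ∀ n, (E' n).image (fun x => (star (V n).1 * x.1, x.2)) = E n := fun n => by
    rw [← u3 n, Finset.image_image]
    have : ((fun x : B × ℝ => (star (V n).1 * x.1, x.2)) ∘ fun x => ((V n).1 * x.1, x.2)) = id := by
      funext x
      simp [← mul_assoc, u1]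
    rw [this, Finset.image_id]
  have ev : ∀ n, ∀ y ∈ FS (E n), (V (n+1)).1 * y * star (V (n+1)).1 = (V n).1 * y * star (V n).1 :=
    fun n y hy => by rw [hV]; exact hnxt n (V n) y hy
  have ev' : ∀ n, ∀ y ∈ FS (E' n), star (V (n+1)).1 * y * star (star (V (n+1)).1) =
      star (V n).1 * y * star (star (V n).1) := by
    intro n y hy
    have e1 := FS_conj (u3' n) hy
    have e2 := ev n _ e1
    rw [star_star] at e2 ⊢
    rw [star_star]
    have e3 : (V n).1 * (star (V n).1 * y * (V n).1) * star (V n).1 = y := by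
      calc _ = ((V n).1 * star (V n).1) * y * ((V n).1 * star (V n).1) := by simp only [mul_assoc]
        _ = y := by rw [u2, one_mul, mul_one]
    rw [e3] at e2
    conv_lhs => rw [← e2]
    calc _ = (star (V (n+1)).1 * (V (n+1)).1) * (star (V n).1 * y * (V n).1) *
          (star (V (n+1)).1 * (V (n+1)).1) := by simp only [mul_assoc]
      _ = _ := by rw [u1, one_mul, mul_one]
  obtain ⟨Θ, hΘ⟩ := exists_limit_conj h h' (fun n => (V n).1) u1 ev (fun n y hy => FS_conj (u3 n) hy)
  obtain ⟨Ψ, hΨ⟩ := exists_limit_conj h' h (fun n => star (V n).1) (fun n => by rw [star_star, u2]) ev'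
    (fun n y hy => FS_conj (u3' n) hy)
  have inv1 : ∀ x ∈ Alg E, Ψ (Θ x) = x := by
    intro x hx
    refine tendsto_nhds_unique (hΨ _ (hΘ x hx).1).2 ?_
    rw [tendsto_iff_norm_sub_tendsto_zero]
    have := (tendsto_iff_norm_sub_tendsto_zero.1 (hΘ x hx).2)
    refine squeeze_zero (fun _ => norm_nonneg _) (fun j => ?_) this
    have e : star (V j).1 * Θ x * star (star (V j).1) - x
        = star (V j).1 * (Θ x - (V j).1 * x * star (V j).1) * star (star (V j).1) := by
      rw [mul_sub, sub_mul]
      congr 1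
      calc x = (star (V j).1 * (V j).1) * x * (star (V j).1 * (V j).1) := by
            rw [u1, one_mul, mul_one]
        _ = _ := by simp only [mul_assoc, star_star]
    rw [e]
    refine (norm_conj_le (by rw [star_star, u2]) (by rw [star_star, u2])).trans ?_
    rw [norm_sub_rev]
  have inv2 : ∀ x ∈ Alg E', Θ (Ψ x) = x := by
    intro x hx
    refine tendsto_nhds_unique (hΘ _ (hΨ x hx).1).2 ?_
    rw [tendsto_iff_norm_sub_tendsto_zero]
    have := (tendsto_iff_norm_sub_tendsto_zero.1 (hΨ x hx).2)
    refine squeeze_zero (fun _ => norm_nonneg _) (fun j => ?_) this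
    have e : (V j).1 * Ψ x * star (V j).1 - x
        = (V j).1 * (Ψ x - star (V j).1 * x * star (star (V j).1)) * star (V j).1 := by
      rw [mul_sub, sub_mul]
      congr 1
      calc x = ((V j).1 * star (V j).1) * x * ((V j).1 * star (V j).1) := by
            rw [u2, one_mul, mul_one]
        _ = _ := by simp only [mul_assoc, star_star]
    rw [e]
    refine (norm_conj_le (u1 j) (u1 j)).trans ?_
    rw [norm_sub_rev]
  refine ⟨{ toFun := fun x => ⟨Θ x.1, (hΘ x.1 x.2).1⟩
            invFun := fun x => ⟨Ψ x.1, (hΨ x.1 x.2).1⟩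
            left_inv := fun x => Subtype.ext (inv1 x.1 x.2)
            right_inv := fun x => Subtype.ext (inv2 x.1 x.2)
            map_mul' := ?_
            map_add' := ?_
            map_star' := ?_
            map_smul' := ?_ }⟩
  · rintro ⟨x, hx⟩ ⟨y, hy⟩
    refine Subtype.ext (tendsto_nhds_unique (hΘ _ (mul_mem hx hy)).2 ?_)
    refine ((hΘ x hx).2.mul (hΘ y hy).2).congr fun j => ?_
    calc _ = (V j).1 * x * (star (V j).1 * (V j).1) * y * star (V j).1 := by simp only [mul_assoc]
      _ = _ := by rw [u1, mul_one]; simp only [mul_assoc]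
  · rintro ⟨x, hx⟩ ⟨y, hy⟩
    refine Subtype.ext (tendsto_nhds_unique (hΘ _ (add_mem hx hy)).2 ?_)
    refine ((hΘ x hx).2.add (hΘ y hy).2).congr fun j => ?_
    simp only [mul_add, add_mul]
  · rintro ⟨x, hx⟩
    refine Subtype.ext (tendsto_nhds_unique (hΘ _ (star_mem hx)).2 ?_)
    refine ((hΘ x hx).2.star).congr fun j => ?_
    simp [mul_assoc]
  · rintro r ⟨x, hx⟩
    refine Subtype.ext (tendsto_nhds_unique (hΘ _ (SMulMemClass.smul_mem r hx)).2 ?_)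
    refine ((hΘ x hx).2.const_smul r).congr fun j => ?_
    simp only [mul_smul_comm, smul_mul_assoc]

theorem iso_of_eq {A A' : StarSubalgebra ℂ B} (h : A = A') : Nonempty (A ≃⋆ₐ[ℂ] A') := by
  subst h; exact ⟨StarAlgEquiv.refl _ _⟩

theorem tower_iso' (hB : Cuntz B) (hS : Chain R S) (hS' : Chain R S') (hT : T ∈ R) (hT0 : 0 < T)
    (h : Tower S T E) (h' : Tower S' T E') :
    Nonempty (Alg E ≃⋆ₐ[ℂ] Alg E') := by
  obtain ⟨Z, f, g, hZ, hf, hg, z0, z1⟩ := hS.merge hS'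
  obtain ⟨N, hN⟩ := exists_tower hB hZ hT hT0
  obtain ⟨W, hW⟩ := hN (2 * N) (by omega)
  have m0 : StrictMono (fun i : ℕ => 2 * i) := fun a b h => by simpa using h
  have m1 : StrictMono (fun i : ℕ => 2 * i + 1) := fun a b h => by simpa using h
  have mN : StrictMono (fun i : ℕ => i + N) := fun a b h => by simpa using h
  have w0 := hW.sub m0
  have w1 := hW.sub m1
  have c0 : (Z ∘ fun n => n + 2 * N) ∘ (fun i => 2 * i) = (S ∘ f) ∘ (fun i => i + N) := by
    funext i; simp only [Function.comp]; rw [← z0]; congr 1; ring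
  have c1 : (Z ∘ fun n => n + 2 * N) ∘ (fun i => 2 * i + 1) = (S' ∘ g) ∘ (fun i => i + N) := by
    funext i; simp only [Function.comp]; rw [← z1]; congr 1; ring
  rw [c0] at w0
  rw [c1] at w1
  have t0 := (h.sub hf).sub mN
  have t1 := (h'.sub hg).sub mN
  obtain ⟨i1⟩ := iso_of_eq (((h.sub hf).alg_sub mN).trans (h.alg_sub hf))
  obtain ⟨i2⟩ := tower_iso (fun n => hS.li _) t0 w0
  obtain ⟨i3⟩ := iso_of_eq ((hW.alg_sub m0).trans (hW.alg_sub m1).symm)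
  obtain ⟨i4⟩ := tower_iso (fun n => hS'.li _) w1 t1
  obtain ⟨i5⟩ := iso_of_eq (((h'.sub hg).alg_sub mN).trans (h'.alg_sub hg))
  exact ⟨i1.symm.trans (i2.trans (i3.trans (i4.trans i5)))⟩

end Uniq
end FG


namespace FG
open scoped Classical ComplexOrder
open Filter
set_option linter.unusedVariables false
set_option linter.unusedSectionVars false

section Trace
variable {B : Type} [CStarAlgebra B] [Nontrivial B]
variable {R : Subring ℝ} {S S' : ℕ → Finset ℝ} {T : ℝ} {E E' : ℕ → Finset (B × ℝ)}

noncomputable def trE (ω : B →ₗ[ℂ] ℂ) (E : Finset (B × ℝ)) : B →ₗ[ℂ] ℂ where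
  toFun x := ∑ a ∈ E, (a.2 : ℂ) * ω (star a.1 * x * a.1)
  map_add' x y := by simp [mul_add, add_mul, Finset.sum_add_distrib]
  map_smul' c x := by
    simp only [mul_smul_comm, smul_mul_assoc, map_smul, smul_eq_mul, RingHom.id_apply,
      Finset.mul_sum]
    exact Finset.sum_congr rfl fun a _ => by ring

theorem trE_apply (ω : B →ₗ[ℂ] ℂ) (E : Finset (B × ℝ)) (x : B) :
    trE ω E x = ∑ a ∈ E, (a.2 : ℂ) * ω (star a.1 * x * a.1) := rfl

variable {ω : B →ₗ[ℂ] ℂ} (hω1 : ω 1 = 1) (hωp : ∀ x, 0 ≤ ω (star x * x)) (hωb : ∀ x, ‖ω x‖ ≤ ‖x‖)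

include hω1 in
theorem trE_gen {E : Finset (B × ℝ)} (hE : IsFam E) {x y} (hx : x ∈ E) (hy : y ∈ E) :
    trE ω E (x.1 * star y.1) = if x = y then (x.2 : ℂ) else 0 := by
  have key : ∀ a ∈ E, (a.2 : ℂ) * ω (star a.1 * (x.1 * star y.1) * a.1) =
      if a = x then (if x = y then (x.2 : ℂ) else 0) else 0 := by
    intro a ha
    have : star a.1 * (x.1 * star y.1) * a.1 = (star a.1 * x.1) * (star y.1 * a.1) := by
      simp only [mul_assoc]
    rw [this, hE.orth a ha x hx, hE.orth y hy a ha]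
    by_cases h : a = x
    · subst h
      by_cases h2 : a = y
      · simp [h2, hω1]
      · simp [h2, Ne.symm h2]
    · simp [h]
  rw [trE_apply, Finset.sum_congr rfl key]
  simp [hx]

include hω1 in
theorem trE_refines {E G : Finset (B × ℝ)} (hE : IsFam E) (h : Refines E G) {x : B} (hx : x ∈ FS E) :
    trE ω G x = trE ω E x := by
  induction hx using Submodule.span_induction with
  | mem b hb =>
    obtain ⟨x, hx, y, hy, hxy, rfl⟩ := hb
    rw [trE_gen hω1 hE hx hy]
    obtain ⟨ρ, hρ, rfl⟩ := h
    rw [trE_apply, sum_bind hE fun x hx => (hρ x hx).1]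
    have key : ∀ a ∈ E, ∑ z ∈ ρ a.2, ((z.2 : ℝ) : ℂ) * ω (star (a.1 * z.1) * (x.1 * star y.1) * (a.1 * z.1)) =
        if a = x then (if x = y then (x.2 : ℂ) else 0) else 0 := by
      intro a ha
      have e1 : ∀ z ∈ ρ a.2, (z.2 : ℂ) * ω (star (a.1 * z.1) * (x.1 * star y.1) * (a.1 * z.1)) =
        if a = x ∧ a = y then (z.2 : ℂ) else 0 := by
        intro z hz
        have : star (a.1 * z.1) * (x.1 * star y.1) * (a.1 * z.1) =
          star z.1 * ((star a.1 * x.1) * (star y.1 * a.1)) * z.1 := by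
          simp only [mul_assoc, star_mul]
        rw [this, hE.orth a ha x hx, hE.orth y hy a ha]
        by_cases h : a = x
        · subst h
          by_cases h2 : a = y
          · subst h2
            simp [(hρ a ha).1.self hz, hω1]
          · simp [h2, Ne.symm h2]
        · simp [h]
      rw [Finset.sum_congr rfl e1]
      by_cases h : a = x
      · subst h
        by_cases h2 : a = y
        · subst h2
          simp only [and_self, if_true]
          have := (hρ a ha).2
          rw [tot] at this
          exact_mod_cast this
        · simp [h2]
      · simp [h]
    rw [Finset.sum_congr rfl key]
    simp [hx]
  | zero => simp
  | add a b _ _ ha hb => rw [map_add, map_add, ha, hb]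
  | smul c a _ ha => rw [map_smul, map_smul, ha]

include hω1 in
theorem trE_comm {E : Finset (B × ℝ)} (hE : IsFam E) {a b : B} (ha : a ∈ FS E) (hb : b ∈ FS E) :
    trE ω E (a * b) = trE ω E (b * a) := by
  induction ha, hb using Submodule.span_induction₂ with
  | mem_mem a b ha hb =>
    obtain ⟨x, hx, y, hy, h, rfl⟩ := ha
    obtain ⟨x', hx', y', hy', h', rfl⟩ := hb
    have e1 : x.1 * star y.1 * (x'.1 * star y'.1) = x.1 * (star y.1 * x'.1) * star y'.1 := by
      simp [mul_assoc]
    have e2 : x'.1 * star y'.1 * (x.1 * star y.1) = x'.1 * (star y'.1 * x.1) * star y.1 := by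
      simp [mul_assoc]
    rw [e1, e2, hE.orth _ hy _ hx', hE.orth _ hy' _ hx]
    by_cases h1 : y = x'
    · by_cases h2 : y' = x
      · simp only [h1, h2, if_true, mul_one]
        rw [trE_gen hω1 hE hx hx, trE_gen hω1 hE hx' hx']
        simp [h, h1]
      · simp only [h1, h2, if_true, if_false, mul_one, mul_zero, zero_mul, map_zero]
        rw [trE_gen hω1 hE hx hy', if_neg (Ne.symm h2)]
    · by_cases h2 : y' = x
      · simp only [h1, h2, if_true, if_false, mul_one, mul_zero, zero_mul, map_zero]
        rw [trE_gen hω1 hE hx' hy, if_neg (Ne.symm h1)]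
      · simp [h1, h2]
  | zero_left => simp
  | zero_right => simp
  | add_left x y z _ _ _ h1 h2 => rw [add_mul, mul_add, map_add, map_add, h1, h2]
  | add_right x y z _ _ _ h1 h2 => rw [add_mul, mul_add, map_add, map_add, h1, h2]
  | smul_left r x y _ _ h => rw [smul_mul_assoc, mul_smul_comm, map_smul, map_smul, h]
  | smul_right r x y _ _ h => rw [smul_mul_assoc, mul_smul_comm, map_smul, map_smul, h]

include hωp in
theorem trE_nonneg {E : Finset (B × ℝ)} (hw : ∀ x ∈ E, 0 < x.2) (x : B) :
    0 ≤ trE ω E (star x * x) := by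
  rw [trE_apply]
  refine Finset.sum_nonneg fun a ha => mul_nonneg (by exact_mod_cast (hw a ha).le) ?_
  have : star a.1 * (star x * x) * a.1 = star (x * a.1) * (x * a.1) := by simp [mul_assoc]
  rw [this]
  exact hωp _

include hωb in
theorem trE_bound {E : Finset (B × ℝ)} (hE : IsFam E) (hw : ∀ x ∈ E, 0 < x.2) (x : B) :
    ‖trE ω E x‖ ≤ tot E * ‖x‖ := by
  rw [trE_apply, tot, Finset.sum_mul]
  refine (norm_sum_le _ _).trans (Finset.sum_le_sum fun a ha => ?_)
  rw [norm_mul, Complex.norm_real, Real.norm_of_nonneg (hw a ha).le]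
  refine mul_le_mul_of_nonneg_left ((hωb _).trans ?_) (hw a ha).le
  have h1 := norm_le_one_of_iso (hE.self ha)
  calc ‖star a.1 * x * a.1‖ ≤ ‖star a.1‖ * ‖x‖ * ‖a.1‖ :=
        (norm_mul_le _ _).trans (mul_le_mul_of_nonneg_right (norm_mul_le _ _) (norm_nonneg _))
    _ ≤ 1 * ‖x‖ * 1 := by rw [norm_star]; gcongr
    _ = ‖x‖ := by ring

def lev (E : ℕ → Finset (B × ℝ)) : Set (Alg E) := {x | ∃ n, x.1 ∈ FS (E n)}

theorem Tower.dense (h : Tower S T E) : Dense (lev E) := by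
  rw [dense_iff_closure_eq, Set.eq_univ_iff_forall]
  rintro ⟨x, hx⟩
  rw [Metric.mem_closure_iff]
  intro ε hε
  obtain ⟨d, hd, hxd⟩ := Metric.mem_closure_iff.1 (h.mem_Alg.1 hx) ε hε
  obtain ⟨n, hn⟩ := Set.mem_iUnion.1 hd
  exact ⟨⟨d, h.FS_sub hn⟩, ⟨n, hn⟩, hxd⟩

structure IsTr (ω : B →ₗ[ℂ] ℂ) (T : ℝ) (E : ℕ → Finset (B × ℝ)) (τ : Alg E →ₗ[ℂ] ℂ) : Prop where
  lev : ∀ n (x : Alg E), x.1 ∈ FS (E n) → τ x = trE ω (E n) x.1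
  bound : ∀ x, ‖τ x‖ ≤ T * ‖x‖
  nonneg : ∀ x, 0 ≤ τ (star x * x)
  tracial : ∀ x y, τ (x * y) = τ (y * x)
  one : τ 1 = T
  lim : ∀ x : Alg E, Tendsto (fun j => trE ω (E j) x.1) atTop (nhds (τ x))

theorem IsTr.cont {τ : Alg E →ₗ[ℂ] ℂ} (h : IsTr ω T E τ) : Continuous τ :=
  AddMonoidHomClass.continuous_of_bound τ T h.bound

include hω1 hωp hωb in
theorem exists_trace (h : Tower S T E) (hw : ∀ n, ∀ x ∈ E n, 0 < x.2) : ∃ τ, IsTr ω T E τ := by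
  have hev : ∀ n x, x ∈ FS (E n) → ∀ j, n ≤ j → trE ω (E j) x = trE ω (E n) x := by
    intro n x hx j hj
    exact trE_refines hω1 (h.fam n) (h.refines hj) hx
  have hlim : ∀ x : Alg E, ∃ y, Tendsto (fun j => trE ω (E j) x.1) atTop (nhds y) := by
    intro x
    refine tendsto_of_ev (fun j x => trE ω (E j) x) T (fun j x y => ?_) (⋃ n, (FS (E n) : Set B))
      (fun x hx => ?_) x.1 (h.mem_Alg.1 x.2)
    · rw [← map_sub, ← h.tot j]; exact trE_bound hωb (h.fam j) (hw j) _
    · obtain ⟨n, hn⟩ := Set.mem_iUnion.1 hx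
      exact ⟨n, hev n x hn⟩
  choose t ht using hlim
  let τ : Alg E →ₗ[ℂ] ℂ :=
    { toFun := t
      map_add' := fun x y => tendsto_nhds_unique (ht (x + y))
        (((ht x).add (ht y)).congr fun j => by simp)
      map_smul' := fun c x => tendsto_nhds_unique (ht (c • x))
        (((ht x).const_smul c).congr fun j => by simp) }
  have hτ : ∀ x, Tendsto (fun j => trE ω (E j) x.1) atTop (nhds (τ x)) := ht
  clear_value τ
  have hlev : ∀ n (x : Alg E), x.1 ∈ FS (E n) → τ x = trE ω (E n) x.1 := by
    intro n x hx
    refine tendsto_nhds_unique (hτ x) (tendsto_const_nhds.congr' ?_)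
    filter_upwards [eventually_ge_atTop n] with j hj using (hev n _ hx j hj).symm
  have hb : ∀ x, ‖τ x‖ ≤ T * ‖x‖ := by
    intro x
    refine le_of_tendsto (hτ x).norm (Eventually.of_forall fun j => ?_)
    rw [← h.tot j]; exact trE_bound hωb (h.fam j) (hw j) _
  have hc : Continuous τ := AddMonoidHomClass.continuous_of_bound τ T hb
  refine ⟨τ, hlev, hb, ?_, ?_, ?_, hτ⟩
  · intro x
    refine ge_of_tendsto (hτ _) (Eventually.of_forall fun j => ?_)
    exact trE_nonneg hωp (hw j) x.1
  · intro x y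
    induction x using h.dense.induction with
    | mem x hx =>
      induction y using h.dense.induction with
      | mem y hy =>
        obtain ⟨n, hn⟩ := hx
        obtain ⟨m, hm⟩ := hy
        have a := h.FS_le (le_max_left n m) hn
        have b := h.FS_le (le_max_right n m) hm
        rw [hlev (max n m) (x * y) (FS_mul (h.fam _) a b),
          hlev (max n m) (y * x) (FS_mul (h.fam _) b a)]
        exact trE_comm hω1 (h.fam _) a b
      | isClosed => exact isClosed_eq (by fun_prop) (by fun_prop)
    | isClosed => exact isClosed_eq (by fun_prop) (by fun_prop)
  · rw [hlev 0 1 (FS_one (h.fam 0)), ← h.tot 0, tot, trE_apply]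
    push_cast
    refine Finset.sum_congr rfl fun a ha => ?_
    simp [(h.fam 0).self ha, hω1]

end Trace
end FG


namespace FG
open scoped Classical ComplexOrder
open Filter
set_option linter.unusedVariables false
set_option linter.unusedSectionVars false

section TrUniq

theorem continuous_of_positive {A : Type} [CStarAlgebra A] (σ : A →ₗ[ℂ] ℂ)
    (h : ∀ a, 0 ≤ σ (star a * a)) : Continuous σ := by
  let _ := CStarAlgebra.spectralOrder A
  have := CStarAlgebra.spectralOrderedRing A
  let f : A →ₚ[ℂ] ℂ := PositiveLinearMap.mk₀ σ (fun x hx => by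
    obtain ⟨y, rfl⟩ := CStarAlgebra.nonneg_iff_eq_star_mul_self.1 hx
    exact h y)
  obtain ⟨C, hC⟩ := f.exists_norm_apply_le
  exact AddMonoidHomClass.continuous_of_bound σ C hC

variable {B : Type} [CStarAlgebra B] [Nontrivial B]
variable {R : Subring ℝ} {S S' : ℕ → Finset ℝ} {T : ℝ} {E E' : ℕ → Finset (B × ℝ)}

noncomputable def ee (E : ℕ → Finset (B × ℝ)) (x y : B × ℝ) : Alg E :=
  if h : x.1 * star y.1 ∈ Alg E then ⟨_, h⟩ else 0

theorem Tower.ee_coe (h : Tower S T E) {n : ℕ} {x y : B × ℝ} (hx : x ∈ E n) (hy : y ∈ E n)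
    (hxy : x.2 = y.2) : (ee E x y : B) = x.1 * star y.1 := by
  rw [ee, dif_pos (h.FS_sub (gen_mem hx hy hxy))]

theorem Tower.ee_mul (h : Tower S T E) {n : ℕ} {x y z : B × ℝ} (hx : x ∈ E n) (hy : y ∈ E n)
    (hz : z ∈ E n) (hxy : x.2 = y.2) (hyz : y.2 = z.2) : ee E x y * ee E y z = ee E x z := by
  apply Subtype.ext
  rw [MulMemClass.coe_mul, h.ee_coe hx hy hxy, h.ee_coe hy hz hyz, h.ee_coe hx hz (hxy.trans hyz)]
  calc _ = x.1 * (star y.1 * y.1) * star z.1 := by simp only [mul_assoc]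
    _ = _ := by rw [(h.fam n).self hy, mul_one]

theorem Tower.ee_mul_ne (h : Tower S T E) {n : ℕ} {x y z w : B × ℝ} (hx : x ∈ E n) (hy : y ∈ E n)
    (hz : z ∈ E n) (hw : w ∈ E n) (hxy : x.2 = y.2) (hzw : z.2 = w.2) (hyz : y ≠ z) :
    ee E x y * ee E z w = 0 := by
  apply Subtype.ext
  rw [MulMemClass.coe_mul, h.ee_coe hx hy hxy, h.ee_coe hz hw hzw]
  calc _ = x.1 * (star y.1 * z.1) * star w.1 := by simp only [mul_assoc]
    _ = _ := by rw [(h.fam n).ne hy hz hyz]; simp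

theorem Tower.ee_star (h : Tower S T E) {n : ℕ} {x y : B × ℝ} (hx : x ∈ E n) (hy : y ∈ E n)
    (hxy : x.2 = y.2) : star (ee E x y) = ee E y x := by
  apply Subtype.ext
  rw [StarMemClass.coe_star, h.ee_coe hx hy hxy, h.ee_coe hy hx hxy.symm]; simp

theorem Tower.ee_sum (h : Tower S T E) (n : ℕ) : ∑ x ∈ E n, ee E x x = 1 := by
  apply Subtype.ext
  rw [AddSubmonoidClass.coe_finsetSum, OneMemClass.coe_one, ← (h.fam n).sum]
  exact Finset.sum_congr rfl fun x hx => h.ee_coe hx hx rfl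

theorem sum_fiber {S : Finset ℝ} {G : Finset (B × ℝ)} (hG : ∀ x ∈ G, x.2 ∈ S) (g : ℝ → ℝ) :
    ∑ x ∈ G, g x.2 = ∑ s ∈ S, (cnt G s : ℝ) * g s := by
  rw [← Finset.sum_fiberwise_of_maps_to hG]
  refine Finset.sum_congr rfl fun s _ => ?_
  rw [Finset.sum_congr rfl (fun x hx => by rw [(Finset.mem_filter.1 hx).2]), Finset.sum_const, cnt]
  simp

variable {σ : Alg E →ₗ[ℂ] ℂ}

theorem st_diag (h : Tower S T E) (hσ : IsTracialState (Alg E) σ) {n : ℕ} {x : B × ℝ} (hx : x ∈ E n) :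
    0 ≤ σ (ee E x x) := by
  have := hσ.nonneg (ee E x x)
  rwa [h.ee_star hx hx rfl, h.ee_mul hx hx hx rfl rfl] at this

theorem st_eq (h : Tower S T E) (hσ : IsTracialState (Alg E) σ) {n : ℕ} {x y : B × ℝ} (hx : x ∈ E n)
    (hy : y ∈ E n) (hxy : x.2 = y.2) : σ (ee E x x) = σ (ee E y y) := by
  have := hσ.tracial (ee E x y) (ee E y x)
  rwa [h.ee_mul hx hy hx hxy hxy.symm, h.ee_mul hy hx hy hxy.symm hxy] at this

theorem st_ne (h : Tower S T E) (hσ : IsTracialState (Alg E) σ) {n : ℕ} {x y : B × ℝ} (hx : x ∈ E n)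
    (hy : y ∈ E n) (hxy : x.2 = y.2) (hne : x ≠ y) : σ (ee E x y) = 0 := by
  have := hσ.tracial (ee E x x) (ee E x y)
  rwa [h.ee_mul hx hx hy rfl hxy, h.ee_mul_ne hx hy hx hx hxy rfl (Ne.symm hne), map_zero] at this

theorem st_key (hB : Cuntz B) (hS : Chain R S) (h : Tower S 1 E) (hσ : IsTracialState (Alg E) σ)
    {n : ℕ} {a : B × ℝ} (ha : a ∈ E n) (k m : ℤ) (hkm : 0 < k + m * a.2) :
    0 ≤ k + m * (σ (ee E a a)).re := by
  have hR : (k + m * a.2 : ℝ) ∈ R :=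
    add_mem (intCast_mem R k) (mul_mem (intCast_mem R m) (hS.memR n _ (h.wid n a ha)))
  obtain ⟨N, hnN, hN⟩ := hS.ev_finset {(k + m * a.2 : ℝ)} (by
    intro x hx; rw [Finset.mem_singleton.1 hx]; exact ⟨hR, hkm⟩) n
  have hN := hN _ (Finset.mem_singleton_self _)
  obtain ⟨C, hC, hC1, hC2⟩ := exists_fam' hB hkm hN
  obtain ⟨ρ, hρ, hEN⟩ := h.refines hnN
  have hmem : ∀ z ∈ ρ a.2, (a.1 * z.1, z.2) ∈ E N := fun z hz => by
    rw [hEN]; exact mem_bind.2 ⟨a, ha, z, hz, rfl⟩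
  have hρw : ∀ z ∈ ρ a.2, z.2 ∈ S N := fun z hz =>
    h.wid N (a.1 * z.1, z.2) (hmem z hz)
  let g : ℝ → ℝ := fun s => if hs : ∃ z ∈ E N, z.2 = s then (σ (ee E hs.choose hs.choose)).re else 0
  have hg : ∀ z ∈ E N, g z.2 = (σ (ee E z z)).re := by
    intro z hz
    have hs : ∃ z' ∈ E N, z'.2 = z.2 := ⟨z, hz, rfl⟩
    simp only [g, dif_pos hs]
    rw [st_eq h hσ hs.choose_spec.1 hz hs.choose_spec.2]
  have hg0 : ∀ s, 0 ≤ g s := by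
    intro s
    by_cases hs : ∃ z ∈ E N, z.2 = s
    · obtain ⟨z, hz, rfl⟩ := hs
      rw [hg z hz]
      exact (Complex.le_def.1 (st_diag h hσ hz)).1
    · simp only [g, dif_neg hs]; exact le_rfl
  have e1 : (1 : ℝ) = ∑ s ∈ S N, (cnt (E N) s : ℝ) * g s := by
    rw [← sum_fiber (h.wid N), Finset.sum_congr rfl hg]
    have := hσ.map_one
    rw [← h.ee_sum N, map_sum] at this
    have := congrArg Complex.re this
    rw [Complex.re_sum] at this
    rw [this]; simp
  have e2 : (σ (ee E a a)).re = ∑ s ∈ S N, (cnt (ρ a.2) s : ℝ) * g s := by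
    rw [← sum_fiber hρw]
    have : ee E a a = ∑ z ∈ ρ a.2, ee E (a.1 * z.1, z.2) (a.1 * z.1, z.2) := by
      apply Subtype.ext
      rw [AddSubmonoidClass.coe_finsetSum, h.ee_coe ha ha rfl]
      rw [Finset.sum_congr rfl fun z hz => h.ee_coe (hmem z hz) (hmem z hz) rfl]
      have : ∀ z ∈ ρ a.2, (a.1 * z.1) * star (a.1 * z.1) = a.1 * (z.1 * star z.1) * star a.1 := by
        intro z _; simp [mul_assoc]
      rw [Finset.sum_congr rfl this, ← Finset.sum_mul, ← Finset.mul_sum, (hρ a ha).1.sum, mul_one]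
    rw [this, map_sum, Complex.re_sum]
    exact Finset.sum_congr rfl fun z hz => (hg _ (hmem z hz)).symm
  have e3 := hS.li N (fun s => k * cnt (E N) s + m * cnt (ρ a.2) s - cnt C s) (by
    push_cast
    have a1 := tot_eq_sum_cnt (h.wid N)
    have a2 := tot_eq_sum_cnt hρw
    have a3 := tot_eq_sum_cnt hC1
    rw [h.tot N] at a1
    rw [(hρ a ha).2] at a2
    rw [hC2] at a3
    have : ∑ s ∈ S N, ((k:ℝ) * cnt (E N) s + m * cnt (ρ a.2) s - cnt C s) * s =
        k * ∑ s ∈ S N, (cnt (E N) s : ℝ) * s + m * ∑ s ∈ S N, (cnt (ρ a.2) s : ℝ) * s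
          - ∑ s ∈ S N, (cnt C s : ℝ) * s := by
      rw [Finset.mul_sum, Finset.mul_sum, ← Finset.sum_add_distrib, ← Finset.sum_sub_distrib]
      exact Finset.sum_congr rfl fun s _ => by ring
    rw [this, ← a1, ← a2, ← a3]; ring)
  have e4 : (k : ℝ) + m * (σ (ee E a a)).re = ∑ s ∈ S N, (cnt C s : ℝ) * g s := by
    calc (k : ℝ) + m * (σ (ee E a a)).re = k * 1 + m * (σ (ee E a a)).re := by ring
      _ = ∑ s ∈ S N, (cnt C s : ℝ) * g s := by
        rw [e2]
        nth_rw 1 [e1]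
        rw [Finset.mul_sum, Finset.mul_sum, ← Finset.sum_add_distrib]
        refine Finset.sum_congr rfl fun s hs => ?_
        have := e3 s hs
        have h2 : (cnt C s : ℝ) = k * cnt (E N) s + m * cnt (ρ a.2) s := by
          have : (cnt C s : ℤ) = k * cnt (E N) s + m * cnt (ρ a.2) s := by linarith
          exact_mod_cast this
        rw [h2]; ring
  rw [e4]
  exact Finset.sum_nonneg fun s _ => mul_nonneg (Nat.cast_nonneg _) (hg0 s)

theorem st_val (hB : Cuntz B) (hS : Chain R S) (h : Tower S 1 E) (hσ : IsTracialState (Alg E) σ)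
    {n : ℕ} {a : B × ℝ} (ha : a ∈ E n) : σ (ee E a a) = (a.2 : ℂ) := by
  have key := fun k m hkm => st_key hB hS h hσ ha k m hkm
  have h0 := Complex.le_def.1 (st_diag h hσ ha)
  apply Complex.ext
  · rw [Complex.ofReal_re]
    set γ := (σ (ee E a a)).re
    rcases lt_trichotomy γ a.2 with hlt | heq | hgt
    · exfalso
      obtain ⟨q, hq1, hq2⟩ := exists_rat_btwn hlt
      have hd : (0:ℝ) < q.den := by exact_mod_cast q.den_pos
      have hq : (q : ℝ) = q.num / q.den := by exact_mod_cast (Rat.num_div_den q).symm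
      rw [hq, div_lt_iff₀ hd] at hq2
      rw [hq, lt_div_iff₀ hd] at hq1
      have := key (-q.num) q.den (by push_cast; nlinarith)
      push_cast at this; nlinarith
    · exact heq
    · exfalso
      obtain ⟨q, hq1, hq2⟩ := exists_rat_btwn hgt
      have hd : (0:ℝ) < q.den := by exact_mod_cast q.den_pos
      have hq : (q : ℝ) = q.num / q.den := by exact_mod_cast (Rat.num_div_den q).symm
      rw [hq, div_lt_iff₀ hd] at hq2
      rw [hq, lt_div_iff₀ hd] at hq1
      have := key q.num (-q.den) (by push_cast; nlinarith)
      push_cast at this; nlinarith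
  · rw [Complex.ofReal_im]; simpa using h0.2.symm

theorem st_unique (hB : Cuntz B) (hS : Chain R S) (h : Tower S 1 E) {σ σ' : Alg E →ₗ[ℂ] ℂ}
    (hσ : IsTracialState (Alg E) σ) (hσ' : IsTracialState (Alg E) σ') : σ = σ' := by
  have key : ∀ n b, b ∈ FS (E n) → ∀ hb : b ∈ Alg E, σ ⟨b, hb⟩ = σ' ⟨b, hb⟩ := by
    intro n b hb
    induction hb using Submodule.span_induction with
    | mem b hb =>
      obtain ⟨x, hx, y, hy, hxy, rfl⟩ := hb
      intro hb
      have : (⟨x.1 * star y.1, hb⟩ : Alg E) = ee E x y := Subtype.ext (h.ee_coe hx hy hxy).symm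
      rw [this]
      by_cases hne : x = y
      · subst hne; rw [st_val hB hS h hσ hx, st_val hB hS h hσ' hx]
      · rw [st_ne h hσ hx hy hxy hne, st_ne h hσ' hx hy hxy hne]
    | zero => intro hb; have : (⟨0, hb⟩ : Alg E) = 0 := rfl
              rw [this, map_zero, map_zero]
    | add a b ha hb iha ihb =>
      intro hab
      have : (⟨a + b, hab⟩ : Alg E) = ⟨a, h.FS_sub ha⟩ + ⟨b, h.FS_sub hb⟩ := rfl
      rw [this, map_add, map_add, iha, ihb]
    | smul c a ha iha =>
      intro hab
      have : (⟨c • a, hab⟩ : Alg E) = c • ⟨a, h.FS_sub ha⟩ := rfl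
      rw [this, map_smul, map_smul, iha]
  have c1 := continuous_of_positive σ hσ.nonneg
  have c2 := continuous_of_positive σ' hσ'.nonneg
  apply LinearMap.ext
  intro x
  induction x using h.dense.induction with
  | mem x hx => obtain ⟨n, hn⟩ := hx; exact key n x.1 hn x.2
  | isClosed => exact isClosed_eq c1 c2

end TrUniq
end FG


namespace FG
open scoped Classical ComplexOrder
open Filter
set_option linter.unusedVariables false
set_option linter.unusedSectionVars false

section Gen
variable {A : Type} [Ring A]

def Gen (x b : A) : Prop :=
  ∃ (k : ℕ) (c d : Fin k → A), ∑ l, c l * x * d l = b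

theorem Gen.mk (x c d : A) : Gen x (c * x * d) := ⟨1, fun _ => c, fun _ => d, by simp⟩

theorem Gen.zero (x : A) : Gen x 0 := ⟨0, fun _ => 0, fun _ => 0, by simp⟩

theorem Gen.add {x b b' : A} (h : Gen x b) (h' : Gen x b') : Gen x (b + b') := by
  obtain ⟨k, c, d, rfl⟩ := h
  obtain ⟨k', c', d', rfl⟩ := h'
  exact ⟨k + k', Fin.append c c', Fin.append d d', by rw [Fin.sum_univ_add]; simp⟩

theorem Gen.sum {x : A} {ι : Type*} (s : Finset ι) (f : ι → A) (h : ∀ i ∈ s, Gen x (f i)) :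
    Gen x (∑ i ∈ s, f i) := by
  induction s using Finset.induction_on with
  | empty => simpa using Gen.zero x
  | insert a s ha ih =>
    rw [Finset.sum_insert ha]
    exact (h a (Finset.mem_insert_self _ _)).add (ih fun i hi => h i (Finset.mem_insert_of_mem hi))

theorem Gen.mul {x b : A} (h : Gen x b) (u v : A) : Gen x (u * b * v) := by
  obtain ⟨k, c, d, rfl⟩ := h
  refine ⟨k, fun l => u * c l, fun l => d l * v, ?_⟩
  rw [Finset.mul_sum, Finset.sum_mul]
  exact Finset.sum_congr rfl fun l _ => by simp only [mul_assoc]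

theorem Gen.trans {x y z : A} (h : Gen x y) (h' : Gen y z) : Gen x z := by
  obtain ⟨k, c, d, rfl⟩ := h'
  exact Gen.sum _ _ fun l _ => h.mul _ _

end Gen

section Simple
variable {B : Type} [CStarAlgebra B] [Nontrivial B]
variable {R : Subring ℝ} {S S' : ℕ → Finset ℝ} {T : ℝ} {E E' : ℕ → Finset (B × ℝ)}

theorem gen_one (hB : Cuntz B) (hS : Chain R S) (h : Tower S 1 E) {n : ℕ} {a : B × ℝ} (ha : a ∈ E n) :
    Gen (ee E a a) 1 := by
  have hpos := hS.pos n _ (h.wid n a ha)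
  obtain ⟨K, hK⟩ := exists_nat_gt (1 / a.2)
  rw [div_lt_iff₀ hpos] at hK
  have hpos2 : (0:ℝ) < K * a.2 - 1 := by linarith
  have hR : (K * a.2 - 1 : ℝ) ∈ R :=
    sub_mem (mul_mem (natCast_mem R K) (hS.memR n _ (h.wid n a ha))) (one_mem R)
  obtain ⟨N, hnN, hN⟩ := hS.ev_finset {(K * a.2 - 1 : ℝ)} (by
    intro x hx; rw [Finset.mem_singleton.1 hx]; exact ⟨hR, hpos2⟩) n
  have hN := hN _ (Finset.mem_singleton_self _)
  obtain ⟨C, hC, hC1, hC2⟩ := exists_fam' hB hpos2 hN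
  obtain ⟨ρ, hρ, hEN⟩ := h.refines hnN
  have hmem : ∀ z ∈ ρ a.2, (a.1 * z.1, z.2) ∈ E N := fun z hz => by
    rw [hEN]; exact mem_bind.2 ⟨a, ha, z, hz, rfl⟩
  have hρw : ∀ z ∈ ρ a.2, z.2 ∈ S N := fun z hz => h.wid N (a.1 * z.1, z.2) (hmem z hz)
  have e3 := hS.li N (fun s => K * cnt (ρ a.2) s - cnt (E N) s - cnt C s) (by
    push_cast
    have a1 := tot_eq_sum_cnt (h.wid N)
    have a2 := tot_eq_sum_cnt hρw
    have a3 := tot_eq_sum_cnt hC1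
    rw [h.tot N] at a1
    rw [(hρ a ha).2] at a2
    rw [hC2] at a3
    have : ∑ s ∈ S N, ((K:ℝ) * cnt (ρ a.2) s - cnt (E N) s - cnt C s) * s =
        K * ∑ s ∈ S N, (cnt (ρ a.2) s : ℝ) * s - ∑ s ∈ S N, (cnt (E N) s : ℝ) * s
          - ∑ s ∈ S N, (cnt C s : ℝ) * s := by
      rw [Finset.mul_sum, ← Finset.sum_sub_distrib, ← Finset.sum_sub_distrib]
      exact Finset.sum_congr rfl fun s _ => by ring
    rw [this, ← a1, ← a2, ← a3]; ring)
  rw [← h.ee_sum N]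
  refine Gen.sum _ _ fun x hx => ?_
  have hy : ∃ y ∈ ρ a.2, y.2 = x.2 := by
    by_contra hno
    have c0 : cnt (ρ a.2) x.2 = 0 := by
      rw [cnt, Finset.card_eq_zero, Finset.filter_eq_empty_iff]
      intro y hy hyx; exact hno ⟨y, hy, hyx⟩
    have c1 : 0 < cnt (E N) x.2 := Finset.card_pos.2 ⟨x, by simp [hx]⟩
    have := e3 x.2 (h.wid N x hx)
    rw [c0] at this
    push_cast at this
    omega
  obtain ⟨y, hy, hyx⟩ := hy
  have hz := hmem y hy
  have : ee E x x = ee E x (a.1 * y.1, y.2) * ee E a a * ee E (a.1 * y.1, y.2) x := by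
    apply Subtype.ext
    rw [MulMemClass.coe_mul, MulMemClass.coe_mul, h.ee_coe hx hx rfl, h.ee_coe hx hz hyx.symm,
      h.ee_coe hz hx hyx, h.ee_coe ha ha rfl]
    have : x.1 * star (a.1 * y.1) * (a.1 * star a.1) * (a.1 * y.1 * star x.1) =
      x.1 * (star y.1 * ((star a.1 * a.1) * ((star a.1 * a.1) * y.1))) * star x.1 := by
      simp only [star_mul, mul_assoc]
    rw [this, (h.fam n).self ha, one_mul, one_mul, (hρ a ha).1.self hy, mul_one]
  rw [this]
  exact Gen.mk _ _ _

theorem FS_scalar {E : Finset (B × ℝ)} (hE : IsFam E) {b : B} (hb : b ∈ FS E) {x y} (hx : x ∈ E)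
    (hy : y ∈ E) : ∃ c : ℂ, star x.1 * b * y.1 = c • 1 := by
  induction hb using Submodule.span_induction with
  | mem b hb =>
    obtain ⟨z, hz, w, hw, h, rfl⟩ := hb
    have : star x.1 * (z.1 * star w.1) * y.1 = (star x.1 * z.1) * (star w.1 * y.1) := by
      simp only [mul_assoc]
    rw [this, hE.orth _ hx _ hz, hE.orth _ hw _ hy]
    by_cases h1 : x = z
    · by_cases h2 : w = y
      · exact ⟨1, by simp [h1, h2]⟩
      · exact ⟨0, by simp [h2]⟩
    · exact ⟨0, by simp [h1]⟩
  | zero => exact ⟨0, by simp⟩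
  | add a b _ _ ha hb =>
    obtain ⟨c, hc⟩ := ha
    obtain ⟨d, hd⟩ := hb
    exact ⟨c + d, by rw [mul_add, add_mul, hc, hd, add_smul]⟩
  | smul r a _ ha =>
    obtain ⟨c, hc⟩ := ha
    exact ⟨r * c, by rw [mul_smul_comm, smul_mul_assoc, hc, smul_smul]⟩

instance FS_fin (E : Finset (B × ℝ)) : FiniteDimensional ℂ (FS E) := by
  have : (gen E).Finite := by
    refine (((E ×ˢ E).image fun z => z.1.1 * star z.2.1).finite_toSet).subset ?_
    rintro _ ⟨x, hx, y, hy, _, rfl⟩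
    exact Finset.mem_coe.2 (Finset.mem_image.2 ⟨(x, y), Finset.mem_product.2 ⟨hx, hy⟩, rfl⟩)
  exact FiniteDimensional.span_of_finite ℂ this

/-- norm attaining vectors -/
theorem FS_vec {E : Finset (B × ℝ)} (hE : IsFam E) {d : B} (hd : d ∈ FS E) :
    ∃ v ∈ FS E, ∃ a ∈ E, star v * v = a.1 * star a.1 ∧
      (star d * d) * v = ((‖d‖ ^ 2 : ℝ) : ℂ) • v := by
  set y := star d * d with hy
  have hyF : y ∈ FS E := FS_mul hE (FS_star hd) hd
  have hys : IsSelfAdjoint y := IsSelfAdjoint.star_mul_self d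
  have hyn : ‖y‖ = ‖d‖ ^ 2 := by rw [hy, CStarRing.norm_star_mul_self, sq]
  have hspec : ((‖d‖ ^ 2 : ℝ) : ℂ) ∈ spectrum ℂ y := by
    let _ := CStarAlgebra.spectralOrder B
    have := CStarAlgebra.spectralOrderedRing B
    have h1 := CStarAlgebra.norm_mem_spectrum_of_nonneg (a := y) (star_mul_self_nonneg d)
    rw [hyn] at h1
    exact spectrum.algebraMap_mem ℂ h1
  set r : ℂ := ((‖d‖ ^ 2 : ℝ) : ℂ) with hr
  set u : B := algebraMap ℂ B r - y with hu
  have huF : u ∈ FS E := by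
    rw [hu, Algebra.algebraMap_eq_smul_one]
    exact sub_mem (Submodule.smul_mem _ _ (FS_one hE)) hyF
  have hus : star u = u := by
    rw [hu, star_sub, hys.star_eq, ← algebraMap_star_comm, hr]; simp
  let L : FS E →ₗ[ℂ] FS E :=
    { toFun := fun b => ⟨u * b.1, FS_mul hE huF b.2⟩
      map_add' := fun a b => Subtype.ext (mul_add _ _ _)
      map_smul' := fun c a => Subtype.ext (mul_smul_comm _ _ _) }
  have hL : ¬ Function.Injective L := by
    intro hinj
    obtain ⟨b, hb⟩ := (LinearMap.injective_iff_surjective.1 hinj) ⟨1, FS_one hE⟩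
    have hb1 : u * b.1 = 1 := congrArg Subtype.val hb
    have hb2 : star b.1 * u = 1 := by
      have := congrArg star hb1
      rwa [star_mul, hus, star_one] at this
    apply spectrum.mem_iff.1 hspec
    have hbb : star b.1 = b.1 := left_inv_eq_right_inv hb2 hb1
    rw [hbb] at hb2
    exact ⟨⟨u, b.1, hb1, hb2⟩, rfl⟩
  rw [← LinearMap.ker_eq_bot, Submodule.eq_bot_iff] at hL
  push Not at hL
  obtain ⟨z, hz, hz0⟩ := hL
  have hz1 : y * z.1 = r • z.1 := by
    have : u * z.1 = 0 := congrArg Subtype.val (LinearMap.mem_ker.1 hz)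
    rw [hu, sub_mul, sub_eq_zero, Algebra.algebraMap_eq_smul_one, smul_mul_assoc, one_mul] at this
    exact this.symm
  have hz2 : ∃ a ∈ E, z.1 * a.1 ≠ 0 := by
    by_contra hno
    push Not at hno
    apply hz0
    apply Subtype.ext
    calc z.1 = z.1 * ∑ x ∈ E, x.1 * star x.1 := by rw [hE.sum, mul_one]
      _ = 0 := by
        rw [Finset.mul_sum]
        exact Finset.sum_eq_zero fun x hx => by rw [← mul_assoc, hno x hx, zero_mul]
  obtain ⟨a, ha, hza⟩ := hz2
  obtain ⟨κ, hκ⟩ := FS_scalar hE (FS_mul hE (FS_star z.2) z.2) ha ha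
  have hκ' : star (z.1 * a.1) * (z.1 * a.1) = κ • 1 := by rw [← hκ]; simp [mul_assoc]
  have hκ1 : κ = ((‖z.1 * a.1‖ ^ 2 : ℝ) : ℂ) := by
    let _ := CStarAlgebra.spectralOrder B
    have := CStarAlgebra.spectralOrderedRing B
    have h1 : (0:B) ≤ algebraMap ℂ B κ := by
      rw [Algebra.algebraMap_eq_smul_one, ← hκ']; exact star_mul_self_nonneg _
    have h2 : 0 ≤ κ := by
      have hs : star κ = κ := by
        have := h1.isSelfAdjoint.star_eq
        rw [← algebraMap_star_comm] at this
        exact (algebraMap ℂ B).injective this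
      obtain ⟨r, rfl⟩ : ∃ r : ℝ, (r : ℂ) = κ := ⟨κ.re, Complex.conj_eq_iff_re.1 hs⟩
      have h1' : (0:B) ≤ algebraMap ℝ B r := h1
      have := spectrum_nonneg_of_nonneg h1' (x := r) (by rw [spectrum.scalar_eq]; rfl)
      exact_mod_cast this
    have h3 : ‖κ‖ = ‖z.1 * a.1‖ ^ 2 := by
      have := CStarRing.norm_star_mul_self (x := z.1 * a.1)
      rw [hκ', norm_smul, CStarRing.norm_one, mul_one] at this
      rw [this, sq]
    rw [← h3]
    exact Complex.eq_coe_norm_of_nonneg h2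
  set t := ‖z.1 * a.1‖ with ht
  have ht0 : t ≠ 0 := norm_ne_zero_iff.2 hza
  refine ⟨((t⁻¹ : ℝ) : ℂ) • (z.1 * (a.1 * star a.1)), Submodule.smul_mem _ _ (FS_mul hE z.2 (gen_mem ha ha rfl)),
    a, ha, ?_, ?_⟩
  · rw [star_smul, smul_mul_smul_comm]
    have : star (z.1 * (a.1 * star a.1)) * (z.1 * (a.1 * star a.1)) =
      a.1 * (star (z.1 * a.1) * (z.1 * a.1)) * star a.1 := by simp [mul_assoc]
    rw [this, hκ', hκ1]
    simp only [mul_smul_comm, smul_mul_assoc, mul_one, smul_smul]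
    have : star (((t⁻¹ : ℝ) : ℂ)) * ((t⁻¹ : ℝ) : ℂ) * ((t ^ 2 : ℝ) : ℂ) = 1 := by
      simp only [RCLike.star_def, Complex.conj_ofReal]
      norm_cast
      field_simp
    rw [this, one_smul]
  · rw [mul_smul_comm, ← mul_assoc, hz1, smul_mul_assoc, smul_comm]

theorem gen_diag (h : Tower S T E) {x : Alg E} (hx : x ≠ 0) :
    ∃ n, ∃ a ∈ E n, Gen x (ee E a a) := by
  have hx0 : 0 < ‖x‖ := norm_pos_iff.2 hx
  -- approximate
  have hopen : ∀ᶠ d in nhds x, ‖star x * x - star d * d‖ < ‖d‖ ^ 2 := by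
    have c1 : ContinuousAt (fun d : Alg E => ‖star x * x - star d * d‖) x := by fun_prop
    have c2 : ContinuousAt (fun d : Alg E => ‖d‖ ^ 2) x := by fun_prop
    refine c1.eventually_lt c2 ?_
    simp; positivity
  obtain ⟨d, hd, hxd⟩ := (mem_closure_iff_frequently.1 (h.dense x)).and_eventually hopen |>.exists
  obtain ⟨n, hn⟩ := hd
  obtain ⟨v, hv, a, ha, hva, hdv⟩ := FS_vec (h.fam n) hn
  have hvA := h.FS_sub hv
  set w : Alg E := ⟨v, hvA⟩ with hw
  have hw1 : star w * w = ee E a a := Subtype.ext (by rw [h.ee_coe ha ha rfl]; exact hva)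
  set r : ℝ := ‖d‖ ^ 2 with hr
  have hr0 : 0 < r := lt_of_le_of_lt (norm_nonneg _) hxd
  have hdw : (star d * d) * w = (r : ℂ) • w := Subtype.ext hdv
  have hee : ee E a a * ee E a a = ee E a a := h.ee_mul ha ha ha rfl rfl
  have hees : star (ee E a a) = ee E a a := h.ee_star ha ha rfl
  have hwn : ‖w‖ ≤ 1 := by
    have h1 := CStarRing.norm_star_mul_self (x := w)
    rw [hw1] at h1
    have h2 := CStarRing.norm_star_mul_self (x := ee E a a)
    rw [hees, hee] at h2
    have h3 : ‖ee E a a‖ ≤ 1 := by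
      nlinarith [norm_nonneg (ee E a a)]
    nlinarith [norm_nonneg w]
  have hwe : w * ee E a a = w := by
    have : star (w * ee E a a - w) * (w * ee E a a - w) = 0 := by
      have e : star (w * ee E a a - w) * (w * ee E a a - w) =
        ee E a a * (star w * w) * ee E a a - ee E a a * (star w * w) - (star w * w) * ee E a a
          + star w * w := by
        rw [star_sub, star_mul, hees]; noncomm_ring
      rw [e, hw1]; simp only [hee]; abel
    rw [CStarRing.star_mul_self_eq_zero_iff, sub_eq_zero] at this
    exact this
  set z : Alg E := ((r⁻¹ : ℝ) : ℂ) • (star w * (star x * x) * w) with hz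
  have hzn : ‖ee E a a - z‖ < 1 := by
    have e1 : ee E a a - z = ((r⁻¹ : ℝ) : ℂ) • (star w * (star d * d - star x * x) * w) := by
      rw [hz, mul_sub, sub_mul, smul_sub]
      congr 1
      rw [mul_assoc, hdw, mul_smul_comm, hw1, smul_smul]
      have : ((r⁻¹ : ℝ) : ℂ) * r = 1 := by norm_cast; field_simp
      rw [this, one_smul]
    rw [e1, norm_smul, Complex.norm_real, Real.norm_of_nonneg (by positivity)]
    have e2 : ‖star w * (star d * d - star x * x) * w‖ ≤ ‖star x * x - star d * d‖ := by
      calc _ ≤ ‖star w‖ * ‖star d * d - star x * x‖ * ‖w‖ :=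
        (norm_mul_le _ _).trans (mul_le_mul_of_nonneg_right (norm_mul_le _ _) (norm_nonneg _))
        _ ≤ 1 * ‖star d * d - star x * x‖ * 1 := by rw [norm_star]; gcongr
        _ = _ := by rw [norm_sub_rev]; ring
    rw [inv_mul_lt_iff₀ hr0, mul_one]
    exact lt_of_le_of_lt e2 hxd
  let u : (Alg E)ˣ := Units.oneSub (ee E a a - z) hzn
  have hu : (u : Alg E) = 1 - (ee E a a - z) := rfl
  have hze : z * ee E a a = z := by rw [hz, smul_mul_assoc, mul_assoc, hwe]
  have hue : (u : Alg E) * ee E a a = z := by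
    rw [hu, sub_mul, sub_mul, hee, hze]; simp
  have hfin : ee E a a = (((u⁻¹ : (Alg E)ˣ) : Alg E) * ((r⁻¹ : ℝ) : ℂ) • (star w * star x)) * x * w := by
    calc ee E a a = ((u⁻¹ : (Alg E)ˣ) : Alg E) * (u * ee E a a) := by rw [Units.inv_mul_cancel_left]
      _ = _ := by rw [hue, hz]; simp only [mul_smul_comm, smul_mul_assoc, mul_assoc]
  refine ⟨n, a, ha, ?_⟩
  rw [hfin]
  exact Gen.mk _ _ _

theorem strong_simple (hB : Cuntz B) (hS : Chain R S) (h : Tower S 1 E) {x : Alg E} (hx : x ≠ 0) :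
    Gen x 1 := by
  obtain ⟨n, a, ha, hg⟩ := gen_diag h hx
  exact hg.trans (gen_one hB hS h ha)

theorem simple_of_gen {A : Type} [CStarAlgebra A] (h : ∀ x : A, x ≠ 0 → Gen x 1) :
    IsSimpleCStarAlgebra A := by
  intro I _
  by_cases hI : ∃ x ∈ I, x ≠ 0
  · obtain ⟨x, hxI, hx⟩ := hI
    right
    obtain ⟨k, c, d, hcd⟩ := h x hx
    have h1 : (1 : A) ∈ I := by
      rw [← hcd]
      exact sum_mem fun l _ => I.mul_mem_right _ _ (I.mul_mem_left _ _ hxI)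
    rw [eq_top_iff]
    intro y _
    simpa using I.mul_mem_left y 1 h1
  · left
    push Not at hI
    rw [eq_bot_iff]
    intro x hx
    rw [TwoSidedIdeal.mem_bot]
    exact hI x hx

end Simple
end FG


namespace FG
open scoped Classical ComplexOrder
open Filter
set_option linter.unusedVariables false
set_option linter.unusedSectionVars false

section Newton
variable {B : Type} [CStarAlgebra B] [Nontrivial B]

noncomputable def nwt (x : B) : ℕ → B
  | 0 => x
  | n+1 => 3 * nwt x n ^ 2 - 2 * nwt x n ^ 3

theorem nwt_mem (F : Submodule ℂ B) (hF : ∀ a ∈ F, ∀ b ∈ F, a * b ∈ F) {x : B} (hx : x ∈ F) (n : ℕ) :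
    nwt x n ∈ F := by
  induction n with
  | zero => exact hx
  | succ n ih =>
    have e : nwt x (n+1) = (3:ℂ) • (nwt x n * nwt x n) - (2:ℂ) • (nwt x n * (nwt x n * nwt x n)) := by
      have e3 : ∀ b : B, (3:ℂ) • b = 3 * b := fun b => by
        rw [ofNat_smul_eq_nsmul, nsmul_eq_mul]; push_cast; rfl
      have e2 : ∀ b : B, (2:ℂ) • b = 2 * b := fun b => by
        rw [ofNat_smul_eq_nsmul, nsmul_eq_mul]; push_cast; rfl
      rw [e3, e2, nwt]
      noncomm_ring
    rw [e]
    exact sub_mem (F.smul_mem _ (hF _ ih _ ih)) (F.smul_mem _ (hF _ ih _ (hF _ ih _ ih)))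

theorem newton (F : Submodule ℂ B) (hF : ∀ a ∈ F, ∀ b ∈ F, a * b ∈ F) (hc : IsClosed (F : Set B))
    {x : B} (hx : x ∈ F) {δ : ℝ} (hδ : ‖x * x - x‖ ≤ δ) (hδ8 : δ ≤ 1/8) :
    ∃ q ∈ F, q * q = q ∧ ‖x - q‖ ≤ 4 * ‖2 * x - 1‖ * δ := by
  have hδ0 : 0 ≤ δ := (norm_nonneg _).trans hδ
  set K := ‖2 * x - 1‖ with hK
  have hK0 : 0 ≤ K := norm_nonneg _
  have hy : ∀ n, 2 * nwt x (n+1) - 1 = (2 * nwt x n - 1) * (1 - (nwt x n * nwt x n - nwt x n) - (nwt x n * nwt x n - nwt x n)) := by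
    intro n; rw [nwt]; noncomm_ring
  have he : ∀ n, nwt x (n+1) * nwt x (n+1) - nwt x (n+1) =
      (nwt x n * nwt x n - nwt x n) * (nwt x n * nwt x n - nwt x n) * ((4:ℂ) • (nwt x n * nwt x n - nwt x n) - (3:ℂ) • 1) := by
    intro n
    have e4 : ∀ b : B, (4:ℂ) • b = 4 * b := fun b => by
      rw [ofNat_smul_eq_nsmul, nsmul_eq_mul]; push_cast; rfl
    have e3 : ∀ b : B, (3:ℂ) • b = 3 * b := fun b => by
      rw [ofNat_smul_eq_nsmul, nsmul_eq_mul]; push_cast; rfl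
    rw [e4, e3, nwt]; noncomm_ring
  have n1 : ‖(1:B)‖ ≤ 1 := by
    exact CStarRing.norm_one.le
  have main : ∀ n, ‖nwt x n * nwt x n - nwt x n‖ ≤ δ * (1/2)^n ∧
      ‖2 * nwt x n - 1‖ ≤ K * (2 - (1/2)^n) := by
    intro n
    induction n with
    | zero => exact ⟨by simpa [nwt] using hδ, by simp only [nwt, pow_zero]; linarith⟩
    | succ n ih =>
      obtain ⟨h1, h2⟩ := ih
      have hp : (0:ℝ) < (1/2)^n := by positivity
      have hp1 : ((1:ℝ)/2)^n ≤ 1 := pow_le_one₀ (by norm_num) (by norm_num)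
      set e := nwt x n * nwt x n - nwt x n with hee
      set ε := ‖e‖ with hε
      have hε0 : 0 ≤ ε := norm_nonneg _
      have hε8 : ε ≤ 1/8 := by nlinarith
      have hε9 : ε ≤ 1/8 * (1/2)^n := h1.trans (by gcongr)
      constructor
      · rw [he]
        calc _ ≤ ‖e‖ * ‖e‖ * (‖(4:ℂ) • e‖ + ‖(3:ℂ) • (1:B)‖) :=
            (norm_mul_le _ _).trans (mul_le_mul (norm_mul_le _ _) (norm_sub_le _ _) (norm_nonneg _) (by positivity))
          _ ≤ ε * ε * (4 * ε + 3 * 1) := by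
            have e4 : ‖(4:ℂ)‖ = 4 := by norm_num
            have e3 : ‖(3:ℂ)‖ = 3 := by norm_num
            rw [norm_smul, norm_smul, e4, e3]; gcongr
          _ ≤ ε * (1/8) * 4 := by
            have : ε * ε ≤ ε * (1/8) := by gcongr
            have h5 : (4 * ε + 3 * 1) ≤ 4 := by linarith
            gcongr
          _ = ε * (1/2) := by ring
          _ ≤ _ := by rw [pow_succ]; nlinarith
      · rw [hy]
        calc _ ≤ ‖2 * nwt x n - 1‖ * (1 + ε + ε) := by
              refine (norm_mul_le _ _).trans ?_
              gcongr
              refine (norm_sub_le _ _).trans ?_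
              gcongr
              refine (norm_sub_le _ _).trans ?_
              gcongr
          _ ≤ K * (2 - (1/2)^n) * (1 + 1/4 * (1/2)^n) := by
              have : 0 ≤ K * (2 - (1/2)^n) := by apply mul_nonneg hK0; linarith
              have h6 : 1 + ε + ε ≤ 1 + 1/4 * (1/2)^n := by linarith
              gcongr
          _ ≤ _ := by
              rw [pow_succ, mul_assoc]
              gcongr
              nlinarith
  have hstep : ∀ n, dist (nwt x n) (nwt x (n+1)) ≤ (2 * K * δ) * (1/2)^n := by
    intro n
    obtain ⟨h1, h2⟩ := main n
    have hp : (0:ℝ) < (1/2)^n := by positivity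
    have e : nwt x n - nwt x (n+1) = (2 * nwt x n - 1) * (nwt x n * nwt x n - nwt x n) := by
      rw [nwt]; noncomm_ring
    rw [dist_eq_norm, e]
    calc _ ≤ (K * (2 - (1/2)^n)) * (δ * (1/2)^n) :=
        (norm_mul_le _ _).trans (mul_le_mul h2 h1 (norm_nonneg _) ((norm_nonneg _).trans h2))
      _ ≤ K * 2 * (δ * (1/2)^n) := by gcongr; linarith
      _ = _ := by ring
  have hcs := cauchySeq_of_le_geometric (1/2) (2 * K * δ) (by norm_num) hstep
  obtain ⟨q, hq⟩ := cauchySeq_tendsto_of_complete hcs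
  refine ⟨q, hc.mem_of_tendsto hq (Eventually.of_forall fun n => nwt_mem F hF hx n), ?_, ?_⟩
  · have l1 : Tendsto (fun n => nwt x n * nwt x n - nwt x n) atTop (nhds (q * q - q)) :=
      (hq.mul hq).sub hq
    have l2 : Tendsto (fun n => nwt x n * nwt x n - nwt x n) atTop (nhds 0) := by
      apply squeeze_zero_norm (fun n => (main n).1)
      have := (tendsto_pow_atTop_nhds_zero_of_lt_one (r := (1/2:ℝ)) (by norm_num) (by norm_num)).const_mul δ
      simpa using this
    exact sub_eq_zero.1 (tendsto_nhds_unique l1 l2)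
  · have := dist_le_of_le_geometric_of_tendsto₀ (1/2) (2 * K * δ) (by norm_num) hstep hq
    rw [dist_eq_norm] at this
    refine this.trans (le_of_eq ?_)
    norm_num; ring

end Newton

section Idem
variable {B : Type} [CStarAlgebra B] [Nontrivial B]
variable {R : Subring ℝ} {S S' : ℕ → Finset ℝ} {T : ℝ} {E E' : ℕ → Finset (B × ℝ)}

theorem idem_near (h : Tower S T E) {Q : Alg E} (hQ : Q * Q = Q) :
    ∃ n, ∃ q : Alg E, q.1 ∈ FS (E n) ∧ q * q = q ∧ ∃ z : (Alg E)ˣ, Q * z = z * q := by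
  have hev : ∀ᶠ x in nhds Q, ‖x * x - x‖ < 1/8 ∧
      (‖Q - x‖ + 4 * ‖2 * x - 1‖ * ‖x * x - x‖) * (1 + 2 * (‖x‖ + 4 * ‖2 * x - 1‖ * ‖x * x - x‖)) < 1 := by
    have c1 : ContinuousAt (fun x : Alg E => ‖x * x - x‖) Q := by fun_prop
    have c2 : ContinuousAt (fun x : Alg E => (‖Q - x‖ + 4 * ‖2 * x - 1‖ * ‖x * x - x‖) * (1 + 2 * (‖x‖ + 4 * ‖2 * x - 1‖ * ‖x * x - x‖))) Q := by fun_prop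
    refine (c1.eventually_lt_const (by simp [hQ])).and (c2.eventually_lt_const (by simp [hQ]))
  obtain ⟨x, ⟨n, hn⟩, h1, h2⟩ := (mem_closure_iff_frequently.1 (h.dense Q)).and_eventually hev |>.exists
  have hc : IsClosed (FS (E n) : Set B) := Submodule.closed_of_finiteDimensional _
  obtain ⟨q, hq, hqq, hxq⟩ := newton (FS (E n)) (fun a ha b hb => FS_mul (h.fam n) ha hb) hc hn
    (δ := ‖x * x - x‖) le_rfl h1.le
  set q' : Alg E := ⟨q, h.FS_sub hq⟩ with hq'
  have hqq' : q' * q' = q' := Subtype.ext hqq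
  have hxq' : ‖x - q'‖ ≤ 4 * ‖2 * x - 1‖ * ‖x * x - x‖ := hxq
  have n1 : ‖(1:Alg E)‖ ≤ 1 := by
    have : ‖(1:B)‖ = 1 := CStarRing.norm_one
    exact this.le
  set t := Q + q' - (Q * q' + Q * q') with ht
  have e : t = (Q - q') * (1 - (q' + q')) := by
    rw [ht]
    have : (Q - q') * (1 - (q' + q')) = Q - Q * q' - Q * q' - q' + q' * q' + q' * q' := by noncomm_ring
    rw [this, hqq']; abel
  have b1 : ‖Q - q'‖ ≤ ‖Q - x‖ + 4 * ‖2 * x - 1‖ * ‖x * x - x‖ := by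
    calc ‖Q - q'‖ = ‖(Q - x) + (x - q')‖ := by congr 1; abel
      _ ≤ _ := (norm_add_le _ _).trans (by gcongr)
  have b2 : ‖q'‖ ≤ ‖x‖ + 4 * ‖2 * x - 1‖ * ‖x * x - x‖ := by
    calc ‖q'‖ = ‖x - (x - q')‖ := by congr 1; abel
      _ ≤ _ := (norm_sub_le _ _).trans (by gcongr)
  have b3 : ‖1 - (q' + q')‖ ≤ 1 + 2 * ‖q'‖ := by
    refine (norm_sub_le _ _).trans ?_
    have := norm_add_le q' q'
    linarith
  have htn : ‖t‖ < 1 := by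
    rw [e]
    refine lt_of_le_of_lt ((norm_mul_le _ _).trans ?_) h2
    gcongr
    exact b3.trans (by gcongr)
  refine ⟨n, q', hq, hqq', Units.oneSub t htn, ?_⟩
  rw [Units.val_oneSub, ht]
  have e1 : Q * (1 - (Q + q' - (Q * q' + Q * q'))) = Q - Q * Q - Q * q' + (Q * Q) * q' + (Q * Q) * q' := by noncomm_ring
  have e2 : (1 - (Q + q' - (Q * q' + Q * q'))) * q' = q' - Q * q' - q' * q' + Q * (q' * q') + Q * (q' * q') := by noncomm_ring
  rw [e1, e2, hQ, hqq']; abel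

variable {ω : B →ₗ[ℂ] ℂ}

theorem trE_idem (hω1 : ω 1 = 1) {E : Finset (B × ℝ)} (hE : IsFam E) (hR : ∀ x ∈ E, x.2 ∈ R) {q : B}
    (hq : q ∈ FS E) (hqq : q * q = q) : ∃ r ∈ R, trE ω E q = (r : ℂ) := by
  -- block matrices
  have hsc : ∀ x ∈ E, ∀ y ∈ E, star x.1 * q * y.1 = ω (star x.1 * q * y.1) • 1 := by
    intro x hx y hy
    obtain ⟨c, hc⟩ := FS_scalar hE hq hx hy
    rw [hc, map_smul, hω1, smul_eq_mul, mul_one]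
  have hz : ∀ x ∈ E, ∀ y ∈ E, x.2 ≠ y.2 → star x.1 * q * y.1 = 0 := by
    intro x hx y hy hne
    clear hsc hqq
    induction hq using Submodule.span_induction with
    | mem b hb =>
      obtain ⟨z, hz, w, hw, h, rfl⟩ := hb
      have : star x.1 * (z.1 * star w.1) * y.1 = (star x.1 * z.1) * (star w.1 * y.1) := by
        simp only [mul_assoc]
      rw [this, hE.orth _ hx _ hz, hE.orth _ hw _ hy]
      by_cases h1 : x = z
      · by_cases h2 : w = y
        · exact absurd (by rw [h1, h, h2]) hne
        · simp [h2]
      · simp [h1]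
    | zero => simp
    | add a b _ _ ha hb => rw [mul_add, add_mul, ha, hb, add_zero]
    | smul r a _ ha => rw [mul_smul_comm, smul_mul_assoc, ha, smul_zero]
  let M : ∀ s : ℝ, Matrix {x // x ∈ E.filter fun x => x.2 = s} {x // x ∈ E.filter fun x => x.2 = s} ℂ :=
    fun s => Matrix.of fun x y => ω (star x.1.1 * q * y.1.1)
  have hM : ∀ s, IsIdempotentElem (M s) := by
    intro s
    ext ⟨x, hx⟩ ⟨y, hy⟩
    rw [Matrix.mul_apply]
    simp only [M, Matrix.of_apply]
    obtain ⟨hx1, hx2⟩ := Finset.mem_filter.1 hx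
    obtain ⟨hy1, hy2⟩ := Finset.mem_filter.1 hy
    rw [Finset.univ_eq_attach, Finset.sum_attach (E.filter fun x => x.2 = s) (fun j => ω (star x.1 * q * j.1) * ω (star j.1 * q * y.1)),
      Finset.sum_filter]
    have : star x.1 * q * y.1 = ∑ j ∈ E, (star x.1 * q * j.1) * (star j.1 * q * y.1) := by
      calc star x.1 * q * y.1 = star x.1 * q * (∑ j ∈ E, j.1 * star j.1) * q * y.1 := by
            rw [hE.sum, mul_one, mul_assoc (star x.1) q q, hqq]
        _ = _ := by
          simp only [Finset.mul_sum, Finset.sum_mul, mul_assoc]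
    rw [this, map_sum]
    refine Finset.sum_congr rfl fun j hj => ?_
    by_cases hjs : j.2 = s
    · rw [if_pos hjs, hsc x hx1 j hj, smul_mul_assoc, one_mul, map_smul, map_smul, hω1]
      simp
    · rw [if_neg hjs, hz x hx1 j hj (by rw [hx2]; exact fun h => hjs h.symm)]; simp
  have htr : ∀ s, ∃ m : ℕ, (M s).trace = m := by
    intro s
    have h1 : IsIdempotentElem (Matrix.toLin' (M s)) := by
      have := hM s
      unfold IsIdempotentElem at this ⊢
      rw [Module.End.mul_eq_comp, ← Matrix.toLin'_mul, this]
    refine ⟨Module.finrank ℂ (Matrix.toLin' (M s)).range, ?_⟩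
    rw [← Matrix.trace_toLin'_eq]
    exact (LinearMap.IsIdempotentElem.isProj_range _ h1).trace
  choose m hm using htr
  refine ⟨∑ s ∈ E.image Prod.snd, s * m s, sum_mem fun s hs => ?_, ?_⟩
  · obtain ⟨x, hx, rfl⟩ := Finset.mem_image.1 hs
    exact mul_mem (hR x hx) (natCast_mem R _)
  · rw [trE_apply, ← Finset.sum_fiberwise_of_maps_to (g := Prod.snd) (t := E.image Prod.snd) (fun x hx => Finset.mem_image_of_mem _ hx)]
    push_cast
    refine Finset.sum_congr rfl fun s hs => ?_
    rw [← hm s, Matrix.trace, Finset.mul_sum]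
    simp only [M, Matrix.diag, Matrix.of_apply]
    rw [Finset.univ_eq_attach, Finset.sum_attach (E.filter fun x => x.2 = s) (fun j => (s:ℂ) * ω (star j.1 * q * j.1))]
    refine Finset.sum_congr rfl fun j hj => ?_
    rw [(Finset.mem_filter.1 hj).2]

theorem idem_trace (hω1 : ω 1 = 1) (hS : Chain R S) (h : Tower S T E) {τ : Alg E →ₗ[ℂ] ℂ} (hτ : IsTr ω T E τ)
    {Q : Alg E} (hQ : Q * Q = Q) : ∃ r ∈ R, τ Q = (r : ℂ) := by
  obtain ⟨n, q, hqF, hqq, z, hz⟩ := idem_near h hQ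
  obtain ⟨r, hr, h1⟩ := trE_idem hω1 (h.fam n) (fun x hx => hS.memR n _ (h.wid n x hx)) hqF (congrArg Subtype.val hqq)
  refine ⟨r, hr, ?_⟩
  rw [← h1, ← hτ.lev n q hqF]
  calc τ Q = τ ((Q * z) * ((z⁻¹ : (Alg E)ˣ) : Alg E)) := by rw [Units.mul_inv_cancel_right]
    _ = τ (((z⁻¹ : (Alg E)ˣ) : Alg E) * (z * q)) := by rw [hz, hτ.tracial]
    _ = τ q := by rw [Units.inv_mul_cancel_left]

end Idem
end FG


namespace FG
open scoped Classical ComplexOrder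
open Filter
set_option linter.unusedVariables false
set_option linter.unusedSectionVars false

section Dup
variable {B : Type} [CStarAlgebra B] [Nontrivial B]
variable {R : Subring ℝ} {S S' : ℕ → Finset ℝ} {T T' : ℝ} {E E' : ℕ → Finset (B × ℝ)}

theorem FS_map {E E' : Finset (B × ℝ)} (u v : B)
    (hg : ∀ x ∈ E, ∀ y ∈ E, x.2 = y.2 → u * (x.1 * star y.1) * v ∈ FS E') {b : B} (hb : b ∈ FS E) :
    u * b * v ∈ FS E' := by
  induction hb using Submodule.span_induction with
  | mem b hb =>
    obtain ⟨x, hx, y, hy, h, rfl⟩ := hb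
    exact hg x hx y hy h
  | zero => simp
  | add a b _ _ ha hb => rw [mul_add, add_mul]; exact add_mem ha hb
  | smul c a _ ha => rw [mul_smul_comm, smul_mul_assoc]; exact Submodule.smul_mem _ _ ha

theorem Alg_map (h : Tower S T E) (h' : Tower S' T' E') (u v : B)
    (hg : ∀ n, ∀ x ∈ E n, ∀ y ∈ E n, x.2 = y.2 → u * (x.1 * star y.1) * v ∈ FS (E' n)) {b : B}
    (hb : b ∈ Alg E) : u * b * v ∈ Alg E' := by
  rw [h.mem_Alg] at hb
  rw [h'.mem_Alg]
  refine map_mem_closure (f := fun b => u * b * v) (by fun_prop) hb ?_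
  intro b hb
  obtain ⟨n, hn⟩ := Set.mem_iUnion.1 hb
  exact Set.mem_iUnion.2 ⟨n, FS_map u v (hg n) hn⟩

theorem transfer (h : Tower S T E) : ∃ ρ : ℕ → ℝ → Finset (B × ℝ),
    (∀ n, E n = bind (E 0) (ρ n)) ∧ (∀ n, ∀ x ∈ E 0, IsFam (ρ n x.2)) ∧
    ∀ G : Finset (B × ℝ), IsFam G → (∀ g ∈ G, ∃ x ∈ E 0, x.2 = g.2) →
      Tower S (tot G) (fun n => bind G (ρ n)) := by
  choose σ hσ hE using h.ref
  let ρ : ℕ → ℝ → Finset (B × ℝ) := fun n => Nat.rec (fun s => {(1, s)}) (fun n r => fun s => bind (r s) (σ n)) n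
  have hρ0 : ρ 0 = fun s => {(1, s)} := rfl
  have hρs : ∀ n, ρ (n+1) = fun s => bind (ρ n s) (σ n) := fun n => rfl
  have hEn : ∀ n, E n = bind (E 0) (ρ n) := by
    intro n
    induction n with
    | zero => rw [hρ0]; ext z; simp [mem_bind]
    | succ n ih => rw [hρs, ← bind_assoc, ← ih, ← hE]
  have hmem : ∀ n, ∀ x ∈ E 0, ∀ y ∈ ρ n x.2, (x.1 * y.1, y.2) ∈ E n := by
    intro n x hx y hy
    rw [hEn n]
    exact mem_bind.2 ⟨x, hx, y, hy, rfl⟩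
  have hfam : ∀ n, ∀ x ∈ E 0, IsFam (ρ n x.2) ∧ tot (ρ n x.2) = x.2 := by
    intro n
    induction n with
    | zero => intro x hx; rw [hρ0]; exact ⟨isFam_pure _, by simp [tot]⟩
    | succ n ih =>
      intro x hx
      rw [hρs]
      obtain ⟨h1, h2⟩ := ih x hx
      have h3 : ∀ y ∈ ρ n x.2, IsFam (σ n y.2) ∧ tot (σ n y.2) = y.2 := fun y hy =>
        hσ n (x.1 * y.1, y.2) (hmem n x hx y hy)
      exact ⟨isFam_bind h1 fun y hy => (h3 y hy).1, by rw [tot_bind h1 h3, h2]⟩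
  refine ⟨ρ, hEn, fun n x hx => (hfam n x hx).1, fun G hG hw => ?_⟩
  have hGf : ∀ n, ∀ g ∈ G, IsFam (ρ n g.2) ∧ tot (ρ n g.2) = g.2 := by
    intro n g hg
    obtain ⟨x, hx, hxg⟩ := hw g hg
    rw [← hxg]; exact hfam n x hx
  refine ⟨fun n => isFam_bind hG fun g hg => (hGf n g hg).1, fun n z hz => ?_, fun n => ?_,
    fun n => tot_bind hG (hGf n)⟩
  · obtain ⟨g, hg, y, hy, rfl⟩ := mem_bind.1 hz
    obtain ⟨x, hx, hxg⟩ := hw g hg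
    rw [← hxg] at hy
    exact h.wid n (x.1 * y.1, y.2) (hmem n x hx y hy)
  · refine ⟨σ n, fun z hz => ?_, by simp only [hρs]; rw [bind_assoc]⟩
    obtain ⟨g, hg, y, hy, rfl⟩ := mem_bind.1 hz
    obtain ⟨x, hx, hxg⟩ := hw g hg
    rw [← hxg] at hy
    exact hσ n (x.1 * y.1, y.2) (hmem n x hx y hy)

structure IsDup {n : ℕ} (Y : Fin n → B) : Prop where
  orth : ∀ k l, star (Y k) * Y l = if k = l then 1 else 0
  sum : ∑ k, Y k * star (Y k) = 1

theorem exists_dup (hB : Cuntz B) {n : ℕ} (hn : 0 < n) : ∃ Y : Fin n → B, IsDup Y := by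
  obtain ⟨s₁, s₂, h1, h2, h3, h4⟩ := hB
  obtain ⟨D, hD, hm⟩ := exists_fam h1 h2 h3 h4 1 (Multiset.replicate (n-1) 1)
  have hc : Fintype.card D = n := by
    have := congrArg Multiset.card hm
    simp at this
    simp; omega
  let e := (Fintype.equivFinOfCardEq hc).symm
  refine ⟨fun k => (e k).1.1, fun k l => ?_, ?_⟩
  · rw [hD.orth _ (e k).2 _ (e l).2]
    simp [Subtype.ext_iff.symm]
  · rw [← hD.sum, ← Finset.sum_coe_sort D (fun x => x.1 * star x.1)]
    exact Equiv.sum_comp e (fun x => x.1.1 * star x.1.1)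

variable {n : ℕ} {Y : Fin n → B}

noncomputable def dfam (Y : Fin n → B) : Finset (B × ℝ) := Finset.univ.image fun k => (Y k, (1:ℝ))

theorem IsDup.inj (hY : IsDup Y) {k l} (h : Y k = Y l) : k = l := by
  by_contra hne
  have h1 := hY.orth k l
  rw [if_neg hne, ← h, hY.orth, if_pos rfl] at h1
  exact one_ne_zero h1

theorem IsDup.sum_dfam (hY : IsDup Y) {M : Type*} [AddCommMonoid M] (f : B × ℝ → M) :
    ∑ x ∈ dfam Y, f x = ∑ k, f (Y k, 1) := by
  rw [dfam, Finset.sum_image]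
  intro k _ l _ h
  exact hY.inj (Prod.ext_iff.1 h).1

theorem mem_dfam {z : B × ℝ} : z ∈ dfam Y ↔ ∃ k, (Y k, (1:ℝ)) = z := by simp [dfam]

theorem IsDup.fam (hY : IsDup Y) : IsFam (dfam Y) := by
  constructor
  · intro x hx y hy
    obtain ⟨k, rfl⟩ := mem_dfam.1 hx
    obtain ⟨l, rfl⟩ := mem_dfam.1 hy
    simp only
    rw [hY.orth]
    by_cases h : k = l
    · simp [h]
    · rw [if_neg h, if_neg]
      intro h'; exact h (hY.inj (Prod.ext_iff.1 h').1)
  · rw [hY.sum_dfam, ← hY.sum]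

noncomputable def nE (Y : Fin n → B) (E : ℕ → Finset (B × ℝ)) : ℕ → Finset (B × ℝ) :=
  fun i => bind (dfam Y) (fun _ => E i)

theorem mem_nE {i : ℕ} {z : B × ℝ} : z ∈ nE Y E i ↔ ∃ k, ∃ x ∈ E i, (Y k * x.1, x.2) = z := by
  simp only [nE, mem_bind]
  constructor
  · rintro ⟨x, hx, y, hy, rfl⟩
    obtain ⟨k, rfl⟩ := mem_dfam.1 hx
    exact ⟨k, y, hy, rfl⟩
  · rintro ⟨k, x, hx, rfl⟩
    exact ⟨_, mem_dfam.2 ⟨k, rfl⟩, x, hx, rfl⟩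

theorem sum_nE (hY : IsDup Y) (h : Tower S T E) (i : ℕ) {M : Type*} [AddCommMonoid M] (f : B × ℝ → M) :
    ∑ z ∈ nE Y E i, f z = ∑ k, ∑ x ∈ E i, f (Y k * x.1, x.2) := by
  rw [nE, sum_bind hY.fam fun x hx => h.fam i, hY.sum_dfam]

theorem nE_tower (hY : IsDup Y) (h : Tower S T E) : Tower S (n * T) (nE Y E) := by
  obtain ⟨ρ, h1, h2, h3⟩ := transfer h
  have := h3 (bind (dfam Y) (fun _ => E 0)) (isFam_bind hY.fam fun x hx => h.fam 0) (by
    intro g hg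
    obtain ⟨k, x, hx, rfl⟩ := mem_nE.1 hg
    exact ⟨x, hx, rfl⟩)
  have e : (fun i => bind (bind (dfam Y) fun x => E 0) (ρ i)) = nE Y E := by
    funext i
    rw [bind_assoc, nE, h1 i]
  have e2 : tot (bind (dfam Y) fun x => E 0) = n * T := by
    have := sum_nE hY h 0 (fun z => z.2)
    rw [nE] at this
    rw [tot, this]
    have h4 := h.tot 0
    rw [tot] at h4
    simp only
    rw [h4]; simp
  rw [e, e2] at this
  exact this

theorem nE_up (hY : IsDup Y) (h : Tower S T E) (k l : Fin n) {b : B} (hb : b ∈ Alg E) :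
    Y k * b * star (Y l) ∈ Alg (nE Y E) := by
  refine Alg_map h (nE_tower hY h) _ _ (fun i x hx y hy hxy => ?_) hb
  have := gen_mem (mem_nE.2 ⟨k, x, hx, rfl⟩) (mem_nE.2 ⟨l, y, hy, rfl⟩) hxy (E := nE Y E i)
  simpa [mul_assoc] using this

theorem nE_down (hY : IsDup Y) (h : Tower S T E) (k l : Fin n) {b : B} (hb : b ∈ Alg (nE Y E)) :
    star (Y k) * b * Y l ∈ Alg E := by
  refine Alg_map (nE_tower hY h) h _ _ (fun i x hx y hy hxy => ?_) hb
  obtain ⟨k', x, hx', rfl⟩ := mem_nE.1 hx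
  obtain ⟨l', y, hy', rfl⟩ := mem_nE.1 hy
  have : star (Y k) * (Y k' * x.1 * star (Y l' * y.1)) * Y l =
      (star (Y k) * Y k') * (x.1 * star y.1) * (star (Y l') * Y l) := by simp [mul_assoc]
  simp only
  rw [this, hY.orth, hY.orth]
  split_ifs
  · simpa using gen_mem hx' hy' hxy
  all_goals simp

/-- matrix amplification -/
noncomputable def th (Y : Fin n → B) (x : Matrix (Fin n) (Fin n) (Alg E)) : B :=
  ∑ k, ∑ l, Y k * (x k l : B) * star (Y l)

theorem th_mem (hY : IsDup Y) (h : Tower S T E) (x : Matrix (Fin n) (Fin n) (Alg E)) :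
    th Y x ∈ Alg (nE Y E) :=
  sum_mem fun k _ => sum_mem fun l _ => nE_up hY h k l (x k l).2

theorem th_entry (hY : IsDup Y) (x : Matrix (Fin n) (Fin n) (Alg E)) (k l : Fin n) :
    star (Y k) * th Y x * Y l = x k l := by
  have : star (Y k) * th Y x * Y l = ∑ i, ∑ j, (star (Y k) * Y i) * (x i j : B) * (star (Y j) * Y l) := by
    simp only [th, Finset.mul_sum, Finset.sum_mul, mul_assoc]
  rw [this]
  simp [hY.orth]

theorem th_inj (hY : IsDup Y) {x y : Matrix (Fin n) (Fin n) (Alg E)} (h : th Y x = th Y y) : x = y := by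
  ext k l
  rw [← th_entry hY x, ← th_entry hY y, h]

theorem IsDup.ext (hY : IsDup Y) {b c : B} (h : ∀ k l, star (Y k) * b * Y l = star (Y k) * c * Y l) : b = c := by
  have key : ∀ b : B, b = ∑ l, ∑ k, Y k * (star (Y k) * b * Y l) * star (Y l) := by
    intro b
    calc b = (∑ k, Y k * star (Y k)) * b * (∑ l, Y l * star (Y l)) := by
          rw [hY.sum, one_mul, mul_one]
      _ = _ := by simp only [Finset.mul_sum, Finset.sum_mul, mul_assoc]
  rw [key b, key c]
  simp only [h]

theorem th_mul (hY : IsDup Y) (x y : Matrix (Fin n) (Fin n) (Alg E)) : th Y (x * y) = th Y x * th Y y := by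
  refine hY.ext fun k l => ?_
  rw [th_entry hY, Matrix.mul_apply]
  have : star (Y k) * (th Y x * th Y y) * Y l = ∑ j, (star (Y k) * th Y x * Y j) * (star (Y j) * th Y y * Y l) := by
    calc _ = star (Y k) * th Y x * (∑ j, Y j * star (Y j)) * th Y y * Y l := by
          rw [hY.sum, mul_one]; simp only [mul_assoc]
      _ = _ := by simp only [Finset.mul_sum, Finset.sum_mul, mul_assoc]
  rw [this]
  simp only [th_entry hY]
  push_cast
  rfl

theorem th_star (x : Matrix (Fin n) (Fin n) (Alg E)) : th Y (star x) = star (th Y x) := by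
  simp only [th, star_sum, star_mul, star_star, Matrix.star_apply]
  rw [Finset.sum_comm]
  simp [mul_assoc]

noncomputable def unth (hY : IsDup Y) (h : Tower S T E) (b : B) (hb : b ∈ Alg (nE Y E)) :
    Matrix (Fin n) (Fin n) (Alg E) :=
  Matrix.of fun k l => ⟨star (Y k) * b * Y l, nE_down hY h k l hb⟩

theorem th_unth (hY : IsDup Y) (h : Tower S T E) (b : B) (hb : b ∈ Alg (nE Y E)) :
    th Y (unth hY h b hb) = b := by
  have : th Y (unth hY h b hb) = (∑ k, Y k * star (Y k)) * b * (∑ l, Y l * star (Y l)) := by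
    simp only [th, unth, Matrix.of_apply, Finset.mul_sum, Finset.sum_mul, mul_assoc]
    rw [Finset.sum_comm]
  rw [this, hY.sum, one_mul, mul_one]

variable {ω : B →ₗ[ℂ] ℂ}

theorem th_trace (hY : IsDup Y) (h : Tower S T E) {τ : Alg E →ₗ[ℂ] ℂ} (hτ : IsTr ω T E τ)
    {τ' : Alg (nE Y E) →ₗ[ℂ] ℂ} (hτ' : IsTr ω (n * T) (nE Y E) τ') (x : Matrix (Fin n) (Fin n) (Alg E)) :
    τ' ⟨th Y x, th_mem hY h x⟩ = ∑ k, τ (x k k) := by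
  refine tendsto_nhds_unique (hτ'.lim _) ?_
  have := tendsto_finsetSum Finset.univ (fun k _ => hτ.lim (x k k))
  refine this.congr fun j => ?_
  rw [trE_apply, sum_nE hY h]
  refine Finset.sum_congr rfl fun k _ => ?_
  rw [trE_apply]
  refine Finset.sum_congr rfl fun a _ => ?_
  rw [← th_entry hY x k k]
  simp [mul_assoc]

theorem mat_idem (hB : Cuntz B) (hω1 : ω 1 = 1) (hωp : ∀ x, 0 ≤ ω (star x * x)) (hωb : ∀ x, ‖ω x‖ ≤ ‖x‖)
    (hS : Chain R S) (h : Tower S T E) {τ : Alg E →ₗ[ℂ] ℂ} (hτ : IsTr ω T E τ)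
    {Q : Matrix (Fin n) (Fin n) (Alg E)} (hQ : Q * Q = Q) : ∃ r ∈ R, ∑ k, τ (Q k k) = (r : ℂ) := by
  rcases Nat.eq_zero_or_pos n with rfl | hn
  · exact ⟨0, zero_mem R, by simp⟩
  obtain ⟨Y, hY⟩ := exists_dup hB hn
  have h' := nE_tower hY h
  obtain ⟨τ', hτ'⟩ := exists_trace hω1 hωp hωb h' (fun i x hx => hS.pos i _ (h'.wid i x hx))
  rw [← th_trace hY h hτ hτ']
  exact idem_trace hω1 hS h' hτ' (Subtype.ext (by rw [MulMemClass.coe_mul, ← th_mul hY, hQ]))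

end Dup
end FG


namespace FG
open scoped Classical ComplexOrder
open Filter
set_option linter.unusedVariables false
set_option linter.unusedSectionVars false

section Sub
variable {A : Type} [CStarAlgebra A] {τ : A →ₗ[ℂ] ℂ}

noncomputable def mtr (τ : A →ₗ[ℂ] ℂ) {n : ℕ} (x : Matrix (Fin n) (Fin n) A) : ℂ := ∑ i, τ (x i i)

theorem mtr_comm (hτ : IsTracialState A τ) {n : ℕ} (x y : Matrix (Fin n) (Fin n) A) :
    mtr τ (x * y) = mtr τ (y * x) := by
  simp only [mtr, Matrix.mul_apply, map_sum]
  rw [Finset.sum_comm]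
  exact Finset.sum_congr rfl fun i _ => Finset.sum_congr rfl fun j _ => hτ.tracial _ _

theorem fg_subset (hτ : IsTracialState A τ) (hu : ∀ σ : A →ₗ[ℂ] ℂ, IsTracialState A σ → σ = τ)
    (hg : ∀ x : A, x ≠ 0 → Gen x 1) {R : Subring ℝ}
    (hQ : ∀ (n : ℕ) (Q : Matrix (Fin n) (Fin n) A), Q * Q = Q → ∃ r ∈ R, mtr τ Q = (r : ℂ)) {t : ℝ}
    (ht : t ∈ fundamentalGroup A τ) : 0 < t ∧ t ∈ R ∧ t⁻¹ ∈ R := by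
  obtain ⟨n, p, hn, hpp, hps, ⟨φ, hinj, hadd, hmul, hsmul, hstar, hrange⟩, htr⟩ := ht
  have htr' : mtr τ p = t := htr
  have htR : t ∈ R := by
    obtain ⟨r, hr, h⟩ := hQ n p hpp
    rw [htr'] at h
    have : t = r := by exact_mod_cast h
    rwa [this]
  have hφ1 : φ 1 = p := by
    have h1 : p ∈ Set.range φ := by rw [hrange]; simp [hpp]
    have h2 : φ 1 ∈ {x : Matrix (Fin n) (Fin n) A | p * x * p = x} := hrange ▸ ⟨1, rfl⟩
    obtain ⟨a, ha⟩ := h1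
    have h3 : φ 1 * p = p := by rw [← ha, ← hmul, one_mul]
    have h4 : φ 1 * p = φ 1 := by
      have h2' : p * φ 1 * p = φ 1 := h2
      conv_lhs => rw [← h2']
      rw [mul_assoc, hpp, h2']
    rw [← h4, h3]
  have hφ0 : φ 0 = 0 := by
    have := hadd 0 0
    simpa using this
  let ρ : A →ₗ[ℂ] ℂ :=
    { toFun := fun a => mtr τ (φ a)
      map_add' := fun a b => by simp [mtr, hadd, Finset.sum_add_distrib]
      map_smul' := fun c a => by simp [mtr, hsmul, Finset.mul_sum] }
  have hρ : ∀ a, ρ a = mtr τ (φ a) := fun a => rfl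
  have hρn : ∀ a, 0 ≤ ρ (star a * a) := by
    intro a
    rw [hρ, hmul, hstar]
    refine Finset.sum_nonneg fun i _ => ?_
    rw [Matrix.mul_apply, map_sum]
    refine Finset.sum_nonneg fun j _ => ?_
    rw [Matrix.star_apply]
    exact hτ.nonneg _
  have hρ1 : ρ 1 = t := by rw [hρ, hφ1, htr']
  have ht0 : 0 ≤ t := by
    have := hρn 1
    rw [star_one, one_mul, hρ1] at this
    exact_mod_cast this
  have hρt : ∀ a, ρ a = t * τ a := by
    have h1 : ((1 + t : ℝ) : ℂ) ≠ 0 := by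
      have : (1 + t) ≠ 0 := by linarith
      exact_mod_cast this
    have hp : (0:ℂ) ≤ (((1 + t)⁻¹ : ℝ) : ℂ) := by
      have : 0 ≤ (1 + t)⁻¹ := by positivity
      exact_mod_cast this
    have := hu ((((1 + t)⁻¹ : ℝ) : ℂ) • (τ + ρ)) ⟨by
        simp only [LinearMap.smul_apply, LinearMap.add_apply, hτ.map_one, hρ1, smul_eq_mul]
        push_cast
        push_cast at h1
        field_simp, fun a => by
        simp only [LinearMap.smul_apply, LinearMap.add_apply, smul_eq_mul]
        exact mul_nonneg hp (add_nonneg (hτ.nonneg a) (hρn a)), fun a b => by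
        simp only [LinearMap.smul_apply, LinearMap.add_apply, smul_eq_mul]
        rw [hτ.tracial a b, hρ, hρ, hmul, hmul, mtr_comm hτ]⟩
    intro a
    have h2 := LinearMap.congr_fun this a
    simp only [LinearMap.smul_apply, LinearMap.add_apply, smul_eq_mul] at h2
    push_cast at h1 h2
    field_simp at h2
    linear_combination h2
  have h10 : (1 : A) ≠ 0 := by
    intro h
    have := hτ.map_one
    rw [h, map_zero] at this
    exact zero_ne_one this
  have hp0 : ∃ i j, p i j ≠ 0 := by
    by_contra hno
    push Not at hno
    apply h10
    apply hinj
    rw [hφ1, hφ0]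
    ext i j; exact hno i j
  obtain ⟨i, j, hij⟩ := hp0
  obtain ⟨k, c, d, hcd⟩ := hg _ hij
  let Q : Fin k → Fin k → Matrix (Fin n) (Fin n) A := fun l m => p * Matrix.single j i (d l * c m) * p
  have hQr : ∀ l m, ∃ a, φ a = Q l m := by
    intro l m
    have : Q l m ∈ Set.range φ := by
      rw [hrange]
      show p * (p * Matrix.single j i (d l * c m) * p) * p = p * Matrix.single j i (d l * c m) * p
      simp only [mul_assoc, hpp]
      simp only [← mul_assoc, hpp]
    exact this
  choose Q' hQ' using hQr
  have hsum : ∀ {ι : Type} (s : Finset ι) (f : ι → A), φ (∑ i ∈ s, f i) = ∑ i ∈ s, φ (f i) := by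
    intro ι s f
    exact map_sum (⟨⟨φ, hφ0⟩, hadd⟩ : A →+ Matrix (Fin n) (Fin n) A) f s
  obtain ⟨r, hr, hrt⟩ := hQ k (Matrix.of Q') (by
    ext l m
    apply hinj
    rw [Matrix.mul_apply, hsum]
    simp only [Matrix.of_apply, hmul, hQ']
    have : ∀ s, Q l s * Q s m = p * Matrix.single j i (d l * (c s * p i j * d s) * c m) * p := by
      intro s
      have e1 : Q l s * Q s m = p * (Matrix.single j i (d l * c s) * (p * p) * Matrix.single j i (d s * c m)) * p := by
        simp only [Q, mul_assoc]
      rw [e1, hpp, Matrix.single_mul_mul_single]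
      simp only [mul_assoc]
    simp only [this]
    have hss := map_sum (Matrix.singleAddMonoidHom j i)
      (fun s => d l * (c s * p i j * d s) * c m) Finset.univ
    simp only [Matrix.singleAddMonoidHom_apply] at hss
    rw [← Finset.sum_mul, ← Finset.mul_sum, ← hss, ← Finset.sum_mul, ← Finset.mul_sum, hcd,
      mul_one])
  have hfin : (t:ℂ) * r = 1 := by
    rw [← hrt, mtr, Finset.mul_sum]
    simp only [Matrix.of_apply, ← hρt, hρ, hQ']
    have : ∀ l, mtr τ (Q l l) = τ (c l * p i j * d l) := by
      intro l
      have e1 : mtr τ (Q l l) = mtr τ (Matrix.single j i (d l * c l) * p) := by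
        show mtr τ (p * _ * p) = _
        rw [mtr_comm hτ, ← mul_assoc, hpp, mtr_comm hτ]
      rw [e1, mtr, Finset.sum_eq_single j]
      · rw [Matrix.single_mul_apply_same, mul_assoc, hτ.tracial]
      · intro b _ hb
        rw [Matrix.single_mul_apply_of_ne _ _ _ _ _ hb, map_zero]
      · simp
    simp only [this]
    rw [← map_sum, hcd, hτ.map_one]
  have hfin' : t * r = 1 := by exact_mod_cast hfin
  have ht' : t ≠ 0 := by rintro rfl; simp at hfin'
  refine ⟨lt_of_le_of_ne ht0 ht'.symm, htR, ?_⟩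
  rwa [← eq_inv_of_mul_eq_one_right hfin']

end Sub
end FG


namespace FG
open scoped Classical ComplexOrder
open Filter
set_option linter.unusedVariables false
set_option linter.unusedSectionVars false

section Scale
variable {B : Type} [CStarAlgebra B] [Nontrivial B]
variable {R : Subring ℝ} {S S' : ℕ → Finset ℝ} {T T' : ℝ} {E E' : ℕ → Finset (B × ℝ)}

noncomputable def sc (c : ℝ) (E : Finset (B × ℝ)) : Finset (B × ℝ) := E.image fun x => (x.1, x.2 * c)

theorem mem_sc {c : ℝ} {E : Finset (B × ℝ)} {z : B × ℝ} : z ∈ sc c E ↔ ∃ x ∈ E, (x.1, x.2 * c) = z := by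
  simp [sc]

theorem sum_sc {c : ℝ} (hc : c ≠ 0) (E : Finset (B × ℝ)) {M : Type*} [AddCommMonoid M] (f : B × ℝ → M) :
    ∑ z ∈ sc c E, f z = ∑ x ∈ E, f (x.1, x.2 * c) := by
  rw [sc, Finset.sum_image]
  intro x _ y _ h
  obtain ⟨h1, h2⟩ := Prod.ext_iff.1 h
  exact Prod.ext h1 (mul_right_cancel₀ hc h2)

theorem sc_fam {c : ℝ} (hc : c ≠ 0) {E : Finset (B × ℝ)} (hE : IsFam E) : IsFam (sc c E) := by
  constructor
  · intro x hx y hy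
    obtain ⟨x, hx', rfl⟩ := mem_sc.1 hx
    obtain ⟨y, hy', rfl⟩ := mem_sc.1 hy
    simp only
    rw [hE.orth x hx' y hy']
    by_cases h : x = y
    · simp [h]
    · rw [if_neg h, if_neg]
      intro h'; exact h (hE.inj hx' hy' (Prod.ext_iff.1 h').1)
  · rw [sum_sc hc]; exact hE.sum

theorem sc_tot {c : ℝ} (hc : c ≠ 0) (E : Finset (B × ℝ)) : tot (sc c E) = tot E * c := by
  rw [tot, sum_sc hc, tot, Finset.sum_mul]

theorem sc_FS {c : ℝ} (hc : c ≠ 0) (E : Finset (B × ℝ)) : FS (sc c E) = FS E := by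
  unfold FS
  congr 1
  ext b
  constructor
  · rintro ⟨x, hx, y, hy, h, rfl⟩
    obtain ⟨x, hx', rfl⟩ := mem_sc.1 hx
    obtain ⟨y, hy', rfl⟩ := mem_sc.1 hy
    exact ⟨x, hx', y, hy', mul_right_cancel₀ hc h, rfl⟩
  · rintro ⟨x, hx, y, hy, h, rfl⟩
    exact ⟨_, mem_sc.2 ⟨x, hx, rfl⟩, _, mem_sc.2 ⟨y, hy, rfl⟩, by simp only [h], rfl⟩

theorem sc_tower {c : ℝ} (hc : c ≠ 0) (h : Tower S T E) :
    Tower (fun n => (S n).image (· * c)) (T * c) (fun n => sc c (E n)) where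
  fam n := sc_fam hc (h.fam n)
  wid n z hz := by
    obtain ⟨x, hx, rfl⟩ := mem_sc.1 hz
    exact Finset.mem_image.2 ⟨x.2, h.wid n x hx, rfl⟩
  ref n := by
    obtain ⟨ρ, hρ, hE⟩ := h.ref n
    refine ⟨fun s => sc c (ρ (s * c⁻¹)), fun z hz => ?_, ?_⟩
    · obtain ⟨x, hx, rfl⟩ := mem_sc.1 hz
      simp only [mul_inv_cancel_right₀ hc]
      exact ⟨sc_fam hc (hρ x hx).1, by rw [sc_tot hc, (hρ x hx).2]⟩
    · rw [hE]
      ext z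
      simp only [mem_sc, mem_bind]
      constructor
      · rintro ⟨_, ⟨x, hx, y, hy, rfl⟩, rfl⟩
        exact ⟨_, ⟨x, hx, rfl⟩, _, ⟨y, by simpa only [mul_inv_cancel_right₀ hc] using hy, rfl⟩, rfl⟩
      · rintro ⟨_, ⟨x, hx, rfl⟩, _, ⟨y, hy, rfl⟩, rfl⟩
        simp only [mul_inv_cancel_right₀ hc] at hy
        exact ⟨_, ⟨x, hx, y, hy, rfl⟩, rfl⟩
  tot n := by rw [sc_tot hc, h.tot]

theorem sc_Alg {c : ℝ} (hc : c ≠ 0) (h : Tower S T E) : Alg (fun n => sc c (E n)) = Alg E := by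
  ext b
  rw [(sc_tower hc h).mem_Alg, h.mem_Alg]
  simp only [sc_FS hc]

theorem width_inj {G C : Finset (B × ℝ)} (h : ∀ s, cnt G s ≤ cnt C s) :
    ∃ j : B × ℝ → B × ℝ, (∀ g ∈ G, j g ∈ C ∧ (j g).2 = g.2) ∧ ∀ g ∈ G, ∀ g' ∈ G, j g = j g' → g = g' := by
  have : ∀ s, Nonempty ({x // x ∈ G.filter fun x => x.2 = s} ↪ {x // x ∈ C.filter fun x => x.2 = s}) := by
    intro s
    apply Function.Embedding.nonempty_of_card_le
    rw [Fintype.card_coe, Fintype.card_coe]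
    exact h s
  let e := fun s => (this s).some
  have hm : ∀ g ∈ G, g ∈ G.filter fun x => x.2 = g.2 := fun g hg => Finset.mem_filter.2 ⟨hg, rfl⟩
  let j : B × ℝ → B × ℝ := fun g => if hg : g ∈ G then (e g.2 ⟨g, hm g hg⟩).1 else g
  have hj : ∀ g (hg : g ∈ G), j g = (e g.2 ⟨g, hm g hg⟩).1 := fun g hg => dif_pos hg
  have hj2 : ∀ g (hg : g ∈ G), j g ∈ C ∧ (j g).2 = g.2 := by
    intro g hg
    rw [hj g hg]
    exact Finset.mem_filter.1 (e g.2 ⟨g, hm g hg⟩).2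
  have hj3 : ∀ s g (hg : g ∈ G) (hs : g.2 = s), j g = (e s ⟨g, Finset.mem_filter.2 ⟨hg, hs⟩⟩).1 := by
    rintro s g hg rfl
    exact hj g hg
  refine ⟨j, hj2, fun g hg g' hg' h => ?_⟩
  have hs : g'.2 = g.2 := by rw [← (hj2 g hg).2, ← (hj2 g' hg').2, h]
  rw [hj3 g.2 g hg rfl, hj3 g.2 g' hg' hs] at h
  exact congrArg Subtype.val ((e g.2).injective (Subtype.ext h))

theorem fg_supset {ω : B →ₗ[ℂ] ℂ} (hB : Cuntz B) (hω1 : ω 1 = 1) (hωp : ∀ x, 0 ≤ ω (star x * x))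
    (hωb : ∀ x, ‖ω x‖ ≤ ‖x‖) (hS : Chain R S) (h : Tower S 1 E) {τ : Alg E →ₗ[ℂ] ℂ} (hτ : IsTr ω 1 E τ)
    {t : ℝ} (ht : 0 < t) (htR : t ∈ R) (htR' : t⁻¹ ∈ R) : t ∈ fundamentalGroup (Alg E) τ := by
  obtain ⟨n, hnt⟩ := exists_nat_gt t
  have hn : 0 < n := by
    have : (0:ℝ) < n := ht.trans hnt
    exact_mod_cast this
  have hnt' : 0 < (n:ℝ) - t := by linarith
  obtain ⟨N, -, hN⟩ := hS.ev_finset {t, (n:ℝ) - t} (by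
    intro x hx
    rw [Finset.mem_insert, Finset.mem_singleton] at hx
    rcases hx with rfl | rfl
    · exact ⟨htR, ht⟩
    · exact ⟨sub_mem (natCast_mem R n) htR, hnt'⟩) 0
  obtain ⟨Y, hY⟩ := exists_dup hB hn
  obtain ⟨G, hG, hGw, hGt⟩ := exists_fam' hB ht (hN t (by simp))
  obtain ⟨H, hH, hHw, hHt⟩ := exists_fam' hB hnt' (hN _ (by simp))
  have hn' := nE_tower hY h
  set C := nE Y E N with hC
  have hCw := hn'.wid N
  have hcnt : ∀ s, cnt G s ≤ cnt C s := by
    intro s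
    by_cases hs : s ∈ S N
    · have e3 := hS.li N (fun s => cnt G s + cnt H s - cnt C s) (by
        push_cast
        have a1 := tot_eq_sum_cnt hGw
        have a2 := tot_eq_sum_cnt hHw
        have a3 := tot_eq_sum_cnt hCw
        rw [hn'.tot N] at a3
        rw [hGt] at a1
        rw [hHt] at a2
        have : ∑ s ∈ S N, ((cnt G s : ℝ) + cnt H s - cnt C s) * s =
            ∑ s ∈ S N, (cnt G s : ℝ) * s + ∑ s ∈ S N, (cnt H s : ℝ) * s
              - ∑ s ∈ S N, (cnt C s : ℝ) * s := by
          rw [← Finset.sum_add_distrib, ← Finset.sum_sub_distrib]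
          exact Finset.sum_congr rfl fun s _ => by ring
        rw [this, ← a1, ← a2, ← a3]; ring)
      have := e3 s hs
      push_cast at this
      omega
    · have : cnt G s = 0 := by
        rw [cnt, Finset.card_eq_zero, Finset.filter_eq_empty_iff]
        intro y hy hys; exact hs (hys ▸ hGw y hy)
      omega
  obtain ⟨j, hj, hjinj⟩ := width_inj hcnt
  have hf : StrictMono (fun i : ℕ => i + N) := fun a b hab => Nat.add_lt_add_right hab N
  set f : ℕ → ℕ := fun i => i + N with hfdef
  have hE0 := h.sub hf
  obtain ⟨ρ, hρ1, hρ2, hρ3⟩ := transfer hE0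
  have hw : ∀ g ∈ G, ∃ x ∈ (E ∘ f) 0, x.2 = g.2 := by
    intro g hg
    obtain ⟨h1, h2⟩ := hj g hg
    obtain ⟨k, x, hx, hxe⟩ := mem_nE.1 h1
    refine ⟨x, by simpa [hfdef] using hx, ?_⟩
    rw [← h2, ← hxe]
  have hE' := hρ3 G hG hw
  rw [hGt] at hE'
  set E' : ℕ → Finset (B × ℝ) := fun i => bind G (ρ i) with hE'def
  have hn2 : Tower (S ∘ f) (n * 1) (nE Y E ∘ f) := hn'.sub hf
  have hAn : Alg (nE Y E ∘ f) = Alg (nE Y E) := hn'.alg_sub hf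
  have hCb : ∀ i, (nE Y E ∘ f) i = bind C (ρ i) := by
    intro i
    have h1 := hρ1 i
    simp only [Function.comp_apply] at h1 ⊢
    rw [nE, h1, hC, nE, bind_assoc]
    simp [hfdef]
  -- the partial isometry
  set W : B := ∑ g ∈ G, (j g).1 * star g.1 with hW
  have hCf := hn'.fam N
  have hWg : ∀ g ∈ G, W * g.1 = (j g).1 := by
    intro g hg
    rw [hW, Finset.sum_mul, Finset.sum_eq_single g]
    · rw [mul_assoc, hG.self hg, mul_one]
    · intro b hb hbg
      rw [mul_assoc, hG.ne hb hg hbg, mul_zero]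
    · intro h; exact absurd hg h
  have hWs : star W = ∑ g ∈ G, g.1 * star (j g).1 := by
    rw [hW, star_sum]; simp
  have hWj : ∀ g ∈ G, star W * (j g).1 = g.1 := by
    intro g hg
    rw [hWs, Finset.sum_mul, Finset.sum_eq_single g]
    · rw [mul_assoc, hCf.self (hj g hg).1, mul_one]
    · intro b hb hbg
      rw [mul_assoc, hCf.ne (hj b hb).1 (hj g hg).1 (fun h => hbg (hjinj b hb g hg h)), mul_zero]
    · intro h; exact absurd hg h
  have hWc : ∀ c ∈ C, (∃ g ∈ G, g.2 = c.2 ∧ star W * c.1 = g.1) ∨ star W * c.1 = 0 := by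
    intro c hc
    by_cases hcg : ∃ g ∈ G, j g = c
    · obtain ⟨g, hg, rfl⟩ := hcg
      exact Or.inl ⟨g, hg, (hj g hg).2.symm, hWj g hg⟩
    · right
      rw [hWs, Finset.sum_mul]
      refine Finset.sum_eq_zero fun g hg => ?_
      rw [mul_assoc, hCf.ne (hj g hg).1 hc (fun h => hcg ⟨g, hg, h⟩), mul_zero]
  have hWW : star W * W = 1 := by
    conv_lhs => rw [hW]
    rw [Finset.mul_sum, ← hG.sum]
    refine Finset.sum_congr rfl fun g hg => ?_
    rw [← mul_assoc, hWj g hg]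
  have hWW' : W * star W = ∑ g ∈ G, (j g).1 * star (j g).1 := by
    conv_lhs => rw [hWs]
    rw [Finset.mul_sum]
    refine Finset.sum_congr rfl fun g hg => ?_
    rw [← mul_assoc, hWg g hg]
  have hup : ∀ b ∈ Alg E', W * b * star W ∈ Alg (nE Y E) := by
    intro b hb
    rw [← hAn]
    refine Alg_map hE' hn2 _ _ (fun i x hx y hy hxy => ?_) hb
    obtain ⟨g, hg, u, hu, rfl⟩ := mem_bind.1 hx
    obtain ⟨g', hg', v, hv, rfl⟩ := mem_bind.1 hy
    rw [hCb i]
    have e : W * (g.1 * u.1 * star (g'.1 * v.1)) * star W = ((j g).1 * u.1) * star ((j g').1 * v.1) := by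
      rw [← hWg g hg, ← hWg g' hg']; simp [mul_assoc]
    simp only
    rw [e]
    have m1 : ((j g).1 * u.1, u.2) ∈ bind C (ρ i) :=
      mem_bind.2 ⟨j g, (hj g hg).1, u, by rw [(hj g hg).2]; exact hu, rfl⟩
    have m2 : ((j g').1 * v.1, v.2) ∈ bind C (ρ i) :=
      mem_bind.2 ⟨j g', (hj g' hg').1, v, by rw [(hj g' hg').2]; exact hv, rfl⟩
    exact gen_mem m1 m2 hxy
  have hdown : ∀ b ∈ Alg (nE Y E), star W * b * W ∈ Alg E' := by
    intro b hb
    rw [← hAn] at hb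
    refine Alg_map hn2 hE' _ _ (fun i x hx y hy hxy => ?_) hb
    rw [hCb i] at hx hy
    obtain ⟨c, hc, u, hu, rfl⟩ := mem_bind.1 hx
    obtain ⟨c', hc', v, hv, rfl⟩ := mem_bind.1 hy
    have e : star W * (c.1 * u.1 * star (c'.1 * v.1)) * W = ((star W * c.1) * u.1) * star ((star W * c'.1) * v.1) := by
      simp [mul_assoc]
    simp only
    rw [e]
    rcases hWc c hc with ⟨g, hg, hg2, hg1⟩ | h0
    · rcases hWc c' hc' with ⟨g', hg', hg2', hg1'⟩ | h0'
      · rw [hg1, hg1']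
        have m1 : (g.1 * u.1, u.2) ∈ E' i := mem_bind.2 ⟨g, hg, u, by rw [hg2]; exact hu, rfl⟩
        have m2 : (g'.1 * v.1, v.2) ∈ E' i := mem_bind.2 ⟨g', hg', v, by rw [hg2']; exact hv, rfl⟩
        exact gen_mem m1 m2 hxy
      · rw [h0']; simp
    · rw [h0]; simp
  have hiso : Nonempty (Alg E ≃⋆ₐ[ℂ] Alg E') := by
    have ti := inv_ne_zero ht.ne'
    have h1 := sc_tower ti hE'
    rw [mul_inv_cancel₀ ht.ne'] at h1
    have h2 := (hS.sub hf).scale (inv_pos.2 ht) htR' (by rwa [inv_inv])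
    have h3 := tower_iso' hB hS h2 (one_mem R) one_pos h h1
    rwa [sc_Alg ti hE'] at h3
  obtain ⟨Ψ⟩ := hiso
  have hP : W * star W ∈ Alg (nE Y E) := by
    have := hup 1 (one_mem _)
    rwa [mul_one] at this
  set p := unth hY h (W * star W) hP with hp
  have hthp : th Y p = W * star W := th_unth hY h _ hP
  let φ : Alg E → Matrix (Fin n) (Fin n) (Alg E) := fun a =>
    unth hY h (W * (Ψ a : B) * star W) (hup _ (Ψ a).2)
  have hφ : ∀ a, th Y (φ a) = W * (Ψ a : B) * star W := fun a => th_unth hY h _ _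
  refine ⟨n, p, hn, ?_, ?_, ⟨φ, ?_, ?_, ?_, ?_, ?_, ?_⟩, ?_⟩
  · apply th_inj hY
    rw [th_mul hY, hthp, mul_assoc, ← mul_assoc (star W), hWW, one_mul]
  · apply th_inj hY
    rw [th_star, hthp]; simp
  · intro a b hab
    have h1 : W * (Ψ a : B) * star W = W * (Ψ b : B) * star W := by rw [← hφ, ← hφ, hab]
    have h2 : ∀ x : B, star W * (W * x * star W) * W = x := by
      intro x
      have : star W * (W * x * star W) * W = (star W * W) * x * (star W * W) := by simp only [mul_assoc]
      rw [this, hWW, one_mul, mul_one]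
    apply Ψ.injective
    apply Subtype.ext
    show ((Ψ a : Alg E') : B) = (Ψ b : Alg E')
    rw [← h2 (Ψ a), ← h2 (Ψ b), h1]
  · intro a b
    ext k l
    simp [φ, unth, mul_add, add_mul]
  · intro a b
    apply th_inj hY
    rw [th_mul hY, hφ, hφ, hφ, map_mul]
    have : W * (Ψ a : B) * star W * (W * (Ψ b : B) * star W) = W * (Ψ a : B) * (star W * W) * (Ψ b : B) * star W := by
      simp only [mul_assoc]
    rw [this, hWW]; simp [mul_assoc]
  · intro c a
    ext k l
    simp [φ, unth]
  · intro a
    apply th_inj hY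
    rw [th_star, hφ, hφ, map_star]; simp [mul_assoc]
  · ext x
    constructor
    · rintro ⟨a, rfl⟩
      apply th_inj hY
      rw [th_mul hY, th_mul hY, hφ, hthp]
      have : W * star W * (W * (Ψ a : B) * star W) * (W * star W) = W * (star W * W) * (Ψ a : B) * (star W * W) * star W := by
        simp only [mul_assoc]
      rw [this, hWW, mul_one, mul_one]
    · intro hx
      have hx' : p * x * p = x := hx
      refine ⟨Ψ.symm ⟨star W * th Y x * W, hdown _ (th_mem hY h x)⟩, ?_⟩
      apply th_inj hY
      rw [hφ, StarAlgEquiv.apply_symm_apply]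
      conv_rhs => rw [← hx']
      rw [th_mul hY, th_mul hY, hthp]
      simp only [mul_assoc]
  · obtain ⟨τ', hτ'⟩ := exists_trace hω1 hωp hωb hn' (fun i x hx => hS.pos i _ (hn'.wid i x hx))
    rw [← th_trace hY h hτ hτ' p]
    have hmem : th Y p ∈ FS (nE Y E N) := by
      rw [hthp, hWW']
      exact sum_mem fun g hg => gen_mem (hj g hg).1 (hj g hg).1 rfl
    rw [hτ'.lev N _ hmem]
    simp only
    rw [hthp, hWW', map_sum, ← hGt, tot]
    push_cast
    refine Finset.sum_congr rfl fun g hg => ?_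
    rw [trE_gen hω1 hCf (hj g hg).1 (hj g hg).1, if_pos rfl, (hj g hg).2]

end Scale
end FG


namespace FG
open scoped Classical ComplexOrder
open Filter
set_option linter.unusedVariables false
set_option linter.unusedSectionVars false

section Build

theorem assemble {B : Type} [CStarAlgebra B] [Nontrivial B] (hB : Cuntz B) {ω : B →ₗ[ℂ] ℂ} (hω1 : ω 1 = 1)
    (hωp : ∀ x, 0 ≤ ω (star x * x)) (hωb : ∀ x, ‖ω x‖ ≤ ‖x‖) (R : Subring ℝ) (hR : Countable R) :
    ∃ (A : Type) (inst : CStarAlgebra A) (instSep : TopologicalSpace.SeparableSpace A)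
      (τ : A →ₗ[ℂ] ℂ),
      IsSimpleCStarAlgebra A ∧ IsTracialState A τ ∧
      (∀ σ : A →ₗ[ℂ] ℂ, IsTracialState A σ → σ = τ) ∧
      fundamentalGroup A τ = {t : ℝ | 0 < t ∧ t ∈ R ∧ t⁻¹ ∈ R} := by
  obtain ⟨S₀, hS₀⟩ := exists_chain R
  obtain ⟨N, hN⟩ := exists_tower hB hS₀ (one_mem R) one_pos
  obtain ⟨E, h⟩ := hN N le_rfl
  have hS : Chain R (S₀ ∘ fun n => n + N) := hS₀.sub (fun a b hab => Nat.add_lt_add_right hab N)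
  obtain ⟨τ, hτ⟩ := exists_trace hω1 hωp hωb h (fun i x hx => hS.pos i _ (h.wid i x hx))
  have hst : IsTracialState (Alg E) τ := ⟨by rw [hτ.one]; simp, hτ.nonneg, hτ.tracial⟩
  have hu : ∀ σ : Alg E →ₗ[ℂ] ℂ, IsTracialState (Alg E) σ → σ = τ := fun σ hσ => st_unique hB hS h hσ hst
  have hg : ∀ x : Alg E, x ≠ 0 → Gen x 1 := fun x hx => strong_simple hB hS h hx
  refine ⟨Alg E, inferInstance, h.separable, τ, simple_of_gen hg, hst, hu, ?_⟩
  ext t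
  constructor
  · intro ht
    exact fg_subset hst hu hg (fun n Q hQ => mat_idem hB hω1 hωp hωb hS h hτ hQ) ht
  · rintro ⟨h1, h2, h3⟩
    exact fg_supset hB hω1 hωp hωb hS h hτ h1 h2 h3

noncomputable abbrev HH : Type := lp (fun _ : ℕ => ℂ) 2

noncomputable def hb : HilbertBasis ℕ ℂ HH := HilbertBasis.ofRepr (LinearIsometryEquiv.refl ℂ _)

theorem op_ext {S T : HH →L[ℂ] HH} (h : ∀ n, S (hb n) = T (hb n)) : S = T := by
  refine ContinuousLinearMap.ext_on (s := Set.range hb) ?_ ?_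
  · exact (Submodule.dense_iff_topologicalClosure_eq_top).2 hb.dense_span
  · rintro _ ⟨n, rfl⟩
    exact h n

theorem exists_isom (f : ℕ → ℕ) (hf : Function.Injective f) :
    ∃ s : HH →L[ℂ] HH, (∀ k, s (hb k) = hb (f k)) ∧ star s * s = 1 := by
  have ho : Orthonormal ℂ (fun k => hb (f k)) := hb.orthonormal.comp f hf
  have hk : ∀ k, ho.orthogonalFamily.linearIsometry (hb k) = hb (f k) := by
    intro k
    have : hb k = lp.single 2 k (1 : ℂ) := by
      rw [← hb.repr_symm_single]
      rfl
    rw [this, OrthogonalFamily.linearIsometry_apply_single]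
    simp
  refine ⟨ho.orthogonalFamily.linearIsometry.toContinuousLinearMap, hk, ?_⟩
  rw [ContinuousLinearMap.star_eq_adjoint]
  exact (ContinuousLinearMap.norm_map_iff_adjoint_comp_self _).1 (fun x => LinearIsometry.norm_map _ x)

theorem star_app {s t : HH →L[ℂ] HH} {f g : ℕ → ℕ} (hs : ∀ k, s (hb k) = hb (f k)) (n : ℕ)
    (h : ∀ k, f k ≠ n) : (star s) (hb n) = 0 := by
  rw [ContinuousLinearMap.star_eq_adjoint]
  have : ∀ k, inner ℂ (hb k) ((ContinuousLinearMap.adjoint s) (hb n)) = 0 := by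
    intro k
    rw [ContinuousLinearMap.adjoint_inner_right, hs]
    exact hb.orthonormal.2 (h k)
  apply hb.repr.injective
  ext k
  rw [hb.repr_apply_apply, this]
  simp

theorem cuntz_HH : Cuntz (HH →L[ℂ] HH) := by
  obtain ⟨s, hs, hs1⟩ := exists_isom (fun k => 2 * k) (fun a b h => by simpa using h)
  obtain ⟨t, ht, ht1⟩ := exists_isom (fun k => 2 * k + 1) (fun a b h => by simpa using h)
  refine ⟨s, t, hs1, ht1, ?_, ?_⟩
  · apply op_ext
    intro n
    rw [ContinuousLinearMap.mul_apply, ht]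
    exact star_app (t := t) (g := fun k => k) hs _ (fun k => by lia)
  · apply op_ext
    intro n
    rw [ContinuousLinearMap.add_apply, ContinuousLinearMap.mul_apply, ContinuousLinearMap.mul_apply]
    rcases Nat.even_or_odd' n with ⟨k, rfl | rfl⟩
    · rw [star_app (t := t) (g := fun k => k) ht (2 * k) (fun k => by lia)]
      have : star s (hb (2 * k)) = hb k := by
        rw [← hs, ← ContinuousLinearMap.mul_apply, hs1]; rfl
      rw [this, hs]; simp
    · rw [star_app (t := t) (g := fun k => k) hs (2 * k + 1) (fun k => by lia)]
      have : star t (hb (2 * k + 1)) = hb k := by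
        rw [← ht, ← ContinuousLinearMap.mul_apply, ht1]; rfl
      rw [this, ht]; simp

noncomputable def vst : (HH →L[ℂ] HH) →ₗ[ℂ] ℂ where
  toFun x := inner ℂ (hb 0) (x (hb 0))
  map_add' x y := by simp [inner_add_right]
  map_smul' c x := by simp [inner_smul_right]

theorem final (R : Subring ℝ) (hR : Countable R) :
    ∃ (A : Type) (inst : CStarAlgebra A) (instSep : TopologicalSpace.SeparableSpace A)
      (τ : A →ₗ[ℂ] ℂ),
      IsSimpleCStarAlgebra A ∧ IsTracialState A τ ∧
      (∀ σ : A →ₗ[ℂ] ℂ, IsTracialState A σ → σ = τ) ∧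
      fundamentalGroup A τ = {t : ℝ | 0 < t ∧ t ∈ R ∧ t⁻¹ ∈ R} := by
  have hn : ‖hb 0‖ = 1 := hb.orthonormal.1 0
  have : Nontrivial HH := ⟨hb 0, 0, fun h => by rw [h] at hn; simp at hn⟩
  refine assemble (B := HH →L[ℂ] HH) cuntz_HH (ω := vst) ?_ ?_ ?_ R hR
  · change inner ℂ (hb 0) (hb 0) = (1 : ℂ)
    rw [inner_self_eq_norm_sq_to_K, hn]; simp
  · intro x
    change 0 ≤ inner ℂ (hb 0) ((star x * x) (hb 0))
    rw [ContinuousLinearMap.mul_apply, ContinuousLinearMap.star_eq_adjoint,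
      ContinuousLinearMap.adjoint_inner_right, inner_self_eq_norm_sq_to_K]
    have h0 : (0:ℂ) ≤ ((‖x (hb 0)‖ ^ 2 : ℝ) : ℂ) := by rw [Complex.zero_le_real]; positivity
    simpa using h0
  · intro x
    change ‖inner ℂ (hb 0) (x (hb 0))‖ ≤ ‖x‖
    refine (norm_inner_le_norm _ _).trans ?_
    have := x.le_opNorm (hb 0)
    rw [hn] at this ⊢
    linarith

end Build
end FG

/-- every countable unital subring `R` of `ℝ` arises as the fundamental
group of a separable unital simple C*-algebra with unique tracial state, in the sense
that `F(A)` equals the positive invertible elements of `R`. -/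
theorem exists_algebra_fundamentalGroup_eq_posUnits
    (R : Subring ℝ) (hR : Countable R) :
    ∃ (A : Type) (inst : CStarAlgebra A) (instSep : TopologicalSpace.SeparableSpace A)
      (τ : A →ₗ[ℂ] ℂ),
      IsSimpleCStarAlgebra A ∧ IsTracialState A τ ∧
      (∀ σ : A →ₗ[ℂ] ℂ, IsTracialState A σ → σ = τ) ∧
      fundamentalGroup A τ = {t : ℝ | 0 < t ∧ t ∈ R ∧ t⁻¹ ∈ R} := by
  exact FG.final R hR
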